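/- arXiv:1805.02072 — 6 statements merged into one kernel-verified Lean document; each statement's English description precedes it below -/
import Mathlib

section
/- Let T be a non-degenerate triangle with angles α, β, γ that satisfy no non-trivial linear equation. Then there exists ε > 0 such that for every finite set P ⊆ ℝ²: (a) there do not exist four distinct points x₁, x₂, x₃, x₄ ∈ P such that each of the triples (x₁, x₂, x₄), (x₁, x₃, x₄), (x₂, x₃, x₄) forms a triangle ε-similar to T; and (b) there do not exist five distinct points x₁, …, x₅ ∈ P such that for every i (indices modulo 5) the triple (x_i, x_{i+1}, x_{i+2}) forms a triangle ε-similar to T. -/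
open EuclideanGeometry

noncomputable section

abbrev Plane := EuclideanSpace ℝ (Fin 2)

/-- A triple of points is a (non-degenerate) triangle if its points are not collinear. -/
def IsTriangle (p : Fin 3 → Plane) : Prop := ¬ Collinear ℝ (Set.range p)

/-- The angle of the triple `p` at its `i`-th vertex. -/
noncomputable def triAngle (p : Fin 3 → Plane) (i : Fin 3) : ℝ :=
  EuclideanGeometry.angle (p (i + 1)) (p i) (p (i + 2))

/-- `p` is ε-similar to `T`: some correspondence of vertices makes corresponding
angles differ by less than ε. -/
def EpsSimilar (ε : ℝ) (p T : Fin 3 → Plane) : Prop :=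
  ∃ σ : Equiv.Perm (Fin 3), ∀ i, |triAngle p i - triAngle T (σ i)| < ε

/-- The finite set `S` forms a triangle ε-similar to `T`. -/
def FormsSimilar (ε : ℝ) (T : Fin 3 → Plane) (S : Finset Plane) : Prop :=
  ∃ p : Fin 3 → Plane, (S : Set Plane) = Set.range p ∧ IsTriangle p ∧ EpsSimilar ε p T

/-- The number of 3-element subsets of `P` forming a triangle ε-similar to `T`. -/
noncomputable def simCount (ε : ℝ) (T : Fin 3 → Plane) (P : Finset Plane) : ℕ :=
  Set.ncard {S : Finset Plane | S ⊆ P ∧ S.card = 3 ∧ FormsSimilar ε T S}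

/-- `hGeo n T ε` = maximum over `n`-point sets `P` of the number of 3-element
subsets of `P` forming a triangle ε-similar to `T`. -/
noncomputable def hGeo (n : ℕ) (T : Fin 3 → Plane) (ε : ℝ) : ℕ :=
  sSup {m | ∃ P : Finset Plane, P.card = n ∧ simCount ε T P = m}

/-- The recurrence defining the sequence `h`. -/
def HRec (h : ℕ → ℕ) : Prop :=
  h 0 = 0 ∧ h 1 = 0 ∧ h 2 = 0 ∧
  ∀ n, 3 ≤ n → IsGreatest
    {m | ∃ a b c : ℕ, a + b + c = n ∧ a ≤ n - 1 ∧ b ≤ n - 1 ∧ c ≤ n - 1 ∧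
      m = a * b * c + h a + h b + h c} (h n)

/-- The triple of points `(a, b, c)` forms a triangle ε-similar to `T`. -/
def TripleEpsSimilar (ε : ℝ) (T : Fin 3 → Plane) (a b c : Plane) : Prop :=
  IsTriangle ![a, b, c] ∧ EpsSimilar ε ![a, b, c] T

/-- The triple of points `(a, b, c)` forms a triangle similar to `T`
(corresponding angles are equal). -/
def TripleSimilar (T : Fin 3 → Plane) (a b c : Plane) : Prop :=
  IsTriangle ![a, b, c] ∧
  ∃ σ : Equiv.Perm (Fin 3), ∀ i, triAngle ![a, b, c] i = triAngle T (σ i)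

/-- The angles `α, β, γ` (of a triangle, so `α + β + γ = π`) satisfy a non-trivial
linear equation: `n₁α + n₂β + n₃γ + n₄π = 0` with integers `|nᵢ| ≤ 5` and
`(n₁, n₂, n₃, n₄)` not a scalar multiple of `(1, 1, 1, -1)`. -/
def SatisfiesNontrivLinear (α β γ : ℝ) : Prop :=
  ∃ n₁ n₂ n₃ n₄ : ℤ, |n₁| ≤ 5 ∧ |n₂| ≤ 5 ∧ |n₃| ≤ 5 ∧ |n₄| ≤ 5 ∧
    (n₁ : ℝ) * α + (n₂ : ℝ) * β + (n₃ : ℝ) * γ + (n₄ : ℝ) * Real.pi = 0 ∧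
    ¬(n₁ = n₂ ∧ n₂ = n₃ ∧ n₄ = -n₁)


structure Gen (t s : ℂ) : Prop where
  ht : t ≠ 0
  hs : s ≠ 0
  hu : 1 + t ≠ 0
  hv : 1 + s ≠ 0
  hts : t - s ≠ 0
  p1 : t * s - 1 ≠ 0
  r1 : (1 + t) * (1 + s) - 1 ≠ 0
  pr : t * s - (1 + t) * (1 + s) ≠ 0
  q1 : t * s - 1 - (1 + t) * (1 + s) ≠ 0
  q2 : (1 + t) * (1 + s) - 1 - t * s ≠ 0
  q3 : 1 - t * s - (1 + t) * (1 + s) ≠ 0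

noncomputable def rr (t s : ℂ) : Fin 3 → Bool → ℂ
  | 0, false => -1 / (1 + t)
  | 0, true => -(1 + s)
  | 1, false => -s / (1 + s)
  | 1, true => -(1 + t) / t
  | 2, false => t
  | 2, true => 1 / s

noncomputable def EE (t s : ℂ) (b0 b1 b2 b3 : Fin 3) (f0 f1 f2 f3 : Bool) : ℂ :=
  1 + rr t s b0 f0 * (1 + rr t s b1 f1 * (1 + rr t s b2 f2 * (1 + rr t s b3 f3)))

lemma cert {X Y t s : ℂ} (h1 : X = 0) (h2 : Y = 0) (ht : t - s ≠ 0) (M c F : ℂ)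
    (hc : c ≠ 0 := by simp [*])
    (key : M * X - Y = c * (t - s) * F := by simp only [EE, rr]; field_simp; ring) : F = 0 := by
  rw [h1, h2, mul_zero, sub_zero] at key
  rcases mul_eq_zero.1 key.symm with h | h
  · rcases mul_eq_zero.1 h with h | h
    · exact absurd h hc
    · exact absurd h ht
  · exact h

lemma arr0 {t s : ℂ} (G : Gen t s) (f0 f1 f2 f3 : Bool)
    (h1 : EE t s 0 0 1 2 f0 f1 f2 f3 = 0) (h2 : EE s t 0 0 1 2 f0 f1 f2 f3 = 0) :
    t*s*(1-(1+t)*(1+s)) - (1+t)*(1+s) = 0 ∧ (1-(1+t)*(1+s))^2-t*s*((1+t)*(1+s)) = 0 := by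
  obtain ⟨ht, hs, hu, hv, hts, p1, r1, pr, q1, q2, q3⟩ := G
  match f0, f1, f2, f3, h1, h2 with
  | false, false, false, false, h1, h2 =>
    exact absurd (cert h1 h2 hts ((1+t)/((1+s))) (1/((1+s))) (1) ) one_ne_zero
  | false, false, false, true, h1, h2 =>
    exact absurd (cert h1 h2 hts (1) (1/((1+t)*(1+s))) (1) ) one_ne_zero
  | false, false, true, false, h1, h2 =>
    exact ⟨by linear_combination -cert h1 h2 hts ((1+t)/((1+s))) (1/(t*s*(1+t)*(1+s)^2)) (t*s*((1+t)*(1+s))-t*s+(1+t)*(1+s)) ,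
      by linear_combination cert h1 h2 hts (t*(1+t)/(s*(1+s))) (1/(s*(1+t)*(1+s)^2)) ((1-(1+t)*(1+s))^2-t*s*((1+t)*(1+s))) ⟩
  | false, false, true, true, h1, h2 =>
    exact absurd (cert h1 h2 hts ((1+t)^2/((1+s)^2)) (-(1/((1+s)^2))) (t*s-(1+t)*(1+s)) ) pr
  | false, true, false, false, h1, h2 =>
    exact absurd (cert h1 h2 hts (1) (t*s/((1+t)*(1+s))) (1) ) one_ne_zero
  | false, true, false, true, h1, h2 =>
    exact absurd (cert h1 h2 hts (1) (1/((1+t)*(1+s))) (1) ) one_ne_zero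
  | false, true, true, false, h1, h2 =>
    exact absurd (cert h1 h2 hts ((1+t)/((1+s))) ((1+t)/(t*s)) (1) ) one_ne_zero
  | false, true, true, true, h1, h2 =>
    exact absurd (cert h1 h2 hts ((1+t)/((1+s))) ((1+t)/(t*s)) (1) ) one_ne_zero
  | true, false, false, false, h1, h2 =>
    exact absurd (cert h1 h2 hts ((1+t)/((1+s))) (1/((1+s))) (1) ) one_ne_zero
  | true, false, false, true, h1, h2 =>
    exact absurd (cert h1 h2 hts (1) (1) (1) ) one_ne_zero
  | true, false, true, false, h1, h2 =>
    exact absurd (cert h1 h2 hts ((1+t)/((1+s))) ((1+t)/(t*s)) (1) ) one_ne_zero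
  | true, false, true, true, h1, h2 =>
    exact absurd (cert h1 h2 hts ((1+t)/((1+s))) ((1+t)/(t*s)) (1) ) one_ne_zero
  | true, true, false, false, h1, h2 =>
    exact absurd (cert h1 h2 hts (1) (t*s) (1) ) one_ne_zero
  | true, true, false, true, h1, h2 =>
    exact absurd (cert h1 h2 hts (1) (1) (1) ) one_ne_zero
  | true, true, true, false, h1, h2 =>
    exact absurd (cert h1 h2 hts (t/(s)) (-(1/(s))) (t*s-1) ) p1
  | true, true, true, true, h1, h2 =>
    exact absurd (cert h1 h2 hts ((1+t)^2/((1+s)^2)) (-(1/((1+s)^2))) (t*s-1) ) p1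

lemma arr1 {t s : ℂ} (G : Gen t s) (f0 f1 f2 f3 : Bool)
    (h1 : EE t s 0 1 0 2 f0 f1 f2 f3 = 0) (h2 : EE s t 0 1 0 2 f0 f1 f2 f3 = 0) :
    f0 = true ∧ f1 = true ∧ f2 = true ∧ f3 = false := by
  obtain ⟨ht, hs, hu, hv, hts, p1, r1, pr, q1, q2, q3⟩ := G
  match f0, f1, f2, f3, h1, h2 with
  | false, false, false, false, h1, h2 =>
    exact absurd (cert h1 h2 hts (1) (1/((1+t)*(1+s))) (1) ) one_ne_zero
  | false, false, false, true, h1, h2 =>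
    exact absurd (cert h1 h2 hts ((1+t)/((1+s))) (1/((1+s))) (1) ) one_ne_zero
  | false, false, true, false, h1, h2 =>
    exact absurd (cert h1 h2 hts (1) (1) (1) ) one_ne_zero
  | false, false, true, true, h1, h2 =>
    exact absurd (cert h1 h2 hts (1) (-(1/((1+t)*(1+s)))) (t*s-1-(1+t)*(1+s)) ) q1
  | false, true, false, false, h1, h2 =>
    exact absurd (cert h1 h2 hts (1) (1/((1+t)*(1+s))) (1) ) one_ne_zero
  | false, true, false, true, h1, h2 =>
    exact absurd (cert h1 h2 hts (1) (1/(t*s*(1+t)*(1+s))) (1) ) one_ne_zero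
  | false, true, true, false, h1, h2 =>
    exact absurd (cert h1 h2 hts (t*(1+t)/(s*(1+s))) (-(t/((1+s)))) (1) ) one_ne_zero
  | false, true, true, true, h1, h2 =>
    exact absurd (cert h1 h2 hts ((1+t)/((1+s))) (-(1/(t*s*(1+s)))) (1-t*s-(1+t)*(1+s)) ) q3
  | true, false, false, false, h1, h2 =>
    exact absurd (cert h1 h2 hts (1) (1) (1) ) one_ne_zero
  | true, false, false, true, h1, h2 =>
    exact absurd (cert h1 h2 hts ((1+t)/((1+s))) (1/((1+s))) (1) ) one_ne_zero
  | true, false, true, false, h1, h2 =>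
    exact absurd (cert h1 h2 hts (1) ((1+t)*(1+s)) (1) ) one_ne_zero
  | true, false, true, true, h1, h2 =>
    exact absurd (cert h1 h2 hts ((1+t)/((1+s))) ((1+t)) (1) ) one_ne_zero
  | true, true, false, false, h1, h2 =>
    exact absurd (cert h1 h2 hts (1) (1) (1) ) one_ne_zero
  | true, true, false, true, h1, h2 =>
    exact absurd (cert h1 h2 hts (1) (1/(t*s)) (1) ) one_ne_zero
  | true, true, true, false, h1, h2 =>
    exact ⟨rfl, rfl, rfl, rfl⟩
  | true, true, true, true, h1, h2 =>
    exact absurd (cert h1 h2 hts (t/(s)) ((1+t)*(1+s)/(t*s^2)) (t*s-1) ) p1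

lemma arr2 {t s : ℂ} (G : Gen t s) (f0 f1 f2 f3 : Bool)
    (h1 : EE t s 0 1 2 0 f0 f1 f2 f3 = 0) (h2 : EE s t 0 1 2 0 f0 f1 f2 f3 = 0) :
    f0 = true ∧ f1 = true ∧ f2 = false ∧ f3 = true := by
  obtain ⟨ht, hs, hu, hv, hts, p1, r1, pr, q1, q2, q3⟩ := G
  match f0, f1, f2, f3, h1, h2 with
  | false, false, false, false, h1, h2 =>
    exact absurd (cert h1 h2 hts (1) (t*s/((1+t)^2*(1+s)^2)) (1) ) one_ne_zero
  | false, false, false, true, h1, h2 =>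
    exact absurd (cert h1 h2 hts (1) (t*s/((1+t)*(1+s))) (1) ) one_ne_zero
  | false, false, true, false, h1, h2 =>
    exact absurd (cert h1 h2 hts (1) (1/((1+t)^2*(1+s)^2)) (1) ) one_ne_zero
  | false, false, true, true, h1, h2 =>
    exact absurd (cert h1 h2 hts (1) (1/((1+t)*(1+s))) (1) ) one_ne_zero
  | false, true, false, false, h1, h2 =>
    exact absurd (cert h1 h2 hts (t/(s)) (2*(1/(s*(1+t)*(1+s)))) ((1+t)*(1+s)-1) ) r1
  | false, true, false, true, h1, h2 =>
    exact absurd (cert h1 h2 hts (t/(s)) (1/(s*(1+t)*(1+s))) ((1+t)*(1+s)-1) ) r1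
  | false, true, true, false, h1, h2 =>
    exact absurd (cert h1 h2 hts ((1+t)/((1+s))) (1/((1+s))) (1) ) one_ne_zero
  | false, true, true, true, h1, h2 =>
    exact absurd (cert h1 h2 hts (1) (1/((1+t)*(1+s))) (1) ) one_ne_zero
  | true, false, false, false, h1, h2 =>
    exact absurd (cert h1 h2 hts (1) (t*s/((1+t)*(1+s))) (1) ) one_ne_zero
  | true, false, false, true, h1, h2 =>
    exact absurd (cert h1 h2 hts (1) (t*s) (1) ) one_ne_zero
  | true, false, true, false, h1, h2 =>
    exact absurd (cert h1 h2 hts (1) (1/((1+t)*(1+s))) (1) ) one_ne_zero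
  | true, false, true, true, h1, h2 =>
    exact absurd (cert h1 h2 hts (1) (1) (1) ) one_ne_zero
  | true, true, false, false, h1, h2 =>
    exact absurd (cert h1 h2 hts (t/(s)) (1/(s)) ((1+t)*(1+s)-1) ) r1
  | true, true, false, true, h1, h2 =>
    exact ⟨rfl, rfl, rfl, rfl⟩
  | true, true, true, false, h1, h2 =>
    exact absurd (cert h1 h2 hts ((1+t)/((1+s))) (1/((1+s))) (1) ) one_ne_zero
  | true, true, true, true, h1, h2 =>
    exact absurd (cert h1 h2 hts (1) (1) (1) ) one_ne_zero

lemma arr3 {t s : ℂ} (G : Gen t s) (f0 f1 f2 f3 : Bool)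
    (h1 : EE t s 1 0 0 2 f0 f1 f2 f3 = 0) (h2 : EE s t 1 0 0 2 f0 f1 f2 f3 = 0) :
    f0 = true ∧ f1 = true ∧ f2 = true ∧ f3 = false := by
  obtain ⟨ht, hs, hu, hv, hts, p1, r1, pr, q1, q2, q3⟩ := G
  match f0, f1, f2, f3, h1, h2 with
  | false, false, false, false, h1, h2 =>
    exact absurd (cert h1 h2 hts (1) (1/((1+t)*(1+s))) (1) ) one_ne_zero
  | false, false, false, true, h1, h2 =>
    exact absurd (cert h1 h2 hts (1) (-(1/((1+t)^2*(1+s)^2))) (t*s-1-(1+t)*(1+s)) ) q1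
  | false, false, true, false, h1, h2 =>
    exact absurd (cert h1 h2 hts (1) (1) (1) ) one_ne_zero
  | false, false, true, true, h1, h2 =>
    exact absurd (cert h1 h2 hts (t/(s)) (1/(s*(1+t)*(1+s))) ((1+t)*(1+s)-1) ) r1
  | false, true, false, false, h1, h2 =>
    exact absurd (cert h1 h2 hts (1) (1/((1+t)*(1+s))) (1) ) one_ne_zero
  | false, true, false, true, h1, h2 =>
    exact absurd (cert h1 h2 hts (t/(s)) (1/(s*(1+t)*(1+s))) ((1+t)*(1+s)-1) ) r1
  | false, true, true, false, h1, h2 =>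
    exact absurd (cert h1 h2 hts (t/(s)) (-(1/(s*(1+t)*(1+s)))) (t*s-(1+t)*(1+s)) ) pr
  | false, true, true, true, h1, h2 =>
    exact absurd (cert h1 h2 hts (t/(s)) (t/((1+t)*(1+s))) ((1+t)*(1+s)-1) ) r1
  | true, false, false, false, h1, h2 =>
    exact absurd (cert h1 h2 hts (1) (1/(t*s)) (1) ) one_ne_zero
  | true, false, false, true, h1, h2 =>
    exact absurd (cert h1 h2 hts ((1+t)/((1+s))) (1/(t*s*(1+s))) (1) ) one_ne_zero
  | true, false, true, false, h1, h2 =>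
    exact absurd (cert h1 h2 hts (1) ((1+t)*(1+s)/(t*s)) (1) ) one_ne_zero
  | true, false, true, true, h1, h2 =>
    exact absurd (cert h1 h2 hts ((1+t)/((1+s))) ((1+t)/(t*s)) (1) ) one_ne_zero
  | true, true, false, false, h1, h2 =>
    exact absurd (cert h1 h2 hts (1) (1/(t*s)) (1) ) one_ne_zero
  | true, true, false, true, h1, h2 =>
    exact absurd (cert h1 h2 hts ((1+t)/((1+s))) (1/(t*s*(1+s))) (1) ) one_ne_zero
  | true, true, true, false, h1, h2 =>
    exact ⟨rfl, rfl, rfl, rfl⟩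
  | true, true, true, true, h1, h2 =>
    exact absurd (cert h1 h2 hts (t/(s)) ((1+t)*(1+s)/(t*s^2)) (t*s-1) ) p1

lemma arr4 {t s : ℂ} (G : Gen t s) (f0 f1 f2 f3 : Bool)
    (h1 : EE t s 1 0 2 0 f0 f1 f2 f3 = 0) (h2 : EE s t 1 0 2 0 f0 f1 f2 f3 = 0) :
    f0 = true ∧ f1 = true ∧ f2 = false ∧ f3 = true := by
  obtain ⟨ht, hs, hu, hv, hts, p1, r1, pr, q1, q2, q3⟩ := G
  match f0, f1, f2, f3, h1, h2 with
  | false, false, false, false, h1, h2 =>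
    exact absurd (cert h1 h2 hts (1) (t*s/((1+t)^2*(1+s)^2)) (1) ) one_ne_zero
  | false, false, false, true, h1, h2 =>
    exact absurd (cert h1 h2 hts (1) (t*s/((1+t)*(1+s))) (1) ) one_ne_zero
  | false, false, true, false, h1, h2 =>
    exact absurd (cert h1 h2 hts (1) (1/((1+t)^2*(1+s)^2)) (1) ) one_ne_zero
  | false, false, true, true, h1, h2 =>
    exact absurd (cert h1 h2 hts (1) (1/((1+t)*(1+s))) (1) ) one_ne_zero
  | false, true, false, false, h1, h2 =>
    exact absurd (cert h1 h2 hts (1) (-(1/((1+t)*(1+s)))) ((1+t)*(1+s)-1-t*s) ) q2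
  | false, true, false, true, h1, h2 =>
    exact absurd (cert h1 h2 hts (t/(s)) (-(1/(s*(1+t)*(1+s)))) (t*s-(1+t)*(1+s)) ) pr
  | false, true, true, false, h1, h2 =>
    exact absurd (cert h1 h2 hts ((1+t)/((1+s))) (-(1/((1+t)*(1+s)^2))) (t*s-1-(1+t)*(1+s)) ) q1
  | false, true, true, true, h1, h2 =>
    exact absurd (cert h1 h2 hts (1) (1/((1+t)*(1+s))) (1) ) one_ne_zero
  | true, false, false, false, h1, h2 =>
    exact absurd (cert h1 h2 hts (1) (1/((1+t)*(1+s))) (1) ) one_ne_zero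
  | true, false, false, true, h1, h2 =>
    exact absurd (cert h1 h2 hts (1) (1) (1) ) one_ne_zero
  | true, false, true, false, h1, h2 =>
    exact absurd (cert h1 h2 hts (1) (1/(t*s*(1+t)*(1+s))) (1) ) one_ne_zero
  | true, false, true, true, h1, h2 =>
    exact absurd (cert h1 h2 hts (1) (1/(t*s)) (1) ) one_ne_zero
  | true, true, false, false, h1, h2 =>
    exact absurd (cert h1 h2 hts (t*(1+s)/(s*(1+t))) (t/((1+t))) (1) ) one_ne_zero
  | true, true, false, true, h1, h2 =>
    exact ⟨rfl, rfl, rfl, rfl⟩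
  | true, true, true, false, h1, h2 =>
    exact absurd (cert h1 h2 hts ((1+t)/((1+s))) (1/(t*s*(1+s))) (1) ) one_ne_zero
  | true, true, true, true, h1, h2 =>
    exact absurd (cert h1 h2 hts (1) (1/(t*s)) (1) ) one_ne_zero

lemma arr5 {t s : ℂ} (G : Gen t s) (f0 f1 f2 f3 : Bool)
    (h1 : EE t s 1 2 0 0 f0 f1 f2 f3 = 0) (h2 : EE s t 1 2 0 0 f0 f1 f2 f3 = 0) :
    t*s*((1+t)*(1+s)-1) - (1+t)*(1+s) = 0 ∧ ((1+t)*(1+s)-1)^2-t*s = 0 := by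
  obtain ⟨ht, hs, hu, hv, hts, p1, r1, pr, q1, q2, q3⟩ := G
  match f0, f1, f2, f3, h1, h2 with
  | false, false, false, false, h1, h2 =>
    exact absurd (cert h1 h2 hts ((1+s)/((1+t))) (-(t*s/((1+t)^3*(1+s)^2))) (t*s-1) ) p1
  | false, false, false, true, h1, h2 =>
    exact absurd (cert h1 h2 hts (1) (1/((1+t)*(1+s))) (1) ) one_ne_zero
  | false, false, true, false, h1, h2 =>
    exact absurd (cert h1 h2 hts (1) (1/((1+t)*(1+s))) (1) ) one_ne_zero
  | false, false, true, true, h1, h2 =>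
    exact absurd (cert h1 h2 hts ((1+s)/((1+t))) (-(t*s/((1+t)))) (t*s-(1+t)*(1+s)) ) pr
  | false, true, false, false, h1, h2 =>
    exact absurd (cert h1 h2 hts (1) (1/((1+t)^2*(1+s)^2)) (1) ) one_ne_zero
  | false, true, false, true, h1, h2 =>
    exact absurd (cert h1 h2 hts (1) (1/((1+t)*(1+s))) (1) ) one_ne_zero
  | false, true, true, false, h1, h2 =>
    exact absurd (cert h1 h2 hts (1) (1/((1+t)*(1+s))) (1) ) one_ne_zero
  | false, true, true, true, h1, h2 =>
    exact absurd (cert h1 h2 hts (1) (1) (1) ) one_ne_zero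
  | true, false, false, false, h1, h2 =>
    exact ⟨by linear_combination -cert h1 h2 hts (1) (1/(t*s*(1+t)*(1+s))) (t*s+(1+t)*(1+s)-t*s*((1+t)*(1+s))) ,
      by linear_combination -cert h1 h2 hts (t*(1+s)/(s*(1+t))) (1/(s*(1+t)^2*(1+s))) (t*s-((1+t)*(1+s)-1)^2) ⟩
  | true, false, false, true, h1, h2 =>
    exact absurd (cert h1 h2 hts (1) (1/(t*s)) (1) ) one_ne_zero
  | true, false, true, false, h1, h2 =>
    exact absurd (cert h1 h2 hts (1) (1/(t*s)) (1) ) one_ne_zero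
  | true, false, true, true, h1, h2 =>
    exact absurd (cert h1 h2 hts (t/(s)) (1/(s)) (t*s-(1+t)*(1+s)) ) pr
  | true, true, false, false, h1, h2 =>
    exact absurd (cert h1 h2 hts (1) (1/(t*s*(1+t)*(1+s))) (1) ) one_ne_zero
  | true, true, false, true, h1, h2 =>
    exact absurd (cert h1 h2 hts (1) (1/(t*s)) (1) ) one_ne_zero
  | true, true, true, false, h1, h2 =>
    exact absurd (cert h1 h2 hts (1) (1/(t*s)) (1) ) one_ne_zero
  | true, true, true, true, h1, h2 =>
    exact absurd (cert h1 h2 hts (1) ((1+t)*(1+s)/(t*s)) (1) ) one_ne_zero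


noncomputable def rv (g a b c : ℝ) : ℂ :=
  -((Real.sin a / Real.sin c : ℝ) : ℂ) * Complex.exp ((g * b : ℝ) * Complex.I)

lemma rv_eq (g a b c : ℝ) : rv g a b c =
    -((Real.sin a / Real.sin c : ℝ) : ℂ) * (Real.cos (g * b) + Real.sin (g * b) * Complex.I) := by
  rw [rv, Complex.exp_mul_I, Complex.ofReal_cos, Complex.ofReal_sin]

lemma rv_conj (g a b c : ℝ) : (starRingEnd ℂ) (rv g a b c) = rv (-g) a b c := by
  rw [rv_eq, rv_eq]
  simp only [map_mul, map_neg, map_add, Complex.conj_ofReal, Complex.conj_I, neg_mul, Real.cos_neg,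
    Real.sin_neg, Complex.ofReal_neg]
  ring

lemma rv_ne {g a b c : ℝ} (ha : Real.sin a ≠ 0) (hc : Real.sin c ≠ 0) : rv g a b c ≠ 0 := by
  rw [rv]
  refine mul_ne_zero (neg_ne_zero.2 ?_) (Complex.exp_ne_zero _)
  exact_mod_cast div_ne_zero ha hc

lemma rr_conj (t : ℂ) (b : Fin 3) (f : Bool) :
    (starRingEnd ℂ) (rr t ((starRingEnd ℂ) t) b f) = rr ((starRingEnd ℂ) t) t b f := by
  fin_cases b <;> cases f <;> simp [rr]

lemma one_add_t {A B C : ℝ} (hB : Real.sin B ≠ 0) (h : A + B + C = Real.pi) :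
    1 + rv (-1) A C B = ((Real.sin C / Real.sin B : ℝ) : ℂ) * (Real.cos A + Real.sin A * Complex.I) := by
  have hBv : B = Real.pi - (A + C) := by linarith
  have h1 : Real.sin B = Real.sin A * Real.cos C + Real.cos A * Real.sin C := by
    rw [hBv, Real.sin_pi_sub, Real.sin_add]
  rw [rv_eq]
  have hB' : (Real.sin B : ℂ) ≠ 0 := by exact_mod_cast hB
  have h1' : (Real.sin B : ℂ) = Real.sin A * Real.cos C + Real.cos A * Real.sin C := by
    rw [h1]; push_cast; rfl
  simp only [neg_mul, one_mul, Real.cos_neg, Real.sin_neg, Complex.ofReal_neg, Complex.ofReal_div]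
  field_simp
  rw [h1']
  ring

lemma rr_vals {A B C : ℝ} (hA : Real.sin A ≠ 0) (hB : Real.sin B ≠ 0) (hC : Real.sin C ≠ 0)
    (h : A + B + C = Real.pi) (t s : ℂ) (ht : t = rv (-1) A C B) (hs : s = rv 1 A C B) :
    rr t s 0 false = rv (-1) B A C ∧ rr t s 0 true = rv (-1) C A B ∧
    rr t s 1 false = rv (-1) A B C ∧ rr t s 1 true = rv (-1) C B A ∧
    rr t s 2 false = rv (-1) A C B ∧ rr t s 2 true = rv (-1) B C A := by
  have h1 := one_add_t hB h
  have h2 : 1 + rv 1 A C B = ((Real.sin C / Real.sin B : ℝ) : ℂ) *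
      (Real.cos A - Real.sin A * Complex.I) := by
    have := congrArg (starRingEnd ℂ) h1
    rw [map_add, rv_conj] at this
    simp only [map_mul, map_one, neg_neg, map_add, Complex.conj_ofReal, Complex.conj_I] at this
    rw [this]; ring
  have cs : ∀ x : ℝ, (Real.cos x : ℂ) ^ 2 + (Real.sin x : ℂ) ^ 2 = 1 := by
    intro x; exact_mod_cast Real.cos_sq_add_sin_sq x
  have hI := Complex.I_sq
  have hBv : B = Real.pi - (A + C) := by linarith
  have hsB : (Real.sin B : ℂ) = Real.sin A * Real.cos C + Real.cos A * Real.sin C := by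
    rw [hBv, Real.sin_pi_sub, Real.sin_add]; push_cast; rfl
  have hcB : (Real.cos B : ℂ) = Real.sin A * Real.sin C - Real.cos A * Real.cos C := by
    rw [hBv, Real.cos_pi_sub, Real.cos_add]; push_cast; ring
  have hA' : (Real.sin A : ℂ) ≠ 0 := by exact_mod_cast hA
  have hB' : (Real.sin B : ℂ) ≠ 0 := by exact_mod_cast hB
  have hC' : (Real.sin C : ℂ) ≠ 0 := by exact_mod_cast hC
  have e1 : ∀ x : ℝ, (Real.cos x + Real.sin x * Complex.I : ℂ) ≠ 0 := by
    intro x h0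
    have : (Real.cos x + Real.sin x * Complex.I : ℂ) * (Real.cos x - Real.sin x * Complex.I) = 1 := by
      linear_combination cs x - (Real.sin x : ℂ)^2 * hI
    rw [h0] at this; simp at this
  have e2 : ∀ x : ℝ, (Real.cos x - Real.sin x * Complex.I : ℂ) ≠ 0 := by
    intro x h0
    have : (Real.cos x + Real.sin x * Complex.I : ℂ) * (Real.cos x - Real.sin x * Complex.I) = 1 := by
      linear_combination cs x - (Real.sin x : ℂ)^2 * hI
    rw [h0] at this; simp at this
  subst ht hs
  have hh : ∀ x y : ℂ, ∀ d : ℂ, d ≠ 0 → x = y * d → x / d = y := by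
    intro x y d hd h; rw [h, mul_div_cancel_right₀ _ hd]
  have n1 : 1 + rv (-1) A C B ≠ 0 := by
    rw [h1]; exact mul_ne_zero (by exact_mod_cast div_ne_zero hC hB) (e1 A)
  have n2 : 1 + rv 1 A C B ≠ 0 := by
    rw [h2]; exact mul_ne_zero (by exact_mod_cast div_ne_zero hC hB) (e2 A)
  refine ⟨?_, ?_, ?_, ?_, rfl, ?_⟩
  · refine hh _ _ _ n1 ?_
    rw [h1, rv_eq]
    simp only [neg_mul, one_mul, Real.cos_neg, Real.sin_neg, Complex.ofReal_neg, Complex.ofReal_div]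
    field_simp
    linear_combination cs A - (Real.sin A : ℂ)^2 * hI
  · show -(1 + rv 1 A C B) = _
    rw [h2, rv_eq]
    simp only [neg_mul, one_mul, Real.cos_neg, Real.sin_neg, Complex.ofReal_neg, Complex.ofReal_div]
    ring
  · refine hh _ _ _ n2 ?_
    rw [h2, rv_eq, rv_eq]
    simp only [neg_mul, one_mul, Real.cos_neg, Real.sin_neg, Complex.ofReal_neg, Complex.ofReal_div]
    field_simp
    rw [hsB, hcB]
    linear_combination -(Real.cos C + Real.sin C * Complex.I) * cs A + (Real.cos C * (Real.sin A : ℂ)^2 + Real.sin A * Real.cos A * Real.sin C) * hI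
  · refine hh _ _ _ (rv_ne hA hB) ?_
    rw [h1, rv_eq, rv_eq]
    simp only [neg_mul, one_mul, Real.cos_neg, Real.sin_neg, Complex.ofReal_neg, Complex.ofReal_div]
    field_simp
    rw [hsB, hcB]
    linear_combination (Real.cos A + Real.sin A * Complex.I) * cs C - (Real.cos A * (Real.sin C : ℂ)^2 + Real.sin C * Real.cos C * Real.sin A) * hI
  · refine hh _ _ _ (rv_ne hA hB) ?_
    rw [rv_eq, rv_eq]
    simp only [neg_mul, one_mul, Real.cos_neg, Real.sin_neg, Complex.ofReal_neg, Complex.ofReal_div]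
    field_simp
    linear_combination -cs C + (Real.sin C : ℂ)^2 * hI


lemma sq_sub {X Y Z : ℝ} (h : X + Y + Z = Real.pi) :
    Real.sin X ^ 2 - Real.sin Y ^ 2 = Real.sin (X - Y) * Real.sin Z := by
  have : Z = Real.pi - (X + Y) := by linarith
  rw [this, Real.sin_pi_sub, Real.sin_add, Real.sin_sub]
  have h1 := Real.sin_sq_add_cos_sq X
  have h2 := Real.sin_sq_add_cos_sq Y
  linear_combination Real.sin X ^ 2 * (-h2) + Real.sin Y ^ 2 * h1

lemma ne_sq {X Y Z : ℝ} (hX : 0 < X) (hY : 0 < Y) (hZ : 0 < Z) (h : X + Y + Z = Real.pi)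
    (hne : X ≠ Y) : Real.sin X ^ 2 ≠ Real.sin Y ^ 2 := by
  intro he
  have h1 := sq_sub h
  rw [he, sub_self] at h1
  have h2 : 0 < Real.sin Z := Real.sin_pos_of_pos_of_lt_pi hZ (by linarith)
  rcases mul_eq_zero.1 h1.symm with h3 | h3
  · rw [Real.sin_eq_zero_iff_of_lt_of_lt (by linarith) (by linarith)] at h3
    exact hne (by linarith)
  · exact h2.ne' h3

lemma ne_right {X Y Z : ℝ} (hX : 0 < X) (hY : 0 < Y) (hZ : 0 < Z) (h : X + Y + Z = Real.pi)
    (hne : 2 * X ≠ Real.pi) : Real.sin X ^ 2 ≠ Real.sin Y ^ 2 + Real.sin Z ^ 2 := by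
  intro he
  have hX' : X = Real.pi - (Y + Z) := by linarith
  have hc : Real.cos X = - (Real.cos Y * Real.cos Z - Real.sin Y * Real.sin Z) := by
    rw [hX', Real.cos_pi_sub, Real.cos_add]
  have hs : Real.sin X = Real.sin Y * Real.cos Z + Real.cos Y * Real.sin Z := by
    rw [hX', Real.sin_pi_sub, Real.sin_add]
  have h2 : 0 < Real.sin Z := Real.sin_pos_of_pos_of_lt_pi hZ (by linarith)
  have h3 : 0 < Real.sin Y := Real.sin_pos_of_pos_of_lt_pi hY (by linarith)
  have h4 : Real.sin Y * Real.sin Z * Real.cos X = 0 := by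
    have e1 := Real.sin_sq_add_cos_sq Y
    have e2 := Real.sin_sq_add_cos_sq Z
    rw [hs] at he
    rw [hc]
    linear_combination (-1/2) * he + (Real.sin Y)^2 * e2 / 2 + (Real.sin Z)^2 * e1 / 2
  have h5 : Real.cos X ≠ 0 := by
    rcases lt_or_gt_of_ne hne with h | h
    · exact (Real.cos_pos_of_mem_Ioo ⟨by linarith, by linarith⟩).ne'
    · exact (Real.cos_neg_of_pi_div_two_lt_of_lt (by linarith) (by linarith)).ne
  exact h5 (by simpa [h2.ne', h3.ne'] using h4)

lemma ne_double {X Y Z : ℝ} (hX : 0 < X) (hY : 0 < Y) (hZ : 0 < Z) (h : X + Y + Z = Real.pi)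
    (hne : X ≠ 2 * Y) : Real.sin X ^ 2 - Real.sin Y ^ 2 ≠ Real.sin Z * Real.sin Y := by
  intro he
  rw [sq_sub h] at he
  have h2 : 0 < Real.sin Z := Real.sin_pos_of_pos_of_lt_pi hZ (by linarith)
  have h3 : Real.sin (X - Y) - Real.sin Y = 0 := by
    have : Real.sin Z * (Real.sin (X - Y) - Real.sin Y) = 0 := by linear_combination he
    exact (mul_eq_zero.1 this).resolve_left h2.ne'
  rw [Real.sin_sub_sin] at h3
  have h4 : 0 < Real.cos ((X - Y + Y) / 2) :=
    Real.cos_pos_of_mem_Ioo ⟨by linarith, by linarith⟩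
  have h5 : Real.sin ((X - Y - Y) / 2) = 0 := by
    rcases mul_eq_zero.1 h3 with h | h
    · linarith
    · exact absurd h h4.ne'
  rw [Real.sin_eq_zero_iff_of_lt_of_lt (by linarith) (by linarith)] at h5
  exact hne (by linarith)

def NoRel (A B C : ℝ) : Prop := ∀ a b c m : ℤ, |a| ≤ 5 → |b| ≤ 5 → |c| ≤ 5 → |m| ≤ 5 →
  (a : ℝ) * A + b * B + c * C + m * Real.pi = 0 → a = b ∧ b = c ∧ m = -a

def Arr (b0 b1 b2 b3 x y z : Fin 3) : Prop :=
  (b0 = x ∧ b1 = x ∧ b2 = y ∧ b3 = z) ∨ (b0 = x ∧ b1 = y ∧ b2 = x ∧ b3 = z) ∨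
  (b0 = x ∧ b1 = y ∧ b2 = z ∧ b3 = x) ∨ (b0 = y ∧ b1 = x ∧ b2 = x ∧ b3 = z) ∨
  (b0 = y ∧ b1 = x ∧ b2 = z ∧ b3 = x) ∨ (b0 = y ∧ b1 = z ∧ b2 = x ∧ b3 = x)

instance (b0 b1 b2 b3 x y z : Fin 3) : Decidable (Arr b0 b1 b2 b3 x y z) := by
  unfold Arr; infer_instance

lemma coreABC {A B C : ℝ} (hA : 0 < A) (hB : 0 < B) (hC : 0 < C) (h : A + B + C = Real.pi)
    (hr : NoRel A B C) (t : ℂ) (ht : t = rv (-1) A C B)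
    {b0 b1 b2 b3 : Fin 3} (hb : Arr b0 b1 b2 b3 0 1 2) (f0 f1 f2 f3 f4 : Bool)
    (hE : EE t ((starRingEnd ℂ) t) b0 b1 b2 b3 f0 f1 f2 f3 = 0)
    (hprod : rr t ((starRingEnd ℂ) t) b0 f0 * rr t ((starRingEnd ℂ) t) b1 f1 *
      rr t ((starRingEnd ℂ) t) b2 f2 * rr t ((starRingEnd ℂ) t) b3 f3 *
      rr ((starRingEnd ℂ) t) t 0 f4 = 1) : False := by
  have sA : 0 < Real.sin A := Real.sin_pos_of_pos_of_lt_pi hA (by linarith)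
  have sB : 0 < Real.sin B := Real.sin_pos_of_pos_of_lt_pi hB (by linarith)
  have sC : 0 < Real.sin C := Real.sin_pos_of_pos_of_lt_pi hC (by linarith)
  set s := (starRingEnd ℂ) t with hs
  have hs' : s = rv 1 A C B := by rw [hs, ht, rv_conj, neg_neg]
  have cs : ∀ x : ℝ, (Real.cos x : ℂ) ^ 2 + (Real.sin x : ℂ) ^ 2 = 1 := by
    intro x; exact_mod_cast Real.cos_sq_add_sin_sq x
  obtain ⟨p, hp⟩ : ∃ p, p = Real.sin A / Real.sin B := ⟨_, rfl⟩
  obtain ⟨r, hr'⟩ : ∃ r, r = Real.sin C / Real.sin B := ⟨_, rfl⟩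
  have p0 : 0 < p := by rw [hp]; positivity
  have r0 : 0 < r := by rw [hr']; positivity
  have hP : t * s = ((p ^ 2 : ℝ) : ℂ) := by
    rw [hs', ht, rv_eq, rv_eq, ← hp]
    simp only [neg_mul, one_mul, Real.cos_neg, Real.sin_neg, Complex.ofReal_neg]
    rw [Complex.ofReal_pow]
    linear_combination (p : ℂ) ^ 2 * (cs C) - (p : ℂ) ^ 2 * (Real.sin C : ℂ)^2 * Complex.I_sq
  have hu := one_add_t sB.ne' h
  rw [← ht, ← hr'] at hu
  have hv : 1 + s = (r : ℂ) * (Real.cos A - Real.sin A * Complex.I) := by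
    have := congrArg (starRingEnd ℂ) hu
    rw [map_add, ← hs] at this
    simp only [map_mul, map_one, map_add, Complex.conj_ofReal, Complex.conj_I] at this
    rw [this]; ring
  have hR : (1 + t) * (1 + s) = ((r ^ 2 : ℝ) : ℂ) := by
    rw [hu, hv]
    rw [Complex.ofReal_pow]
    linear_combination (r : ℂ) ^ 2 * (cs A) - (r : ℂ) ^ 2 * (Real.sin A : ℂ)^2 * Complex.I_sq
  have hAp : Real.sin A = p * Real.sin B := by rw [hp]; field_simp
  have hCr : Real.sin C = r * Real.sin B := by rw [hr']; field_simp
  have nAB : A ≠ B := fun e => by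
    have := hr 1 (-1) 0 0 (by norm_num) (by norm_num) (by norm_num) (by norm_num) (by push_cast; linarith)
    omega
  have nAC : A ≠ C := fun e => by
    have := hr 1 0 (-1) 0 (by norm_num) (by norm_num) (by norm_num) (by norm_num) (by push_cast; linarith)
    omega
  have nBC : C ≠ B := fun e => by
    have := hr 0 1 (-1) 0 (by norm_num) (by norm_num) (by norm_num) (by norm_num) (by push_cast; linarith)
    omega
  have nA : 2 * A ≠ Real.pi := fun e => by
    have := hr 2 0 0 (-1) (by norm_num) (by norm_num) (by norm_num) (by norm_num) (by push_cast; linarith)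
    omega
  have nB : 2 * B ≠ Real.pi := fun e => by
    have := hr 0 2 0 (-1) (by norm_num) (by norm_num) (by norm_num) (by norm_num) (by push_cast; linarith)
    omega
  have nC : 2 * C ≠ Real.pi := fun e => by
    have := hr 0 0 2 (-1) (by norm_num) (by norm_num) (by norm_num) (by norm_num) (by push_cast; linarith)
    omega
  have nB2 : B ≠ 2 * C := fun e => by
    have := hr 0 1 (-2) 0 (by norm_num) (by norm_num) (by norm_num) (by norm_num) (by push_cast; linarith)
    omega
  have nC2 : C ≠ 2 * B := fun e => by
    have := hr 0 (-2) 1 0 (by norm_num) (by norm_num) (by norm_num) (by norm_num) (by push_cast; linarith)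
    omega
  have k1 := ne_sq hA hB hC h nAB
  have k2 := ne_sq hC hB hA (by linarith) nBC
  have k3 := ne_sq hA hC hB (by linarith) nAC
  have k4 := ne_right hA hB hC h nA
  have k5 := ne_right hB hA hC (by linarith) nB
  have k6 := ne_right hC hB hA (by linarith) nC
  have k7 := ne_double hB hC hA (by linarith) nB2
  have k8 := ne_double hC hB hA (by linarith) nC2
  rw [hAp] at k1 k3 k4 k5 k6 k7 k8
  rw [hCr] at k2 k3 k4 k5 k6 k7 k8
  have r1 : (1 + t) * (1 + s) - 1 ≠ 0 := by
    rw [hR]; intro e; apply k2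
    have e' : r ^ 2 - 1 = 0 := by exact_mod_cast e
    linear_combination Real.sin B ^ 2 * e'
  have hG : Gen t s := by
    have hPne : t * s ≠ 0 := by rw [hP]; exact_mod_cast (by positivity)
    have hRne : (1 + t) * (1 + s) ≠ 0 := by rw [hR]; exact_mod_cast (by positivity)
    refine ⟨left_ne_zero_of_mul hPne, right_ne_zero_of_mul hPne, left_ne_zero_of_mul hRne,
      right_ne_zero_of_mul hRne, ?_, ?_, r1, ?_, ?_, ?_, ?_⟩
    · intro e
      have : (2 * r * Real.sin A : ℂ) * Complex.I = 0 := by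
        linear_combination e - hu + hv
      simp [r0.ne', sA.ne', Complex.I_ne_zero] at this
      exact sA.ne' (by exact_mod_cast this)
    · rw [hP]; intro e; apply k1
      have e' : p ^ 2 - 1 = 0 := by exact_mod_cast e
      linear_combination Real.sin B ^ 2 * e'
    · rw [hP, hR]; intro e; apply k3
      have e' : p ^ 2 - r ^ 2 = 0 := by exact_mod_cast e
      linear_combination Real.sin B ^ 2 * e'
    · rw [hP, hR]; intro e; apply k4
      have e' : p ^ 2 - 1 - r ^ 2 = 0 := by exact_mod_cast e
      linear_combination Real.sin B ^ 2 * e'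
    · rw [hP, hR]; intro e; apply k6
      have e' : r ^ 2 - 1 - p ^ 2 = 0 := by exact_mod_cast e
      linear_combination Real.sin B ^ 2 * e'
    · rw [hP, hR]; intro e; apply k5
      have e' : 1 - p ^ 2 - r ^ 2 = 0 := by exact_mod_cast e
      linear_combination Real.sin B ^ 2 * e'
  have hsc : (starRingEnd ℂ) s = t := by rw [hs, Complex.conj_conj]
  have rc : ∀ b f, (starRingEnd ℂ) (rr t s b f) = rr s t b f := fun b f => rr_conj t b f
  have hE2 : EE s t b0 b1 b2 b3 f0 f1 f2 f3 = 0 := by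
    have := congrArg (starRingEnd ℂ) hE
    simpa only [EE, map_add, map_mul, map_one, map_zero, rc] using this
  have hprod2 : rr s t b0 f0 * rr s t b1 f1 * rr s t b2 f2 * rr s t b3 f3 * rr t s 0 f4 = 1 := by
    have := congrArg (starRingEnd ℂ) hprod
    have rc' : (starRingEnd ℂ) (rr s t 0 f4) = rr t s 0 f4 := by rw [← rc, Complex.conj_conj]
    simpa only [map_mul, map_one, rc, rc'] using this
  have hmod : rr t s 0 true * rr t s 0 true * rr t s 1 true * rr t s 2 false * rr s t 0 f4 = 1 →
      rr s t 0 true * rr s t 0 true * rr s t 1 true * rr s t 2 false * rr t s 0 f4 = 1 → False := by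
    intro a1 a2
    have a3 := congrArg₂ (· * ·) a1 a2
    obtain ⟨ht0, hs0, hu0, hv0, -⟩ := hG
    have : r ^ 2 = 1 := by
      cases f4
      · have : ((1 + t) * (1 + s)) ^ 2 = 1 := by
          refine Eq.trans ?_ (a3.trans (mul_one 1))
          simp only [rr]; field_simp
        rw [hR] at this
        have h4 : (r ^ 2) ^ 2 = 1 := by exact_mod_cast this
        nlinarith [sq_nonneg r]
      · have : ((1 + t) * (1 + s)) ^ 4 = 1 := by
          refine Eq.trans ?_ (a3.trans (mul_one 1))
          simp only [rr]; field_simp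
        rw [hR] at this
        have h4 : (r ^ 2) ^ 4 = 1 := by exact_mod_cast this
        exact (pow_eq_one_iff_of_nonneg (by positivity) (by norm_num)).1 h4
    apply r1; rw [hR, this]; simp
  rcases hb with hb | hb | hb | hb | hb | hb <;> obtain ⟨rfl, rfl, rfl, rfl⟩ := hb
  · obtain ⟨c1, c2⟩ := arr0 hG f0 f1 f2 f3 hE hE2
    rw [hP, hR] at c1 c2
    have c1' : p ^ 2 * (1 - r ^ 2) - r ^ 2 = 0 := by exact_mod_cast c1
    have c2' : (1 - r ^ 2) ^ 2 - p ^ 2 * r ^ 2 = 0 := by exact_mod_cast c2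
    have c3 : 0 < 1 - r ^ 2 := by
      by_contra hc
      nlinarith [sq_nonneg p, mul_nonneg (sq_nonneg p) (not_lt.1 hc |> sub_nonneg.2), pow_pos r0 2]
    have c4 : 1 - r ^ 2 = p * r := by
      have : (1 - r ^ 2) ^ 2 = (p * r) ^ 2 := by linear_combination c2'
      exact (pow_left_inj₀ c3.le (by positivity) (by norm_num)).1 this
    apply k7
    linear_combination Real.sin B ^ 2 * c4
  · obtain ⟨rfl, rfl, rfl, rfl⟩ := arr1 hG f0 f1 f2 f3 hE hE2
    exact hmod (by linear_combination hprod) (by linear_combination hprod2)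
  · obtain ⟨rfl, rfl, rfl, rfl⟩ := arr2 hG f0 f1 f2 f3 hE hE2
    exact hmod (by linear_combination hprod) (by linear_combination hprod2)
  · obtain ⟨rfl, rfl, rfl, rfl⟩ := arr3 hG f0 f1 f2 f3 hE hE2
    exact hmod (by linear_combination hprod) (by linear_combination hprod2)
  · obtain ⟨rfl, rfl, rfl, rfl⟩ := arr4 hG f0 f1 f2 f3 hE hE2
    exact hmod (by linear_combination hprod) (by linear_combination hprod2)
  · obtain ⟨c1, c2⟩ := arr5 hG f0 f1 f2 f3 hE hE2
    rw [hP, hR] at c1 c2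
    have c1' : p ^ 2 * (r ^ 2 - 1) - r ^ 2 = 0 := by exact_mod_cast c1
    have c2' : (r ^ 2 - 1) ^ 2 - p ^ 2 = 0 := by exact_mod_cast c2
    have c3 : 0 < r ^ 2 - 1 := by
      by_contra hc
      nlinarith [sq_nonneg p, mul_nonneg (sq_nonneg p) (not_lt.1 hc |> sub_nonneg.2), pow_pos r0 2]
    have c4 : r ^ 2 - 1 = p := by
      have : (r ^ 2 - 1) ^ 2 = p ^ 2 := by linear_combination c2'
      exact (pow_left_inj₀ c3.le p0.le (by norm_num)).1 this
    apply k8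
    linear_combination Real.sin B ^ 2 * c4


def sg (b : Bool) : ℤ := if b then 1 else -1

lemma other_two (x y z u v w : Fin 3) (h1 : x ≠ y) (h2 : x ≠ z) (h3 : y ≠ z) (h4 : u ≠ v)
    (h5 : u ≠ w) (h6 : v ≠ w) : (v = x → (u = y ∧ w = z) ∨ (u = z ∧ w = y)) ∧
    (v = y → (u = x ∧ w = z) ∨ (u = z ∧ w = x)) ∧
    (v = z → (u = x ∧ w = y) ∨ (u = y ∧ w = x)) := by omega

lemma rv_rr {α : Fin 3 → ℝ} {x y z : Fin 3} (h1 : x ≠ y) (h2 : x ≠ z) (h3 : y ≠ z)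
    (hA : Real.sin (α x) ≠ 0) (hB : Real.sin (α y) ≠ 0) (hC : Real.sin (α z) ≠ 0)
    (h : α x + α y + α z = Real.pi) (t s : ℂ) (ht : t = rv (-1) (α x) (α z) (α y))
    (hs : s = rv 1 (α x) (α z) (α y)) (τ : Equiv.Perm (Fin 3)) (c : Fin 3)
    (hc : τ 1 = ![x, y, z] c) :
    ∃ f, rv (-1) (α (τ 0)) (α (τ 1)) (α (τ 2)) = rr t s c f := by
  obtain ⟨v1, v2, v3, v4, v5, v6⟩ := rr_vals hA hB hC h t s ht hs
  obtain ⟨o1, o2, o3⟩ := other_two x y z (τ 0) (τ 1) (τ 2) h1 h2 h3 (by simp) (by simp) (by simp)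
  fin_cases c
  · have hc' : τ 1 = x := hc
    rcases o1 hc' with ⟨a, b⟩ | ⟨a, b⟩
    · exact ⟨false, by rw [a, b, hc']; exact v1.symm⟩
    · exact ⟨true, by rw [a, b, hc']; exact v2.symm⟩
  · have hc' : τ 1 = y := hc
    rcases o2 hc' with ⟨a, b⟩ | ⟨a, b⟩
    · exact ⟨false, by rw [a, b, hc']; exact v3.symm⟩
    · exact ⟨true, by rw [a, b, hc']; exact v4.symm⟩
  · have hc' : τ 1 = z := hc
    rcases o3 hc' with ⟨a, b⟩ | ⟨a, b⟩
    · exact ⟨false, by rw [a, b, hc']; exact v5.symm⟩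
    · exact ⟨true, by rw [a, b, hc']; exact v6.symm⟩

lemma perm_rel {α : Fin 3 → ℝ} (hsum : α 0 + α 1 + α 2 = Real.pi)
    (hr : NoRel (α 0) (α 1) (α 2)) {x y z : Fin 3} (h1 : x ≠ y) (h2 : x ≠ z) (h3 : y ≠ z) :
    α x + α y + α z = Real.pi ∧ NoRel (α x) (α y) (α z) := by
  have key : ∀ x y z : Fin 3, x ≠ y → x ≠ z → y ≠ z → (x = 0 ∧ y = 1 ∧ z = 2) ∨
    (x = 0 ∧ y = 2 ∧ z = 1) ∨ (x = 1 ∧ y = 0 ∧ z = 2) ∨ (x = 1 ∧ y = 2 ∧ z = 0) ∨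
    (x = 2 ∧ y = 0 ∧ z = 1) ∨ (x = 2 ∧ y = 1 ∧ z = 0) := by decide
  rcases key x y z h1 h2 h3 with h | h | h | h | h | h <;> obtain ⟨rfl, rfl, rfl⟩ := h
  · exact ⟨by linarith, hr⟩
  · refine ⟨by linarith, fun a b c m ha hb hc hm e => ?_⟩
    have := hr a c b m ha hc hb hm (by linarith); omega
  · refine ⟨by linarith, fun a b c m ha hb hc hm e => ?_⟩
    have := hr b a c m hb ha hc hm (by linarith); omega
  · refine ⟨by linarith, fun a b c m ha hb hc hm e => ?_⟩
    have := hr c a b m hc ha hb hm (by linarith); omega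
  · refine ⟨by linarith, fun a b c m ha hb hc hm e => ?_⟩
    have := hr b c a m hb hc ha hm (by linarith); omega
  · refine ⟨by linarith, fun a b c m ha hb hc hm e => ?_⟩
    have := hr c b a m hc hb ha hm (by linarith); omega

def Good (α : Fin 3 → ℝ) : Prop :=
  (∀ k, 0 < α k) ∧ α 0 + α 1 + α 2 = Real.pi ∧ NoRel (α 0) (α 1) (α 2)

lemma Good.lt {α : Fin 3 → ℝ} (h : Good α) (k : Fin 3) : α k < Real.pi := by
  obtain ⟨h1, h2, -⟩ := h
  have := h1 0; have := h1 1; have := h1 2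
  fin_cases k <;> simp <;> linarith

lemma Good.sin_pos {α : Fin 3 → ℝ} (h : Good α) (k : Fin 3) : 0 < Real.sin (α k) :=
  Real.sin_pos_of_pos_of_lt_pi (h.1 k) (h.lt k)

noncomputable def rs (α : Fin 3 → ℝ) (g : Bool) (τ : Equiv.Perm (Fin 3)) : ℂ :=
  rv (sg g : ℝ) (α (τ 0)) (α (τ 1)) (α (τ 2))

lemma exactN {α : Fin 3 → ℝ} (hG : Good α) (σ : Fin 5 → Equiv.Perm (Fin 3)) (g : Fin 5 → Bool)
    (e : Fin 5 → ℂ) (he : e 0 ≠ 0) (hstep : ∀ i, e (i + 1) = rs α (g i) (σ i) * e i)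
    (hsum : ∑ i, e i = 0) (g0 : g 0 = false) (g1 : g 1 = false) (g2 : g 2 = false)
    (g3 : g 3 = false) (g4 : g 4 = true) {y z : Fin 3} (h1 : σ 4 1 ≠ y) (h2 : σ 4 1 ≠ z)
    (h3 : y ≠ z) (hb : Arr (σ 0 1) (σ 1 1) (σ 2 1) (σ 3 1) (σ 4 1) y z) : False := by
  obtain ⟨x, hx⟩ : ∃ x, x = σ 4 1 := ⟨_, rfl⟩
  rw [← hx] at h1 h2 hb
  obtain ⟨c0, c1, c2, c3, hc, e0, e1, e2, e3⟩ : ∃ c0 c1 c2 c3, Arr c0 c1 c2 c3 0 1 2 ∧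
      σ 0 1 = ![x, y, z] c0 ∧ σ 1 1 = ![x, y, z] c1 ∧ σ 2 1 = ![x, y, z] c2 ∧
      σ 3 1 = ![x, y, z] c3 := by
    rcases hb with hb | hb | hb | hb | hb | hb <;> obtain ⟨a0, a1, a2, a3⟩ := hb
    · exact ⟨0, 0, 1, 2, by decide, a0, a1, a2, a3⟩
    · exact ⟨0, 1, 0, 2, by decide, a0, a1, a2, a3⟩
    · exact ⟨0, 1, 2, 0, by decide, a0, a1, a2, a3⟩
    · exact ⟨1, 0, 0, 2, by decide, a0, a1, a2, a3⟩
    · exact ⟨1, 0, 2, 0, by decide, a0, a1, a2, a3⟩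
    · exact ⟨1, 2, 0, 0, by decide, a0, a1, a2, a3⟩
  obtain ⟨hs', hr'⟩ := perm_rel hG.2.1 hG.2.2 h1 h2 h3
  obtain ⟨t, ht⟩ : ∃ t, t = rv (-1) (α x) (α z) (α y) := ⟨_, rfl⟩
  have hs : (starRingEnd ℂ) t = rv 1 (α x) (α z) (α y) := by rw [ht, rv_conj, neg_neg]
  have R := rv_rr h1 h2 h3 (hG.sin_pos x).ne' (hG.sin_pos y).ne' (hG.sin_pos z).ne' hs' t _ ht hs
  obtain ⟨f0, k0⟩ := R (σ 0) c0 e0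
  obtain ⟨f1, k1⟩ := R (σ 1) c1 e1
  obtain ⟨f2, k2⟩ := R (σ 2) c2 e2
  obtain ⟨f3, k3⟩ := R (σ 3) c3 e3
  obtain ⟨f4, k4⟩ := R (σ 4) 0 hx.symm
  have k4' := congrArg (starRingEnd ℂ) k4
  rw [rr_conj, rv_conj, neg_neg] at k4'
  have s0 : e 1 = rs α (g 0) (σ 0) * e 0 := hstep 0
  have s1 : e 2 = rs α (g 1) (σ 1) * e 1 := hstep 1
  have s2 : e 3 = rs α (g 2) (σ 2) * e 2 := hstep 2
  have s3 : e 4 = rs α (g 3) (σ 3) * e 3 := hstep 3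
  have s4 : e 0 = rs α (g 4) (σ 4) * e 4 := hstep 4
  simp only [rs, sg, g0, g1, g2, g3, g4, if_true, Bool.false_eq_true, if_false, Int.cast_neg,
    Int.cast_one, k0, k1, k2, k3, k4'] at s0 s1 s2 s3 s4
  rw [Fin.sum_univ_five] at hsum
  refine coreABC (hG.1 x) (hG.1 y) (hG.1 z) hs' hr' t ht hc f0 f1 f2 f3 f4 ?_ ?_
  · apply mul_left_cancel₀ he
    rw [EE]
    linear_combination hsum - s0 * (1 + rr t ((starRingEnd ℂ) t) c1 f1 * (1 +
      rr t ((starRingEnd ℂ) t) c2 f2 * (1 + rr t ((starRingEnd ℂ) t) c3 f3))) - s1 * (1 +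
      rr t ((starRingEnd ℂ) t) c2 f2 * (1 + rr t ((starRingEnd ℂ) t) c3 f3)) -
      s2 * (1 + rr t ((starRingEnd ℂ) t) c3 f3) - s3
  · apply mul_left_cancel₀ he
    rw [s3, s2, s1, s0] at s4
    linear_combination -s4

lemma comb1 (b0 b1 b2 b3 b4 : Fin 3)
    (h : ∀ k : Fin 3, (if b4 = k then (1 : ℤ) else 0) - (if b0 = k then 1 else 0) -
      (if b1 = k then 1 else 0) - (if b2 = k then 1 else 0) - (if b3 = k then 1 else 0) = -1) :
    ∃ y z, b4 ≠ y ∧ b4 ≠ z ∧ y ≠ z ∧ Arr b0 b1 b2 b3 b4 y z := by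
  revert b0 b1 b2 b3 b4
  decide +kernel

def NN (σ : Fin 5 → Equiv.Perm (Fin 3)) (g : Fin 5 → Bool) (k : Fin 3) : ℤ :=
  ∑ i, if σ i 1 = k then sg (g i) else 0

lemma comb2 : ∀ g : Fin 5 → Bool, ∑ i, sg (g i) = -3 →
    ∃ j : Fin 5, g (j + 1) = false ∧ g (j + 2) = false ∧ g (j + 3) = false ∧
      g (j + 4) = false ∧ g j = true := by
  decide +kernel

lemma NN_sum (σ : Fin 5 → Equiv.Perm (Fin 3)) (g : Fin 5 → Bool) :
    NN σ g 0 + NN σ g 1 + NN σ g 2 = ∑ i, sg (g i) := by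
  rw [NN, NN, NN, ← Finset.sum_add_distrib, ← Finset.sum_add_distrib]
  refine Finset.sum_congr rfl fun i _ => ?_
  generalize σ i 1 = b
  fin_cases b <;> simp

lemma exactM {α : Fin 3 → ℝ} (hG : Good α) (σ : Fin 5 → Equiv.Perm (Fin 3)) (g : Fin 5 → Bool)
    (e : Fin 5 → ℂ) (he : ∀ i, e i ≠ 0) (hstep : ∀ i, e (i + 1) = rs α (g i) (σ i) * e i)
    (hsum : ∑ i, e i = 0) (hN : ∀ k, NN σ g k = -1) : False := by
  obtain ⟨j, j1, j2, j3, j4, j5⟩ := comb2 g (by rw [← NN_sum σ, hN, hN, hN]; rfl)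
  have hN' : ∀ k, NN (fun i => σ (i + (j + 1))) (fun i => g (i + (j + 1))) k = -1 := by
    intro k
    rw [← hN k, NN, NN]
    exact Equiv.sum_comp (Equiv.addRight (j + 1)) (fun i => if σ i 1 = k then sg (g i) else 0)
  have a0 : 0 + (j + 1) = j + 1 := (by decide : ∀ j : Fin 5, 0 + (j + 1) = j + 1) j
  have a1 : 1 + (j + 1) = j + 2 := (by decide : ∀ j : Fin 5, 1 + (j + 1) = j + 2) j
  have a2 : 2 + (j + 1) = j + 3 := (by decide : ∀ j : Fin 5, 2 + (j + 1) = j + 3) j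
  have a3 : 3 + (j + 1) = j + 4 := (by decide : ∀ j : Fin 5, 3 + (j + 1) = j + 4) j
  have a4 : 4 + (j + 1) = j := (by decide : ∀ j : Fin 5, 4 + (j + 1) = j) j
  obtain ⟨y, z, h1, h2, h3, h4⟩ := comb1 (σ (j+1) 1) (σ (j+2) 1) (σ (j+3) 1) (σ (j+4) 1) (σ j 1) (by
    intro k
    rw [← hN' k]
    simp only [NN, Fin.sum_univ_five, a0, a1, a2, a3, a4, j1, j2, j3, j4, j5, sg, if_true,
      Bool.false_eq_true, if_false]
    split_ifs <;> rfl)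
  refine exactN hG (fun i => σ (i + (j + 1))) (fun i => g (i + (j + 1))) (fun i => e (i + (j + 1)))
    (he _) (fun i => ?_) ?_ (by simpa only [a0]) (by simpa only [a1]) (by simpa only [a2])
    (by simpa only [a3]) (by simpa only [a4]) (y := y) (z := z) (by simpa only [a4])
    (by simpa only [a4]) h3 (by simpa only [a0, a1, a2, a3, a4])
  · have := hstep (i + (j + 1))
    rw [← this, add_right_comm]
  · rw [← hsum]
    exact Equiv.sum_comp (Equiv.addRight (j + 1)) e


lemma NN_neg (σ : Fin 5 → Equiv.Perm (Fin 3)) (g : Fin 5 → Bool) (k : Fin 3) :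
    NN σ (fun i => !g i) k = - NN σ g k := by
  rw [NN, NN, ← Finset.sum_neg_distrib]
  refine Finset.sum_congr rfl fun i _ => ?_
  cases g i <;> split_ifs <;> simp [sg]

lemma NN_abs (σ : Fin 5 → Equiv.Perm (Fin 3)) (g : Fin 5 → Bool) (k : Fin 3) : |NN σ g k| ≤ 5 := by
  rw [NN]
  refine (Finset.abs_sum_le_sum_abs _ _).trans ?_
  refine (Finset.sum_le_card_nsmul _ _ 1 fun i _ => ?_).trans (by simp)
  split_ifs <;> cases g i <;> simp [sg]

lemma sg_abs (b : Bool) : |((sg b : ℤ) : ℝ)| = 1 := by cases b <;> simp [sg]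

lemma exact5 {α : Fin 3 → ℝ} (hG : Good α) (σ : Fin 5 → Equiv.Perm (Fin 3)) (g : Fin 5 → Bool)
    (e : Fin 5 → ℂ) (he : ∀ i, e i ≠ 0) (hstep : ∀ i, e (i + 1) = rs α (g i) (σ i) * e i)
    (hsum : ∑ i, e i = 0) : False := by
  have hprod : ∏ i, rs α (g i) (σ i) = 1 := by
    have h1 : ∏ i, e (i + 1) = ∏ i, e i := Equiv.prod_comp (Equiv.addRight (1 : Fin 5)) e
    simp only [hstep, Finset.prod_mul_distrib] at h1
    have h2 : ∏ i, e i ≠ 0 := Finset.prod_ne_zero_iff.2 fun i _ => he i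
    exact mul_right_cancel₀ h2 (by rw [h1, one_mul])
  obtain ⟨X, hX⟩ : ∃ X : ℝ, X = ∑ i, (sg (g i) : ℝ) * α (σ i 1) := ⟨_, rfl⟩
  obtain ⟨ρ, hρ⟩ : ∃ ρ : ℝ, ρ = ∏ i, Real.sin (α (σ i 0)) / Real.sin (α (σ i 2)) := ⟨_, rfl⟩
  have hρ0 : 0 < ρ := by
    rw [hρ]; exact Finset.prod_pos fun i _ => div_pos (hG.sin_pos _) (hG.sin_pos _)
  have h3 : -(ρ : ℂ) * (Real.cos X + Real.sin X * Complex.I) = 1 := by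
    rw [← hprod, Complex.ofReal_cos, Complex.ofReal_sin, ← Complex.exp_mul_I, hX, hρ]
    simp only [rs, rv, Finset.prod_mul_distrib, ← Complex.exp_sum, ← Finset.sum_mul]
    rw [Finset.prod_neg]
    push_cast
    simp
    norm_num
  have hre := congrArg Complex.re h3
  have him := congrArg Complex.im h3
  simp [← Complex.ofReal_cos, ← Complex.ofReal_sin, hρ0.ne'] at hre him
  obtain ⟨n, hn⟩ := Real.sin_eq_zero_iff.1 him
  have hodd : Odd n := by
    by_contra hc
    rw [Int.not_odd_iff_even] at hc
    rw [← hn, Real.cos_int_mul_pi, hc.neg_one_zpow] at hre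
    linarith
  have hXN : X = NN σ g 0 * α 0 + NN σ g 1 * α 1 + NN σ g 2 * α 2 := by
    rw [hX, NN, NN, NN]
    push_cast
    rw [Finset.sum_mul, Finset.sum_mul, Finset.sum_mul, ← Finset.sum_add_distrib,
      ← Finset.sum_add_distrib]
    refine Finset.sum_congr rfl fun i _ => ?_
    generalize σ i 1 = b
    fin_cases b <;> simp
  have hXlt : |X| < 5 * Real.pi := by
    rw [hX]
    refine (Finset.abs_sum_le_sum_abs _ _).trans_lt ?_
    calc _ < ∑ i : Fin 5, Real.pi := Finset.sum_lt_sum_of_nonempty ⟨0, by simp⟩ fun i _ => by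
          rw [abs_mul, sg_abs, one_mul, abs_of_pos (hG.1 _)]; exact hG.lt _
      _ = _ := by simp
  have hn5 : |n| ≤ 5 := by
    rw [← hn, abs_mul, abs_of_pos Real.pi_pos] at hXlt
    have : |(n : ℝ)| < 5 := lt_of_mul_lt_mul_right hXlt Real.pi_pos.le
    have : |n| < 5 := by exact_mod_cast this
    exact this.le
  obtain ⟨e1, e2, e3⟩ := hG.2.2 (NN σ g 0) (NN σ g 1) (NN σ g 2) (-n) (NN_abs _ _ _) (NN_abs _ _ _)
    (NN_abs _ _ _) (by rwa [abs_neg]) (by push_cast; linarith)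
  have hs5 : |∑ i, sg (g i)| ≤ 5 := by
    refine (Finset.abs_sum_le_sum_abs _ _).trans ?_
    refine (Finset.sum_le_card_nsmul _ _ 1 fun i _ => ?_).trans (by simp)
    cases g i <;> simp [sg]
  rw [← NN_sum σ g] at hs5
  rw [abs_le] at hs5
  obtain ⟨m, hm⟩ := hodd
  have hcase : NN σ g 0 = -1 ∨ NN σ g 0 = 1 := by omega
  rcases hcase with h | h
  · exact exactM hG σ g e he hstep hsum fun k => by fin_cases k <;> simp <;> omega
  · refine exactM hG σ (fun i => !g i) (fun i => (starRingEnd ℂ) (e i)) (fun i => by simpa using he i)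
      (fun i => ?_) (by rw [← map_sum, hsum, map_zero]) (fun k => ?_)
    · rw [hstep, map_mul, rs, rv_conj, rs]
      congr 2
      cases g i <;> simp [sg]
    · rw [NN_neg]
      fin_cases k <;> simp <;> omega


section Geo
open Filter Topology

noncomputable def φ : Plane ≃ₗᵢ[ℝ] ℂ := Complex.orthonormalBasisOneI.repr.symm

lemma range3 (a b c : Plane) : Set.range ![a, b, c] = {a, b, c} := by
  ext x; simp [eq_comm]; tauto

lemma tri_facts {p : Fin 3 → Plane} (h : IsTriangle p) : (∀ k, 0 < triAngle p k) ∧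
    triAngle p 0 + triAngle p 1 + triAngle p 2 = Real.pi := by
  have hp : p = ![p 0, p 1, p 2] := by ext i; fin_cases i <;> rfl
  have h' : ¬ Collinear ℝ {p 0, p 1, p 2} := by
    rw [← range3, ← hp]; exact h
  have e0 : triAngle p 0 = ∠ (p 1) (p 0) (p 2) := rfl
  have e1 : triAngle p 1 = ∠ (p 2) (p 1) (p 0) := rfl
  have e2 : triAngle p 2 = ∠ (p 0) (p 2) (p 1) := rfl
  have hc1 : ¬ Collinear ℝ {p 1, p 0, p 2} := by rwa [Set.insert_comm]
  have hc2 : ¬ Collinear ℝ {p 2, p 1, p 0} := by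
    rw [Set.insert_comm, Set.pair_comm, Set.insert_comm]; exact h'
  have hc3 : ¬ Collinear ℝ {p 0, p 2, p 1} := by rw [Set.pair_comm]; exact h'
  have pos : ∀ a b c : Plane, ¬ Collinear ℝ {a, b, c} → 0 < ∠ a b c := by
    intro a b c hn
    refine lt_of_le_of_ne (EuclideanGeometry.angle_nonneg _ _ _) fun h0 => hn ?_
    exact EuclideanGeometry.collinear_of_angle_eq_zero h0.symm
  refine ⟨fun k => ?_, ?_⟩
  · fin_cases k
    · exact pos _ _ _ hc1
    · exact pos _ _ _ hc2
    · exact pos _ _ _ hc3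
  · rw [e0, e1, e2]
    have := EuclideanGeometry.angle_add_angle_add_angle_eq_pi (p₁ := p 1) (p₂ := p 0) (p 2)
      (ne₁₂_of_not_collinear h')
    rw [EuclideanGeometry.angle_comm (p 2) (p 1) (p 0)] at *
    linarith

lemma angle_phi (a b c : Plane) (h1 : a ≠ b) (h2 : c ≠ b) :
    ∠ a b c = |((φ a - φ b) / (φ c - φ b)).arg| := by
  rw [← Complex.angle_eq_abs_arg (sub_ne_zero.2 (φ.injective.ne h1))
    (sub_ne_zero.2 (φ.injective.ne h2)), ← map_sub, ← map_sub, EuclideanGeometry.angle]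
  exact (φ.toLinearIsometry.angle_map _ _).symm

lemma abs_sg (x : ℝ) : ∃ g : Bool, x = sg g * |x| := by
  rcases abs_choice x with h | h
  · exact ⟨true, by rw [h]; simp [sg]⟩
  · exact ⟨false, by rw [h]; simp [sg]⟩

lemma tri_ratio {a b c : Plane} (h : IsTriangle ![a, b, c]) : ∃ g : Bool,
    φ c - φ b = rv (sg g : ℝ) (triAngle ![a, b, c] 0) (triAngle ![a, b, c] 1)
      (triAngle ![a, b, c] 2) * (φ b - φ a) := by
  obtain ⟨hpos, hsum⟩ := tri_facts h
  have h' : ¬ Collinear ℝ {a, b, c} := by rw [← range3]; exact h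
  have hab := ne₁₂_of_not_collinear h'
  have hbc := ne₂₃_of_not_collinear h'
  have n1 : φ a - φ b ≠ 0 := sub_ne_zero.2 (φ.injective.ne hab)
  obtain ⟨β0, e0⟩ : ∃ β, β = triAngle ![a, b, c] 0 := ⟨_, rfl⟩
  obtain ⟨β1, e1⟩ : ∃ β, β = triAngle ![a, b, c] 1 := ⟨_, rfl⟩
  obtain ⟨β2, e2⟩ : ∃ β, β = triAngle ![a, b, c] 2 := ⟨_, rfl⟩
  have e0' : β0 = ∠ b a c := e0
  have e1' : β1 = ∠ c b a := e1
  have e2' : β2 = ∠ a c b := e2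
  have q0 := hpos 0
  have q1 := hpos 1
  have q2 := hpos 2
  rw [← e0] at q0
  rw [← e1] at q1
  rw [← e2] at q2
  rw [← e0, ← e1, ← e2] at hsum ⊢
  have s2 : 0 < Real.sin β2 := Real.sin_pos_of_pos_of_lt_pi q2 (by linarith)
  obtain ⟨z, hz⟩ : ∃ z, z = (φ c - φ b) / (φ a - φ b) := ⟨_, rfl⟩
  have hz1 : β1 = |z.arg| := by rw [e1', angle_phi _ _ _ hbc.symm hab, hz]
  obtain ⟨g, hg⟩ := abs_sg z.arg
  have hnorm : ‖z‖ = Real.sin β0 / Real.sin β2 := by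
    rw [hz, norm_div, ← map_sub, ← map_sub, φ.norm_map, φ.norm_map, ← dist_eq_norm, ← dist_eq_norm]
    have hl := EuclideanGeometry.law_sin c a b
    rw [EuclideanGeometry.angle_comm c a b, ← e0', EuclideanGeometry.angle_comm b c a, ← e2',
      dist_comm b c] at hl
    have : dist a b ≠ 0 := dist_ne_zero.2 hab
    rw [div_eq_div_iff this s2.ne']
    linarith
  refine ⟨g, ?_⟩
  rw [rv, ← hnorm, hz1, ← hg]
  have h3 := Complex.norm_mul_exp_arg_mul_I z
  have h4 : φ c - φ b = z * (φ a - φ b) := by rw [hz]; field_simp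
  rw [h4]
  linear_combination -(φ a - φ b) * h3

lemma three_angles {u v w : ℂ} (hu : u ≠ 0) (hv : v ≠ 0) (hw : w ≠ 0) :
    ∃ (s1 s2 s3 : Bool) (k : Fin 3), (sg s1 : ℝ) * |(u / v).arg| + (sg s2 : ℝ) * |(u / w).arg| +
      (sg s3 : ℝ) * |(v / w).arg| + (2 * ((k : ℕ) : ℤ) - 2 : ℤ) * Real.pi = 0 := by
  have h1 := Complex.arg_mul_coe_angle (div_ne_zero hu hv) (div_ne_zero hv hw)
  rw [div_mul_div_cancel₀ hv, ← Real.Angle.coe_add, Real.Angle.angle_eq_iff_two_pi_dvd_sub] at h1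
  obtain ⟨k, hk⟩ := h1
  obtain ⟨s1, q1⟩ := abs_sg (u / v).arg
  obtain ⟨s2, q2⟩ := abs_sg (-(u / w).arg)
  obtain ⟨s3, q3⟩ := abs_sg (v / w).arg
  rw [abs_neg] at q2
  have b1 := abs_le.1 (Complex.abs_arg_le_pi (u / v))
  have b2 := abs_le.1 (Complex.abs_arg_le_pi (u / w))
  have b3 := abs_le.1 (Complex.abs_arg_le_pi (v / w))
  have hp := Real.pi_pos
  have k1 : k < 2 := by
    have : (k : ℝ) < 2 := by nlinarith
    exact_mod_cast this
  have k2 : -2 < k := by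
    have : (-2 : ℝ) < k := by nlinarith
    exact_mod_cast this
  have hfin : ∃ j : Fin 3, (2 * ((j : ℕ) : ℤ) - 2 : ℤ) = 2 * k := by
    have : k = -1 ∨ k = 0 ∨ k = 1 := by omega
    rcases this with rfl | rfl | rfl
    · exact ⟨0, by norm_num⟩
    · exact ⟨1, by norm_num⟩
    · exact ⟨2, by norm_num⟩
  obtain ⟨j, hj⟩ := hfin
  refine ⟨s1, s2, s3, j, ?_⟩
  rw [← q1, ← q2, ← q3, hj]
  push_cast
  linarith

lemma formA {α : Fin 3 → ℝ} (hG : Good α) (s1 s2 s3 : Bool) (k a b c : Fin 3) :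
    (sg s1 : ℝ) * α a + (sg s2 : ℝ) * α b +
      (sg s3 : ℝ) * α c + (2 * ((k : ℕ) : ℤ) - 2 : ℤ) * Real.pi ≠ 0 := by
  intro h
  obtain ⟨N, hN⟩ : ∃ N : Fin 3 → ℤ, N = fun j => (if a = j then sg s1 else 0) +
    (if b = j then sg s2 else 0) + (if c = j then sg s3 else 0) := ⟨_, rfl⟩
  have hsg : ∀ s, sg s = 1 ∨ sg s = -1 := by decide
  have p1 := hsg s1
  have p2 := hsg s2
  have p3 := hsg s3
  have hb : ∀ j, |N j| ≤ 5 := by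
    intro j
    rw [hN, abs_le]
    simp only
    split_ifs <;> omega
  have hs : N 0 + N 1 + N 2 = sg s1 + sg s2 + sg s3 := by
    rw [hN]
    fin_cases a <;> fin_cases b <;> fin_cases c <;> simp <;> ring
  have hv : (N 0 : ℝ) * α 0 + N 1 * α 1 + N 2 * α 2 = (sg s1 : ℝ) * α a + (sg s2 : ℝ) * α b +
      (sg s3 : ℝ) * α c := by
    rw [hN]
    fin_cases a <;> fin_cases b <;> fin_cases c <;> simp <;> ring
  have hk : |(2 * ((k : ℕ) : ℤ) - 2 : ℤ)| ≤ 5 := by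
    rw [abs_le]; omega
  have := hG.2.2 (N 0) (N 1) (N 2) _ (hb _) (hb _) (hb _) hk (by rw [hv]; exact h)
  omega

lemma evA {α : Fin 3 → ℝ} (hG : Good α) : ∀ᶠ ε in 𝓝[>] (0 : ℝ), ∀ (s1 s2 s3 : Bool)
    (k a b c : Fin 3), 3 * ε < |(sg s1 : ℝ) * α a + (sg s2 : ℝ) * α b +
      (sg s3 : ℝ) * α c + (2 * ((k : ℕ) : ℤ) - 2 : ℤ) * Real.pi| := by
  simp only [eventually_all]
  intro s1 s2 s3 k a b c
  have h := abs_pos.2 (formA hG s1 s2 s3 k a b c)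
  have : ∀ᶠ ε in 𝓝[>] (0 : ℝ), ε < |(sg s1 : ℝ) * α a + (sg s2 : ℝ) * α b +
      (sg s3 : ℝ) * α c + (2 * ((k : ℕ) : ℤ) - 2 : ℤ) * Real.pi| / 3 :=
    nhdsWithin_le_nhds (eventually_lt_nhds (by positivity))
  filter_upwards [this] with ε hε
  linarith

lemma partA {T : Fin 3 → Plane} {ε : ℝ} (hε : ∀ (s1 s2 s3 : Bool)
    (k a b c : Fin 3), 3 * ε < |(sg s1 : ℝ) * triAngle T a + (sg s2 : ℝ) * triAngle T b +
      (sg s3 : ℝ) * triAngle T c + (2 * ((k : ℕ) : ℤ) - 2 : ℤ) * Real.pi|)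
    {x₁ x₂ x₃ x₄ : Plane} (n1 : x₁ ≠ x₄) (n2 : x₂ ≠ x₄) (n3 : x₃ ≠ x₄)
    (h1 : TripleEpsSimilar ε T x₁ x₂ x₄) (h2 : TripleEpsSimilar ε T x₁ x₃ x₄)
    (h3 : TripleEpsSimilar ε T x₂ x₃ x₄) : False := by
  obtain ⟨-, σ1, a1⟩ := h1
  obtain ⟨-, σ2, a2⟩ := h2
  obtain ⟨-, σ3, a3⟩ := h3
  have b1 : |∠ x₁ x₄ x₂ - triAngle T (σ1 2)| < ε := a1 2
  have b2 : |∠ x₁ x₄ x₃ - triAngle T (σ2 2)| < ε := a2 2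
  have b3 : |∠ x₂ x₄ x₃ - triAngle T (σ3 2)| < ε := a3 2
  rw [angle_phi _ _ _ n1 n2] at b1
  rw [angle_phi _ _ _ n1 n3] at b2
  rw [angle_phi _ _ _ n2 n3] at b3
  obtain ⟨s1, s2, s3, k, hk⟩ := three_angles (sub_ne_zero.2 (φ.injective.ne n1))
    (sub_ne_zero.2 (φ.injective.ne n2)) (sub_ne_zero.2 (φ.injective.ne n3))
  have := hε s1 s2 s3 k (σ1 2) (σ2 2) (σ3 2)
  revert b1 b2 b3 hk
  generalize |((φ x₁ - φ x₄) / (φ x₂ - φ x₄)).arg| = y1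
  generalize |((φ x₁ - φ x₄) / (φ x₃ - φ x₄)).arg| = y2
  generalize |((φ x₂ - φ x₄) / (φ x₃ - φ x₄)).arg| = y3
  intro b1 b2 b3 hk
  have key : ∀ (s : Bool) (y α : ℝ), |y - α| < ε → |(sg s : ℝ) * (α - y)| < ε := by
    intro s y α h
    rwa [abs_mul, sg_abs, one_mul, abs_sub_comm]
  have c1 := abs_lt.1 (key s1 _ _ b1)
  have c2 := abs_lt.1 (key s2 _ _ b2)
  have c3 := abs_lt.1 (key s3 _ _ b3)
  rcases abs_cases ((sg s1 : ℝ) * triAngle T (σ1 2) + (sg s2 : ℝ) * triAngle T (σ2 2) +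
      (sg s3 : ℝ) * triAngle T (σ3 2) + (2 * ((k : ℕ) : ℤ) - 2 : ℤ) * Real.pi) with h | h <;>
  linarith [h.1]


lemma rv_cont {β : Fin 5 → Fin 3 → ℝ} (g : ℝ) (i : Fin 5) (h : Real.sin (β i 2) ≠ 0) :
    ContinuousAt (fun β : Fin 5 → Fin 3 → ℝ => rv g (β i 0) (β i 1) (β i 2)) β := by
  have c : ∀ k, ContinuousAt (fun β : Fin 5 → Fin 3 → ℝ => β i k) β := fun k =>
    ((continuous_apply k).comp (continuous_apply i)).continuousAt
  have c1 : ContinuousAt (fun β : Fin 5 → Fin 3 → ℝ => Real.sin (β i 0) / Real.sin (β i 2)) β :=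
    ContinuousAt.div (Real.continuous_sin.continuousAt.comp (c 0))
      (Real.continuous_sin.continuousAt.comp (c 2)) h
  have c2 : ContinuousAt (fun β : Fin 5 → Fin 3 → ℝ => ((g * β i 1 : ℝ) : ℂ) * Complex.I) β :=
    (Complex.continuous_ofReal.continuousAt.comp (continuousAt_const.mul (c 1))).mul
      continuousAt_const
  exact ((Complex.continuous_ofReal.continuousAt.comp c1).neg).mul
    (Complex.continuous_exp.continuousAt.comp c2)

def FF (r : Fin 5 → ℂ) : ℂ × ℂ :=
  (r 0 * r 1 * r 2 * r 3 * r 4 - 1, 1 + r 0 + r 0 * r 1 + r 0 * r 1 * r 2 + r 0 * r 1 * r 2 * r 3)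

lemma FF_ne {α : Fin 3 → ℝ} (hG : Good α) (σ : Fin 5 → Equiv.Perm (Fin 3)) (g : Fin 5 → Bool) :
    FF (fun i => rs α (g i) (σ i)) ≠ 0 := by
  intro h
  obtain ⟨r, hr⟩ : ∃ r : Fin 5 → ℂ, r = fun i => rs α (g i) (σ i) := ⟨_, rfl⟩
  have hr0 : ∀ i, r i ≠ 0 := fun i => by
    rw [hr]; exact rv_ne (hG.sin_pos _).ne' (hG.sin_pos _).ne'
  rw [← hr, FF, Prod.mk_eq_zero] at h
  obtain ⟨h1, h2⟩ := h
  refine exact5 hG σ g ![1, r 0, r 0 * r 1, r 0 * r 1 * r 2, r 0 * r 1 * r 2 * r 3] ?_ ?_ ?_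
  · intro i
    fin_cases i <;> simp [hr0]
  · intro i
    have : rs α (g i) (σ i) = r i := by rw [hr]
    rw [this]
    fin_cases i
    · show r 0 = r 0 * 1
      ring
    · show r 0 * r 1 = r 1 * r 0
      ring
    · show r 0 * r 1 * r 2 = r 2 * (r 0 * r 1)
      ring
    · show r 0 * r 1 * r 2 * r 3 = r 3 * (r 0 * r 1 * r 2)
      ring
    · show 1 = r 4 * (r 0 * r 1 * r 2 * r 3)
      linear_combination -h1
  · rw [Fin.sum_univ_five]
    exact h2

lemma evB {α : Fin 3 → ℝ} (hG : Good α) : ∀ᶠ ε in 𝓝[>] (0 : ℝ),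
    ∀ (σ : Fin 5 → Equiv.Perm (Fin 3)) (g : Fin 5 → Bool), ∀ β : Fin 5 → Fin 3 → ℝ,
      (∀ i k, |β i k - α (σ i k)| < ε) →
      FF (fun i => rv (sg (g i) : ℝ) (β i 0) (β i 1) (β i 2)) ≠ 0 := by
  rw [eventually_all]; intro σ
  rw [eventually_all]; intro g
  obtain ⟨β0, hβ⟩ : ∃ β0 : Fin 5 → Fin 3 → ℝ, β0 = fun i k => α (σ i k) := ⟨_, rfl⟩
  have c : ∀ i, ContinuousAt (fun β : Fin 5 → Fin 3 → ℝ =>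
      rv (sg (g i) : ℝ) (β i 0) (β i 1) (β i 2)) β0 := fun i =>
    rv_cont _ i (by rw [hβ]; exact (hG.sin_pos _).ne')
  have hF : ContinuousAt (fun β : Fin 5 → Fin 3 → ℝ =>
      FF (fun i => rv (sg (g i) : ℝ) (β i 0) (β i 1) (β i 2))) β0 := by
    have c0 := c 0
    have c1 := c 1
    have c2 := c 2
    have c3 := c 3
    have c4 := c 4
    unfold FF
    exact ContinuousAt.prodMk
      (((((c0.mul c1).mul c2).mul c3).mul c4).sub continuousAt_const)
      ((((continuousAt_const.add c0).add (c0.mul c1)).add ((c0.mul c1).mul c2)).add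
        (((c0.mul c1).mul c2).mul c3))
  have hne := hF.eventually_ne (y := 0) (by rw [hβ]; exact FF_ne hG σ g)
  obtain ⟨δ, hδ, hb⟩ := Metric.eventually_nhds_iff.1 hne
  have h1 : ∀ᶠ ε in 𝓝[>] (0 : ℝ), ε < δ := nhdsWithin_le_nhds (eventually_lt_nhds hδ)
  filter_upwards [h1] with ε hε β hβ'
  refine hb ?_
  rw [dist_pi_lt_iff hδ]
  intro i
  rw [dist_pi_lt_iff hδ]
  intro k
  rw [Real.dist_eq, hβ]
  exact (hβ' i k).trans hε

lemma partB {T : Fin 3 → Plane} {ε : ℝ}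
    (hε : ∀ (σ : Fin 5 → Equiv.Perm (Fin 3)) (g : Fin 5 → Bool), ∀ β : Fin 5 → Fin 3 → ℝ,
      (∀ i k, |β i k - triAngle T (σ i k)| < ε) →
      FF (fun i => rv (sg (g i) : ℝ) (β i 0) (β i 1) (β i 2)) ≠ 0)
    {x : Fin 5 → Plane} (hx : Function.Injective x)
    (h : ∀ i, TripleEpsSimilar ε T (x i) (x (i + 1)) (x (i + 2))) : False := by
  have h2 : ∀ i, ∃ τ : Equiv.Perm (Fin 3), ∀ k,
    |triAngle ![x i, x (i + 1), x (i + 2)] k - triAngle T (τ k)| < ε := fun i => (h i).2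
  choose σ hσ using h2
  have h3 := fun i => tri_ratio (h i).1
  choose g hg using h3
  refine hε σ g (fun i k => triAngle ![x i, x (i + 1), x (i + 2)] k) hσ ?_
  obtain ⟨r, hr⟩ : ∃ r : Fin 5 → ℂ, r = fun i => rv (sg (g i) : ℝ)
    (triAngle ![x i, x (i + 1), x (i + 2)] 0) (triAngle ![x i, x (i + 1), x (i + 2)] 1)
    (triAngle ![x i, x (i + 1), x (i + 2)] 2) := ⟨_, rfl⟩
  show FF (fun i => rv (sg (g i) : ℝ)
    (triAngle ![x i, x (i + 1), x (i + 2)] 0) (triAngle ![x i, x (i + 1), x (i + 2)] 1)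
    (triAngle ![x i, x (i + 1), x (i + 2)] 2)) = 0
  have hg' : ∀ i, φ (x (i + 2)) - φ (x (i + 1)) = r i * (φ (x (i + 1)) - φ (x i)) := by
    intro i; rw [hr]; exact hg i
  rw [← hr]
  have q0 : φ (x 2) - φ (x 1) = r 0 * (φ (x 1) - φ (x 0)) := hg' 0
  have q1 : φ (x 3) - φ (x 2) = r 1 * (φ (x 2) - φ (x 1)) := hg' 1
  have q2 : φ (x 4) - φ (x 3) = r 2 * (φ (x 3) - φ (x 2)) := hg' 2
  have q3 : φ (x 0) - φ (x 4) = r 3 * (φ (x 4) - φ (x 3)) := hg' 3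
  have q4 : φ (x 1) - φ (x 0) = r 4 * (φ (x 0) - φ (x 4)) := hg' 4
  have ne : φ (x 1) - φ (x 0) ≠ 0 := sub_ne_zero.2 (φ.injective.ne (hx.ne (by decide)))
  rw [q0] at q1
  rw [q1] at q2
  rw [q2] at q3
  rw [q3] at q4
  rw [FF, Prod.mk_eq_zero]
  constructor
  · apply mul_right_cancel₀ ne
    linear_combination -q4
  · apply mul_right_cancel₀ ne
    linear_combination -q0 - q1 - q2 - q3

lemma good_of {T : Fin 3 → Plane} (hT : IsTriangle T)
    (hno : ¬ SatisfiesNontrivLinear (triAngle T 0) (triAngle T 1) (triAngle T 2)) :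
    Good (triAngle T) := by
  refine ⟨(tri_facts hT).1, (tri_facts hT).2, fun a b c m ha hb hc hm h => ?_⟩
  by_contra hn
  exact hno ⟨a, b, c, m, ha, hb, hc, hm, h, hn⟩

lemma exists_eps {T : Fin 3 → Plane} (hG : Good (triAngle T)) : ∃ ε : ℝ, 0 < ε ∧
    (∀ (s1 s2 s3 : Bool)
    (k a b c : Fin 3), 3 * ε < |(sg s1 : ℝ) * triAngle T a + (sg s2 : ℝ) * triAngle T b +
      (sg s3 : ℝ) * triAngle T c + (2 * ((k : ℕ) : ℤ) - 2 : ℤ) * Real.pi|) ∧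
    (∀ (σ : Fin 5 → Equiv.Perm (Fin 3)) (g : Fin 5 → Bool), ∀ β : Fin 5 → Fin 3 → ℝ,
      (∀ i k, |β i k - triAngle T (σ i k)| < ε) →
      FF (fun i => rv (sg (g i) : ℝ) (β i 0) (β i 1) (β i 2)) ≠ 0) := by
  have h0 : ∀ᶠ ε in 𝓝[>] (0 : ℝ), 0 < ε := self_mem_nhdsWithin
  exact (h0.and ((evA hG).and (evB hG))).exists

end Geo


/-- If the angles of a non-degenerate triangle `T` satisfy no non-trivial linear
equation, then for some `ε > 0` no finite planar set contains (a) four distinct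
points realizing `K₄⁻`, or (b) five distinct points realizing the 5-cycle `C₅`,
by triangles ε-similar to `T`. -/
theorem stmt_11 (T : Fin 3 → Plane) (hT : IsTriangle T)
    (hno : ¬ SatisfiesNontrivLinear (triAngle T 0) (triAngle T 1) (triAngle T 2)) :
    ∃ ε : ℝ, 0 < ε ∧ ∀ P : Finset Plane,
      (¬ ∃ x₁ x₂ x₃ x₄ : Plane, x₁ ∈ P ∧ x₂ ∈ P ∧ x₃ ∈ P ∧ x₄ ∈ P ∧
        x₁ ≠ x₂ ∧ x₁ ≠ x₃ ∧ x₁ ≠ x₄ ∧ x₂ ≠ x₃ ∧ x₂ ≠ x₄ ∧ x₃ ≠ x₄ ∧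
        TripleEpsSimilar ε T x₁ x₂ x₄ ∧ TripleEpsSimilar ε T x₁ x₃ x₄ ∧
        TripleEpsSimilar ε T x₂ x₃ x₄) ∧
      (¬ ∃ x : Fin 5 → Plane, Function.Injective x ∧ (∀ i, x i ∈ P) ∧
        ∀ i : Fin 5, TripleEpsSimilar ε T (x i) (x (i + 1)) (x (i + 2))) := by
  have hG := good_of hT hno
  obtain ⟨ε, h0, hA, hB⟩ := exists_eps hG
  refine ⟨ε, h0, fun P => ⟨?_, ?_⟩⟩
  · rintro ⟨x₁, x₂, x₃, x₄, -, -, -, -, -, -, n1, -, n2, n3, h1, h2, h3⟩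
    exact partA hA n1 n2 n3 h1 h2 h3
  · rintro ⟨x, hx, -, h⟩
    exact partB hB hx h

end
end

section
/- Let T be a non-degenerate triangle with angles α, β, γ, and let q₁, q₂, q₃, q₄ be four distinct points in ℝ² such that each of the three triangles q₁q₂q₄, q₁q₃q₄, q₂q₃q₄ is similar to T. Then the angles of T satisfy a non-trivial linear equation, i.e., there exist integers n₁, n₂, n₃, n₄ with |nᵢ| ≤ 5 such that n₁α + n₂β + n₃γ + n₄π = 0 and (n₁, n₂, n₃, n₄) is not a scalar multiple of (1, 1, 1, −1). -/
open EuclideanGeometry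

noncomputable section

theorem aux_cos {A B C : ℝ} (hA0 : 0 ≤ A) (hA : A ≤ Real.pi) (hB0 : 0 ≤ B) (hB : B ≤ Real.pi)
    (hC0 : 0 ≤ C) (hC : C ≤ Real.pi)
    (h : 1 + 2 * Real.cos A * Real.cos B * Real.cos C
      - Real.cos A ^ 2 - Real.cos B ^ 2 - Real.cos C ^ 2 = 0) :
    A = B + C ∨ B = A + C ∨ C = A + B ∨ A + B + C = 2 * Real.pi := by
  have key : (Real.cos C - Real.cos (A - B)) * (Real.cos C - Real.cos (A + B)) = 0 := by
    rw [Real.cos_sub, Real.cos_add]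
    have hs : Real.sin A ^ 2 = 1 - Real.cos A ^ 2 := Real.sin_sq A
    have ht : Real.sin B ^ 2 = 1 - Real.cos B ^ 2 := Real.sin_sq B
    have : (Real.sin A * Real.sin B) ^ 2 = (1 - Real.cos A ^ 2) * (1 - Real.cos B ^ 2) := by
      rw [mul_pow, hs, ht]
    linear_combination -h - this
  rcases mul_eq_zero.mp key with h | h
  · rcases le_total A B with hab | hab
    · have h' : Real.cos C = Real.cos (B - A) := by
        rw [← Real.cos_neg (B - A), neg_sub]; linarith
      have := Real.injOn_cos ⟨hC0, hC⟩ ⟨by linarith, by linarith⟩ h'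
      right; left; linarith
    · have h' : Real.cos C = Real.cos (A - B) := by linarith
      have := Real.injOn_cos ⟨hC0, hC⟩ ⟨by linarith, by linarith⟩ h'
      left; linarith
  · rcases le_total (A + B) Real.pi with hab | hab
    · have h' : Real.cos C = Real.cos (A + B) := by linarith
      have := Real.injOn_cos ⟨hC0, hC⟩ ⟨by linarith, by linarith⟩ h'
      right; right; left; linarith
    · have h' : Real.cos C = Real.cos (2 * Real.pi - (A + B)) := by
        rw [Real.cos_two_pi_sub]; linarith
      have := Real.injOn_cos ⟨hC0, hC⟩ ⟨by linarith, by linarith⟩ h'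
      right; right; right; linarith

theorem aux_vec (u v w : Plane) (hu : u ≠ 0) (hv : v ≠ 0) (hw : w ≠ 0) :
    1 + 2 * Real.cos (InnerProductGeometry.angle u v) * Real.cos (InnerProductGeometry.angle u w)
        * Real.cos (InnerProductGeometry.angle v w)
      - Real.cos (InnerProductGeometry.angle u v) ^ 2
      - Real.cos (InnerProductGeometry.angle u w) ^ 2
      - Real.cos (InnerProductGeometry.angle v w) ^ 2 = 0 := by
  have huv := InnerProductGeometry.cos_angle_mul_norm_mul_norm u v
  have huw := InnerProductGeometry.cos_angle_mul_norm_mul_norm u w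
  have hvw := InnerProductGeometry.cos_angle_mul_norm_mul_norm v w
  have gram : ‖u‖ ^ 2 * ‖v‖ ^ 2 * ‖w‖ ^ 2 + 2 * inner ℝ u v * inner ℝ u w * inner ℝ v w
      - ‖u‖ ^ 2 * (inner ℝ v w) ^ 2 - ‖v‖ ^ 2 * (inner ℝ u w) ^ 2
      - ‖w‖ ^ 2 * (inner ℝ u v) ^ 2 = 0 := by
    simp only [EuclideanSpace.real_norm_sq_eq, PiLp.inner_apply, Fin.sum_univ_two,
      RCLike.inner_apply, conj_trivial]
    ring
  rw [← huv, ← huw, ← hvw] at gram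
  have hne : ‖u‖ ^ 2 * ‖v‖ ^ 2 * ‖w‖ ^ 2 ≠ 0 := by
    have := norm_ne_zero_iff.mpr hu
    have := norm_ne_zero_iff.mpr hv
    have := norm_ne_zero_iff.mpr hw
    positivity
  refine (mul_eq_zero.mp ?_).resolve_left hne
  linear_combination gram

theorem aux_sub (f : Fin 3 → ℝ) (i j k : Fin 3) (h : f i = f j + f k) :
    SatisfiesNontrivLinear (f 0) (f 1) (f 2) := by
  let n : Fin 3 → ℤ := fun m =>
    (if i = m then 1 else 0) - (if j = m then 1 else 0) - (if k = m then 1 else 0)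
  refine ⟨n 0, n 1, n 2, 0, ?_, ?_, ?_, by norm_num, ?_, ?_⟩
  · clear h; revert i j k; decide
  · clear h; revert i j k; decide
  · clear h; revert i j k; decide
  · fin_cases i <;> fin_cases j <;> fin_cases k <;> simp [n] at h ⊢ <;> linarith
  · clear h; revert i j k; decide

theorem aux_add (f : Fin 3 → ℝ) (i j k : Fin 3) (h : f i + f j + f k = 2 * Real.pi) :
    SatisfiesNontrivLinear (f 0) (f 1) (f 2) := by
  let n : Fin 3 → ℤ := fun m =>
    (if i = m then 1 else 0) + (if j = m then 1 else 0) + (if k = m then 1 else 0)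
  refine ⟨n 0, n 1, n 2, -2, ?_, ?_, ?_, by norm_num, ?_, ?_⟩
  · clear h; revert i j k; decide
  · clear h; revert i j k; decide
  · clear h; revert i j k; decide
  · fin_cases i <;> fin_cases j <;> fin_cases k <;> simp [n] at h ⊢ <;> linarith
  · clear h; revert i j k; decide

/-- If `q₁, q₂, q₃, q₄` are four distinct points such that the triangles
`q₁q₂q₄`, `q₁q₃q₄`, `q₂q₃q₄` are all similar to the non-degenerate triangle `T`,
then the angles of `T` satisfy a non-trivial linear equation. -/
theorem stmt_12 (T : Fin 3 → Plane) (hT : IsTriangle T)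
    (q₁ q₂ q₃ q₄ : Plane)
    (hd12 : q₁ ≠ q₂) (hd13 : q₁ ≠ q₃) (hd14 : q₁ ≠ q₄)
    (hd23 : q₂ ≠ q₃) (hd24 : q₂ ≠ q₄) (hd34 : q₃ ≠ q₄)
    (h1 : TripleSimilar T q₁ q₂ q₄) (h2 : TripleSimilar T q₁ q₃ q₄)
    (h3 : TripleSimilar T q₂ q₃ q₄) :
    SatisfiesNontrivLinear (triAngle T 0) (triAngle T 1) (triAngle T 2) := by
  obtain ⟨-, s1, h1⟩ := h1
  obtain ⟨-, s2, h2⟩ := h2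
  obtain ⟨-, s3, h3⟩ := h3
  have e1 : InnerProductGeometry.angle (q₁ -ᵥ q₄) (q₂ -ᵥ q₄) = triAngle T (s1 2) := h1 2
  have e2 : InnerProductGeometry.angle (q₁ -ᵥ q₄) (q₃ -ᵥ q₄) = triAngle T (s2 2) := h2 2
  have e3 : InnerProductGeometry.angle (q₂ -ᵥ q₄) (q₃ -ᵥ q₄) = triAngle T (s3 2) := h3 2
  have g := aux_cos (InnerProductGeometry.angle_nonneg _ _) (InnerProductGeometry.angle_le_pi _ _)
    (InnerProductGeometry.angle_nonneg _ _) (InnerProductGeometry.angle_le_pi _ _)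
    (InnerProductGeometry.angle_nonneg _ _) (InnerProductGeometry.angle_le_pi _ _)
    (aux_vec (q₁ -ᵥ q₄) (q₂ -ᵥ q₄) (q₃ -ᵥ q₄) (vsub_ne_zero.mpr hd14) (vsub_ne_zero.mpr hd24)
      (vsub_ne_zero.mpr hd34))
  rw [e1, e2, e3] at g
  rcases g with g | g | g | g
  · exact aux_sub _ _ _ _ g
  · exact aux_sub _ _ _ _ g
  · exact aux_sub _ _ _ _ g
  · exact aux_add _ _ _ _ g

end
end

section
/- Let T be a non-degenerate triangle with angles α, β, γ, and let q₁, …, q₅ be five distinct points in ℝ² such that for every i (indices modulo 5) the triangle q_i q_{i+1} q_{i+2} is similar to T. Then the angles of T satisfy a non-trivial linear equation, i.e., there exist integers n₁, n₂, n₃, n₄ with |nᵢ| ≤ 5 such that n₁α + n₂β + n₃γ + n₄π = 0 and (n₁, n₂, n₃, n₄) is not a scalar multiple of (1, 1, 1, −1). -/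
open EuclideanGeometry

noncomputable section

namespace Pent

/-! Bivariate integer polynomials as lists of rows, with evaluation at a pair of complex numbers. -/

def evU (x : ℂ) : List ℤ → ℂ
  | [] => 0
  | a :: l => (a : ℂ) + x * evU x l

def evB (x y : ℂ) : List (List ℤ) → ℂ
  | [] => 0
  | r :: p => evU x r + y * evB x y p

def addU : List ℤ → List ℤ → List ℤ
  | [], m => m
  | a :: l, [] => a :: l
  | a :: l, b :: m => (a + b) :: addU l m

def smulU (c : ℤ) : List ℤ → List ℤ
  | [] => []
  | a :: l => (c * a) :: smulU c l

def mulU : List ℤ → List ℤ → List ℤ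
  | [], _ => []
  | a :: l, m => addU (smulU a m) (0 :: mulU l m)

def addB : List (List ℤ) → List (List ℤ) → List (List ℤ)
  | [], m => m
  | a :: l, [] => a :: l
  | a :: l, b :: m => addU a b :: addB l m

def smulB (c : List ℤ) : List (List ℤ) → List (List ℤ)
  | [] => []
  | a :: l => mulU c a :: smulB c l

def mulB : List (List ℤ) → List (List ℤ) → List (List ℤ)
  | [], _ => []
  | a :: l, m => addB (smulB a m) ([] :: mulB l m)

def subB (p q : List (List ℤ)) : List (List ℤ) := addB p (smulB [-1] q)

def zeroU : List ℤ → Bool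
  | [] => true
  | a :: l => decide (a = 0) && zeroU l

def zeroB : List (List ℤ) → Bool
  | [] => true
  | a :: l => zeroU a && zeroB l

/-- synthetic division by `x - 1` -/
def divU : List ℤ → List ℤ × ℤ
  | [] => ([], 0)
  | a :: l => ((divU l).2 :: (divU l).1, a + (divU l).2)

/-- division of all rows by `x - 1` -/
def divRows : List (List ℤ) → List (List ℤ) × List ℤ
  | [] => ([], [])
  | r :: p => ((divU r).1 :: (divRows p).1, (divU r).2 :: (divRows p).2)

/-- division by `y - 1` -/
def divB : List (List ℤ) → List (List ℤ) × List ℤ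
  | [] => ([], [])
  | a :: l => ((divB l).2 :: (divB l).1, addU a (divB l).2)

/-- division of all rows by `x` -/
def shiftRows : List (List ℤ) → List (List ℤ) × List ℤ
  | [] => ([], [])
  | [] :: p => ([] :: (shiftRows p).1, 0 :: (shiftRows p).2)
  | (a :: r) :: p => (r :: (shiftRows p).1, a :: (shiftRows p).2)

def stripX (p : List (List ℤ)) : List (List ℤ) :=
  if zeroU (shiftRows p).2 then (shiftRows p).1 else p

def stripX1 (p : List (List ℤ)) : List (List ℤ) :=
  if zeroU (divRows p).2 then (divRows p).1 else p

def stripY : List (List ℤ) → List (List ℤ)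
  | [] => []
  | a :: l => if zeroU a then l else a :: l

def stripY1 (p : List (List ℤ)) : List (List ℤ) :=
  if zeroU (divB p).2 then (divB p).1 else p

def strip1 (p : List (List ℤ)) : List (List ℤ) := stripY1 (stripX1 (stripY (stripX p)))

def strip (p : List (List ℤ)) : List (List ℤ) := strip1 (strip1 (strip1 (strip1 p)))

lemma evU_add (x : ℂ) : ∀ l m, evU x (addU l m) = evU x l + evU x m
  | [], m => by simp [addU, evU]
  | a :: l, [] => by simp [addU, evU]
  | a :: l, b :: m => by simp only [addU, evU, evU_add x l m]; push_cast; ring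

lemma evU_smul (x : ℂ) (c : ℤ) : ∀ l, evU x (smulU c l) = c * evU x l
  | [] => by simp [smulU, evU]
  | a :: l => by simp only [smulU, evU, evU_smul x c l]; push_cast; ring

lemma evU_mul (x : ℂ) : ∀ l m, evU x (mulU l m) = evU x l * evU x m
  | [], m => by simp [mulU, evU]
  | a :: l, m => by
    simp only [mulU, evU, evU_add, evU_smul, evU_mul x l m]; push_cast; ring

lemma evB_add (x y : ℂ) : ∀ l m, evB x y (addB l m) = evB x y l + evB x y m
  | [], m => by simp [addB, evB]
  | a :: l, [] => by simp [addB, evB]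
  | a :: l, b :: m => by simp only [addB, evB, evB_add x y l m, evU_add]; ring

lemma evB_smul (x y : ℂ) (c : List ℤ) : ∀ l, evB x y (smulB c l) = evU x c * evB x y l
  | [] => by simp [smulB, evB]
  | a :: l => by simp only [smulB, evB, evB_smul x y c l, evU_mul]; ring

lemma evB_mul (x y : ℂ) : ∀ l m, evB x y (mulB l m) = evB x y l * evB x y m
  | [], m => by simp [mulB, evB]
  | a :: l, m => by
    simp only [mulB, evB, evB_add, evB_smul, evB_mul x y l m, evU]; ring

lemma evB_sub (x y : ℂ) (p q) : evB x y (subB p q) = evB x y p - evB x y q := by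
  simp only [subB, evB_add, evB_smul, evU]; push_cast; ring

lemma evU_zero (x : ℂ) : ∀ l, zeroU l = true → evU x l = 0
  | [], _ => rfl
  | a :: l, h => by
    simp only [zeroU, Bool.and_eq_true, decide_eq_true_eq] at h
    simp [evU, h.1, evU_zero x l h.2]

lemma evB_zero (x y : ℂ) : ∀ l, zeroB l = true → evB x y l = 0
  | [], _ => rfl
  | a :: l, h => by
    simp only [zeroB, Bool.and_eq_true] at h
    simp [evB, evU_zero x a h.1, evB_zero x y l h.2]

lemma evU_div (x : ℂ) : ∀ l, evU x l = (x - 1) * evU x (divU l).1 + (divU l).2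
  | [] => by simp [divU, evU]
  | a :: l => by
    simp only [divU, evU]; rw [evU_div x l]; push_cast; ring

lemma evB_divRows (x y : ℂ) :
    ∀ p, evB x y p = (x - 1) * evB x y (divRows p).1 + evU y (divRows p).2
  | [] => by simp [divRows, evB, evU]
  | a :: l => by
    simp only [divRows, evB, evU]; rw [evB_divRows x y l, evU_div x a]; ring

lemma evB_div (x y : ℂ) :
    ∀ p, evB x y p = (y - 1) * evB x y (divB p).1 + evU x (divB p).2
  | [] => by simp [divB, evB, evU]
  | a :: l => by
    simp only [divB, evB, evU_add]; rw [evB_div x y l]; ring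

lemma evB_shiftRows (x y : ℂ) :
    ∀ p, evB x y p = x * evB x y (shiftRows p).1 + evU y (shiftRows p).2
  | [] => by simp [shiftRows, evB, evU]
  | [] :: l => by
    simp only [shiftRows, evB, evU]; rw [evB_shiftRows x y l]; push_cast; ring
  | (a :: r) :: l => by
    simp only [shiftRows, evB, evU]; rw [evB_shiftRows x y l]; ring

section
variable {x y : ℂ} (hx : x ≠ 0) (hy : y ≠ 0) (hx1 : x ≠ 1) (hy1 : y ≠ 1)

lemma stripX_ok (hx : x ≠ 0) (p) (h : evB x y p = 0) : evB x y (stripX p) = 0 := by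
  unfold stripX; split_ifs with hz
  · rw [evB_shiftRows, evU_zero y _ hz] at h; simpa [hx] using h
  · exact h

lemma stripX1_ok (hx1 : x ≠ 1) (p) (h : evB x y p = 0) : evB x y (stripX1 p) = 0 := by
  unfold stripX1; split_ifs with hz
  · rw [evB_divRows, evU_zero y _ hz] at h; simpa [sub_eq_zero, hx1] using h
  · exact h

lemma stripY1_ok (hy1 : y ≠ 1) (p) (h : evB x y p = 0) : evB x y (stripY1 p) = 0 := by
  unfold stripY1; split_ifs with hz
  · rw [evB_div, evU_zero x _ hz] at h; simpa [sub_eq_zero, hy1] using h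
  · exact h

lemma stripY_ok (hy : y ≠ 0) : ∀ (p) (_ : evB x y p = 0), evB x y (stripY p) = 0
  | [], h => h
  | a :: l, h => by
    simp only [stripY]; split_ifs with hz
    · rw [evB, evU_zero x _ hz] at h; simpa [hy] using h
    · exact h

lemma strip1_ok (hx : x ≠ 0) (hy : y ≠ 0) (hx1 : x ≠ 1) (hy1 : y ≠ 1) (p)
    (h : evB x y p = 0) : evB x y (strip1 p) = 0 :=
  stripY1_ok hy1 _ (stripX1_ok hx1 _ (stripY_ok hy _ (stripX_ok hx _ h)))

lemma strip_ok (hx : x ≠ 0) (hy : y ≠ 0) (hx1 : x ≠ 1) (hy1 : y ≠ 1) (p)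
    (h : evB x y p = 0) : evB x y (strip p) = 0 :=
  strip1_ok hx hy hx1 hy1 _ (strip1_ok hx hy hx1 hy1 _
    (strip1_ok hx hy hx1 hy1 _ (strip1_ok hx hy hx1 hy1 _ h)))

end

/-- A code: labels of the three vertices, and whether the triangle is directly similar. -/
abbrev Code := Fin 3 × Fin 3 × Fin 3

def pt (d : Bool) (j : Fin 3) : List (List ℤ) :=
  match j with
  | 0 => []
  | 1 => [[1]]
  | 2 => if d then [[0, 1]] else [[], [1]]

def ptC (x y : ℂ) (d : Bool) (j : Fin 3) : ℂ :=
  match j with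
  | 0 => 0
  | 1 => 1
  | 2 => if d then x else y

lemma ev_pt (x y : ℂ) (d j) : evB x y (pt d j) = ptC x y d j := by
  fin_cases j <;> cases d <;> simp [pt, ptC, evB, evU]

/-- numerator and denominator of the edge ratio -/
def numB (c : Code × Bool) : List (List ℤ) := subB (pt c.2 c.1.2.2) (pt c.2 c.1.2.1)
def denB (c : Code × Bool) : List (List ℤ) := subB (pt c.2 c.1.2.1) (pt c.2 c.1.1)

def numC (x y : ℂ) (c : Code × Bool) : ℂ := ptC x y c.2 c.1.2.2 - ptC x y c.2 c.1.2.1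
def denC (x y : ℂ) (c : Code × Bool) : ℂ := ptC x y c.2 c.1.2.1 - ptC x y c.2 c.1.1

/-- the closing polynomial -/
def closeB (a b c d : Code × Bool) : List (List ℤ) :=
  addB (mulB (denB a) (mulB (denB b) (mulB (denB c) (denB d))))
  (mulB (numB a) (addB (mulB (denB b) (mulB (denB c) (denB d)))
    (mulB (numB b) (addB (mulB (denB c) (denB d))
      (mulB (numB c) (addB (denB d) (numB d)))))))

lemma close_ok (x y : ℂ) (a b c d : Code × Bool) (z0 z1 z2 z3 z4 : ℂ) (h0 : z0 ≠ 0)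
    (hs : z0 + z1 + z2 + z3 + z4 = 0)
    (ha : z1 * denC x y a = z0 * numC x y a)
    (hb : z2 * denC x y b = z1 * numC x y b)
    (hc : z3 * denC x y c = z2 * numC x y c)
    (hd : z4 * denC x y d = z3 * numC x y d) :
    evB x y (closeB a b c d) = 0 := by
  have : z0 * evB x y (closeB a b c d) = 0 := by
    simp only [closeB, evB_add, evB_mul, numB, denB, evB_sub, ev_pt]
    change z0 * (denC x y a * (denC x y b * (denC x y c * denC x y d)) +
      numC x y a * (denC x y b * (denC x y c * denC x y d) + numC x y b *
      (denC x y c * denC x y d + numC x y c * (denC x y d + numC x y d)))) = 0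
    generalize denC x y a = A at *
    generalize denC x y b = B at *
    generalize denC x y c = C at *
    generalize denC x y d = D at *
    generalize numC x y a = A' at *
    generalize numC x y b = B' at *
    generalize numC x y c = C' at *
    generalize numC x y d = D' at *
    linear_combination A * B * C * D * hs - (B*C*D + B'*C*D + B'*C'*D + B' * C' * D') * ha
      - A * (C * D + C' * D + C' * D') * hb - A * B * (D + D') * hc - A * B * C * hd
  simpa [h0] using this

def table : List (List (List ℤ)) := [
[[1]],
[[-1]],
[[-1, 1], [2, -2, 1], [-1, 2, -1]],
[[-1, 2, -1], [1, -2, 2], [0, 1, -1]],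
[[1, 0, 1]],
[[2, -3, 2]],
[[-1, 3, -2, 1]],
[[1, -2, 3, -1]],
[[0, -1, 1], [1]],
[[1], [-1, 1], [1]],
[[1], [0, -1], [1]],
[[-1], [1, 1], [-1]],
[[0, 0, 1], [1, -1]],
[[-1, 1], [1], [-1]],
[[-1], [1], [-1, 1]],
[[1, -1, 1], [-1, 1]],
[[1, -1, 1], [0, -1]],
[[0, -1], [1, -1, 1]],
[[0, 1], [-1], [0, 1]],
[[2, -1], [-2, 1], [1]],
[[1], [-2, 1], [2, -1]],
[[-1, 1, -1], [1, 0, 1]],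
[[0, -1], [0, 1], [1, -1]],
[[-1, 2], [1, -2], [0, 1]],
[[1, -1], [0, 1], [0, -1]],
[[0, 1], [1, -2], [-1, 2]],
[[-1, 1], [1, -2], [-1, 1]],
[[1, -1], [-2, 1], [1, -1]]]

def inTable (p : List (List ℤ)) : Bool := table.any fun e => zeroB (subB p e)

/-- Signature of a code. -/
def evenC (c : Code) : Bool := decide (c.2.1 = c.1 + 1)

def all6 : List Code := [(0,1,2),(1,2,0),(2,0,1),(0,2,1),(2,1,0),(1,0,2)]

def cnt (j : Fin 3) (a b c d e : Fin 3) : ℤ :=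
  (if a = j then 1 else 0) + (if b = j then 1 else 0) + (if c = j then 1 else 0) +
  (if d = j then 1 else 0) + (if e = j then 1 else 0)

def expo (j : Fin 3) (a b c d e : Code) : ℤ :=
  cnt j a.1 b.1 c.1 d.1 e.1 - cnt j a.2.2 b.2.2 c.2.2 d.2.2 e.2.2

def isoExp (e0 e1 e2 : ℤ) : Bool :=
  (decide (e0 = 0) && decide (e1 ≠ 0)) || (decide (e1 = 0) && decide (e2 ≠ 0))
   || (decide (e2 = 0) && decide (e0 ≠ 0))

def mOK (a b c d : Code) : Bool :=
  decide (cnt 0 a.2.1 b.2.1 c.2.1 d.2.1 0 = 3) && decide (cnt 1 a.2.1 b.2.1 c.2.1 d.2.1 0 = 1)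
   && decide (cnt 2 a.2.1 b.2.1 c.2.1 d.2.1 0 = 1)

def anyClose (a b c d e : Code × Bool) : Bool :=
  inTable (strip (closeB a b c d)) || inTable (strip (closeB b c d e)) ||
  inTable (strip (closeB c d e a)) || inTable (strip (closeB d e a b)) ||
  inTable (strip (closeB e a b c))

def e5 : Code := (1, 0, 2)

def finalCheck (a b c d : Code) : Bool :=
  !(mOK a b c d) || isoExp (expo 0 a b c d e5) (expo 1 a b c d e5) (expo 2 a b c d e5) ||
  anyClose (a, evenC a) (b, evenC b) (c, evenC c) (d, evenC d) (e5, true)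

set_option maxRecDepth 100000 in
theorem check_all : (all6.all fun a => all6.all fun b => all6.all fun c => all6.all fun d =>
    finalCheck a b c d) = true := by
  decide +kernel

lemma table_ok (x y : ℂ) (hx : x ≠ 0) (hy : y ≠ 0) (hx1 : x ≠ 1) (hy1 : y ≠ 1) (hxy : x ≠ y)
    (e) (he : e ∈ table) (h : evB x y e = 0) (h' : evB y x e = 0) :
    x * y = 1 ∨ x + y = x * y ∨ x + y = 1 ∨ x + y = 0 ∨
    (x * y - 1)^2 = (1 - x) * (1 - y) ∨ (x * y - 1)^2 = x * y * ((1 - x) * (1 - y)) := by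
  have hxy' : x - y ≠ 0 := sub_ne_zero.2 hxy
  simp only [table, List.mem_cons, List.not_mem_nil, or_false] at he
  rcases he with he|he|he|he|he|he|he|he|he|he|he|he|he|he|he|he|he|he|he|he|he|he|he|he|he|he|he|he
  all_goals
    subst he
    simp only [evB, evU, Int.cast_zero, Int.cast_one, Int.cast_neg, Int.cast_ofNat] at h h'
    try grind
  · have E : (x - y) * (3 - 2 * (x + y) + (x + y)^2 - x * y) = 0 := by
      linear_combination h - h'
    have E1 := (mul_eq_zero.1 E).resolve_left hxy'
    right; right; right; right; left
    have E2 : x * y = 3 - 2 * (x + y) + (x + y)^2 := by linear_combination -E1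
    have E3 : (x + y)^3 - 4 * (x + y)^2 + 7 * (x + y) - 5 = 0 := by
      linear_combination (-1/2) * (h + h') + (2 - 3 / 2 * (x + y)) * E2
    have E4 : (1 - x) * (1 - y) = 1 - (x + y) + x * y := by ring
    rw [E4, E2]
    linear_combination (x + y) * E3
  · have E : (x - y) * (2 - 3 * (x + y) + (x + y)^2 - x * y) = 0 := by
      linear_combination h' - h
    have E1 := (mul_eq_zero.1 E).resolve_left hxy'
    right; right; right; right; right
    have E2 : x * y = 2 - 3 * (x + y) + (x + y)^2 := by linear_combination -E1
    have E3 : (x + y)^3 - 6 * (x + y)^2 + 11 * (x + y) - 5 = 0 := by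
      linear_combination (1/2) * (h + h') + (3 - 3 / 2 * (x + y)) * E2
    have E4 : (1 - x) * (1 - y) = 1 - (x + y) + x * y := by ring
    rw [E4, E2]
    linear_combination E3

end Pent

namespace Pent

def Good (θ : Fin 3 → ℝ) : Prop := ∃ n : Fin 3 → ℤ, ∃ m : ℤ, (∀ j, |n j| ≤ 5) ∧ |m| ≤ 5 ∧
  (∑ j, (n j : ℝ) * θ j) + m * Real.pi = 0 ∧ ¬ (n 0 = n 1 ∧ n 1 = n 2)

structure Tri (θ : Fin 3 → ℝ) : Prop where
  pos : ∀ j, 0 < θ j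
  sum : θ 0 + θ 1 + θ 2 = Real.pi

lemma bound_m {θ : Fin 3 → ℝ} (h : Tri θ) (n : Fin 3 → ℤ) (m : ℤ) (hn : ∀ j, |n j| ≤ 5)
    (e : (∑ j, (n j : ℝ) * θ j) + m * Real.pi = 0) : |m| ≤ 5 := by
  have hp := Real.pi_pos
  have key : ∀ j, |(n j : ℝ) * θ j| ≤ 5 * θ j := by
    intro j
    rw [abs_mul, abs_of_pos (h.pos j)]
    have : |(n j : ℝ)| ≤ 5 := by exact_mod_cast hn j
    exact mul_le_mul_of_nonneg_right this (h.pos j).le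
  rw [Fin.sum_univ_three] at e
  have k0 := abs_le.1 (key 0)
  have k1 := abs_le.1 (key 1)
  have k2 := abs_le.1 (key 2)
  have hs := h.sum
  have : |(m : ℝ)| ≤ 5 := by
    rw [abs_le]
    constructor <;> nlinarith
  exact_mod_cast this

lemma good_of {θ : Fin 3 → ℝ} (h : Tri θ) (n0 n1 n2 m : ℤ) (h0 : |n0| ≤ 5) (h1 : |n1| ≤ 5)
    (h2 : |n2| ≤ 5) (e : n0 * θ 0 + n1 * θ 1 + n2 * θ 2 = m * Real.pi)
    (hn : ¬ (n0 = n1 ∧ n1 = n2)) : Good θ := by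
  have hb : ∀ j, |(![n0, n1, n2] : Fin 3 → ℤ) j| ≤ 5 := by
    intro j; fin_cases j <;> simpa
  have he : (∑ j, ((![n0, n1, n2] : Fin 3 → ℤ) j : ℝ) * θ j) + (-m : ℤ) * Real.pi = 0 := by
    simp [Fin.sum_univ_three]; linarith
  exact ⟨![n0, n1, n2], -m, hb, bound_m h _ _ hb he, he, by simpa using hn⟩

lemma Good.perm {θ : Fin 3 → ℝ} (p : Equiv.Perm (Fin 3)) (h : Good (fun j => θ (p j))) :
    Good θ := by
  obtain ⟨n, m, hn, hm, e, hc⟩ := h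
  refine ⟨fun j => n (p.symm j), m, fun j => hn _, hm, ?_, ?_⟩
  · rw [← e]; congr 1
    rw [← Equiv.sum_comp p]; simp
  · intro hh
    apply hc
    have hcst : ∀ j, n (p.symm j) = n (p.symm 0) := by
      intro j; fin_cases j
      · rfl
      · exact hh.1.symm
      · exact (hh.1.trans hh.2).symm
    have : ∀ j, n j = n (p.symm 0) := by
      intro j; simpa using hcst (p j)
    exact ⟨by rw [this 0, this 1], by rw [this 1, this 2]⟩

lemma Tri.perm {θ : Fin 3 → ℝ} (h : Tri θ) (p : Equiv.Perm (Fin 3)) :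
    Tri (fun j => θ (p j)) := by
  refine ⟨fun j => h.pos _, ?_⟩
  have := Equiv.sum_comp p θ
  simp only [Fin.sum_univ_three] at this
  rw [this]; exact h.sum

lemma Tri.sin_pos {θ : Fin 3 → ℝ} (h : Tri θ) (j) : 0 < Real.sin (θ j) := by
  apply Real.sin_pos_of_pos_of_lt_pi (h.pos j)
  have := h.pos 0; have := h.pos 1; have := h.pos 2; have := h.sum
  fin_cases j <;> simp <;> linarith

lemma good_iso {θ : Fin 3 → ℝ} (h : Tri θ) (j k : Fin 3) (hjk : j ≠ k)
    (e : Real.sin (θ j - θ k) = 0) : Good θ := by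
  obtain ⟨m, hm⟩ := Real.sin_eq_zero_iff.1 e
  fin_cases j <;> fin_cases k <;> simp at hjk hm
  · exact good_of h 1 (-1) 0 m (by norm_num) (by norm_num) (by norm_num)
      (by push_cast; linarith) (by norm_num)
  · exact good_of h 1 0 (-1) m (by norm_num) (by norm_num) (by norm_num)
      (by push_cast; linarith) (by norm_num)
  · exact good_of h (-1) 1 0 m (by norm_num) (by norm_num) (by norm_num)
      (by push_cast; linarith) (by norm_num)
  · exact good_of h 0 1 (-1) m (by norm_num) (by norm_num) (by norm_num)
      (by push_cast; linarith) (by norm_num)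
  · exact good_of h (-1) 0 1 m (by norm_num) (by norm_num) (by norm_num)
      (by push_cast; linarith) (by norm_num)
  · exact good_of h 0 (-1) 1 m (by norm_num) (by norm_num) (by norm_num)
      (by push_cast; linarith) (by norm_num)

lemma sin_eq_sin' {x y : ℝ} (h : Real.sin x = Real.sin y) :
    (∃ m : ℤ, x - y = m * Real.pi) ∨ (∃ m : ℤ, x + y = m * Real.pi) := by
  have h2 : 2 * Real.sin ((x - y)/2) * Real.cos ((x + y)/2) = 0 := by
    rw [← Real.sin_sub_sin]; linarith
  rcases mul_eq_zero.1 h2 with h3 | h3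
  · left
    obtain ⟨m, hm⟩ := Real.sin_eq_zero_iff.1 ((mul_eq_zero.1 h3).resolve_left (by norm_num))
    exact ⟨2 * m, by push_cast; linarith⟩
  · right
    obtain ⟨m, hm⟩ := Real.cos_eq_zero_iff.1 h3
    exact ⟨2 * m + 1, by push_cast; linarith⟩

lemma good_iso' {θ : Fin 3 → ℝ} (h : Tri θ) (j k : Fin 3) (hjk : j ≠ k)
    (e : Real.sin (θ j) = Real.sin (θ k)) : Good θ := by
  rcases sin_eq_sin' e with ⟨m, hm⟩ | ⟨m, hm⟩
  · apply good_iso h j k hjk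
    rw [hm]; exact Real.sin_int_mul_pi m
  · fin_cases j <;> fin_cases k <;> simp at hjk hm
    · exact good_of h 1 1 0 m (by norm_num) (by norm_num) (by norm_num)
        (by push_cast; linarith) (by norm_num)
    · exact good_of h 1 0 1 m (by norm_num) (by norm_num) (by norm_num)
        (by push_cast; linarith) (by norm_num)
    · exact good_of h 1 1 0 m (by norm_num) (by norm_num) (by norm_num)
        (by push_cast; linarith) (by norm_num)
    · exact good_of h 0 1 1 m (by norm_num) (by norm_num) (by norm_num)
        (by push_cast; linarith) (by norm_num)
    · exact good_of h 1 0 1 m (by norm_num) (by norm_num) (by norm_num)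
        (by push_cast; linarith) (by norm_num)
    · exact good_of h 0 1 1 m (by norm_num) (by norm_num) (by norm_num)
        (by push_cast; linarith) (by norm_num)

lemma Tri.sin2 {θ : Fin 3 → ℝ} (h : Tri θ) : Real.sin (θ 2) =
    Real.sin (θ 0) * Real.cos (θ 1) + Real.cos (θ 0) * Real.sin (θ 1) := by
  rw [← Real.sin_add, ← Real.sin_pi_sub]; congr 1; linarith [h.sum]

lemma Tri.cos2 {θ : Fin 3 → ℝ} (h : Tri θ) : Real.cos (θ 2) =
    Real.sin (θ 0) * Real.sin (θ 1) - Real.cos (θ 0) * Real.cos (θ 1) := by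
  have : θ 2 = Real.pi - (θ 0 + θ 1) := by linarith [h.sum]
  rw [this, Real.cos_pi_sub, Real.cos_add]; ring

lemma good_double {θ : Fin 3 → ℝ} (h : Tri θ) (k : Fin 3) (hk : k = 1 ∨ k = 2)
    (e : (Real.sin (θ 1)^2 - Real.sin (θ 2)^2)^2 = Real.sin (θ k)^2 * Real.sin (θ 0)^2) :
    Good θ := by
  have e0 : Real.sin (θ 0) = Real.sin (θ 1 + θ 2) := by
    rw [← Real.sin_pi_sub]; congr 1; linarith [h.sum]
  have e1 : Real.sin (θ 1)^2 - Real.sin (θ 2)^2 = Real.sin (θ 0) * Real.sin (θ 1 - θ 2) := by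
    rw [e0, Real.sin_add, Real.sin_sub]
    linear_combination (-Real.sin (θ 1)^2) * Real.sin_sq_add_cos_sq (θ 2) +
      (Real.sin (θ 2)^2) * Real.sin_sq_add_cos_sq (θ 1)
  have h0 := (h.sin_pos 0).ne'
  have e2 : Real.sin (θ 1 - θ 2)^2 = Real.sin (θ k)^2 := by
    rw [e1] at e
    apply mul_left_cancel₀ (pow_ne_zero 2 h0)
    linear_combination e
  have e3 : (∃ m : ℤ, θ 1 - θ 2 - θ k = m * Real.pi) ∨
      (∃ m : ℤ, θ 1 - θ 2 + θ k = m * Real.pi) := by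
    rcases sq_eq_sq_iff_eq_or_eq_neg.1 e2 with h3 | h3
    · exact sin_eq_sin' h3
    · rw [← Real.sin_neg] at h3
      rcases sin_eq_sin' h3 with ⟨m, hm⟩ | ⟨m, hm⟩
      · right; exact ⟨m, by linarith⟩
      · left; exact ⟨m, by linarith⟩
  rcases hk with rfl | rfl <;> rcases e3 with ⟨m, hm⟩ | ⟨m, hm⟩
  · exact good_of h 0 0 (-1) m (by norm_num) (by norm_num) (by norm_num)
      (by push_cast; linarith) (by norm_num)
  · exact good_of h 0 2 (-1) m (by norm_num) (by norm_num) (by norm_num)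
      (by push_cast; linarith) (by norm_num)
  · exact good_of h 0 1 (-2) m (by norm_num) (by norm_num) (by norm_num)
      (by push_cast; linarith) (by norm_num)
  · exact good_of h 0 1 0 m (by norm_num) (by norm_num) (by norm_num)
      (by push_cast; linarith) (by norm_num)

/-- The apex and its conjugate. -/
def tau (θ : Fin 3 → ℝ) : ℂ := (Real.sin (θ 1) / Real.sin (θ 2) : ℝ) *
  (Real.cos (θ 0) + Real.sin (θ 0) * Complex.I)
def tauc (θ : Fin 3 → ℝ) : ℂ := (Real.sin (θ 1) / Real.sin (θ 2) : ℝ) *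
  (Real.cos (θ 0) - Real.sin (θ 0) * Complex.I)

lemma conj_tau (θ) : (starRingEnd ℂ) (tau θ) = tauc θ := by
  simp only [tau, tauc, map_mul, map_add, Complex.conj_ofReal, Complex.conj_I]; ring

lemma conj_tauc (θ) : (starRingEnd ℂ) (tauc θ) = tau θ := by
  rw [← conj_tau]; simp

lemma evU_conj (x : ℂ) : ∀ l, (starRingEnd ℂ) (evU x l) = evU ((starRingEnd ℂ) x) l
  | [] => by simp [evU]
  | a :: l => by simp [evU, evU_conj x l]

lemma evB_conj (x y : ℂ) :
    ∀ l, (starRingEnd ℂ) (evB x y l) = evB ((starRingEnd ℂ) x) ((starRingEnd ℂ) y) l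
  | [] => by simp [evB]
  | a :: l => by simp [evB, evU_conj, evB_conj x y l]

lemma tau_mul (θ) : tau θ * tauc θ = ((Real.sin (θ 1) / Real.sin (θ 2))^2 : ℝ) := by
  have hc : ((Real.sin (θ 0) : ℝ) : ℂ)^2 + ((Real.cos (θ 0) : ℝ) : ℂ)^2 = 1 := by
    exact_mod_cast Real.sin_sq_add_cos_sq (θ 0)
  simp only [tau, tauc]
  rw [Complex.ofReal_pow]
  generalize ((Real.sin (θ 1) / Real.sin (θ 2) : ℝ) : ℂ) = r
  linear_combination r^2 * hc - r^2 * (Real.sin (θ 0) : ℂ)^2 * Complex.I_sq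

lemma tau_add (θ) : tau θ + tauc θ =
    (2 * (Real.sin (θ 1) / Real.sin (θ 2)) * Real.cos (θ 0) : ℝ) := by
  simp only [tau, tauc]; push_cast; ring

lemma tau_sub (θ) : tau θ - tauc θ =
    (2 * (Real.sin (θ 1) / Real.sin (θ 2)) * Real.sin (θ 0) : ℝ) * Complex.I := by
  simp only [tau, tauc]; push_cast; ring

lemma tau_props {θ : Fin 3 → ℝ} (h : Tri θ) :
    tau θ ≠ 0 ∧ tauc θ ≠ 0 ∧ tau θ ≠ 1 ∧ tauc θ ≠ 1 ∧ tau θ ≠ tauc θ := by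
  have h0 := h.sin_pos 0
  have h1 := h.sin_pos 1
  have h2 := h.sin_pos 2
  have hne : tau θ ≠ tauc θ := by
    rw [← sub_ne_zero, tau_sub]
    refine mul_ne_zero ?_ Complex.I_ne_zero
    rw [Complex.ofReal_ne_zero]; positivity
  have hm : tau θ * tauc θ ≠ 0 := by
    rw [tau_mul, Complex.ofReal_ne_zero]; positivity
  refine ⟨left_ne_zero_of_mul hm, right_ne_zero_of_mul hm, ?_, ?_, hne⟩
  · intro e; apply hne; rw [← conj_tau, e]; simp
  · intro e; apply hne; rw [← conj_tauc, e]; simp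

lemma good_alg {θ : Fin 3 → ℝ} (h : Tri θ) {x y : ℂ} (hx : x = tau θ) (hy : y = tauc θ)
   (H : x * y = 1 ∨ x + y = x * y ∨ x + y = 1 ∨ x + y = 0 ∨
    (x * y - 1)^2 = (1 - x) * (1 - y) ∨ (x * y - 1)^2 = x * y * ((1 - x) * (1 - y))) :
    Good θ := by
  have h0 := h.sin_pos 0
  have h1 := h.sin_pos 1
  have h2 := h.sin_pos 2
  have hexp : (1 - x) * (1 - y) = 1 - (x + y) + x * y := by ring
  have hs2 := h.sin2
  have hc2 := h.cos2
  have q0 := Real.sin_sq_add_cos_sq (θ 0)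
  have q1 := Real.sin_sq_add_cos_sq (θ 1)
  have hA : 1 - 2 * (Real.sin (θ 1) / Real.sin (θ 2)) * Real.cos (θ 0) +
      (Real.sin (θ 1) / Real.sin (θ 2))^2 = (Real.sin (θ 0) / Real.sin (θ 2))^2 := by
    field_simp
    rw [hs2]
    linear_combination (Real.sin (θ 0)^2) * q1 + (-Real.sin (θ 1)^2) * q0
  rw [hexp, hx, hy, tau_mul, tau_add] at H
  norm_cast at H
  rw [hA] at H
  rcases H with H | H | H | H | H | H
  · have : Real.sin (θ 1) / Real.sin (θ 2) = 1 := by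
      have hp : 0 < Real.sin (θ 1) / Real.sin (θ 2) := by positivity
      nlinarith
    rw [div_eq_one_iff_eq h2.ne'] at this
    exact good_iso' h 1 2 (by decide) this
  · apply good_iso h 0 2 (by decide)
    field_simp at H
    rw [Real.sin_sub]
    have hs1 : Real.sin (θ 1) = Real.sin (θ 0) * Real.cos (θ 2) + Real.cos (θ 0) * Real.sin (θ 2) := by
      rw [← Real.sin_add, ← Real.sin_pi_sub]; congr 1; linarith [h.sum]
    have : 2 * Real.cos (θ 0) * Real.sin (θ 2) = Real.sin (θ 1) := by linarith
    linarith
  · apply good_iso h 0 1 (by decide)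
    field_simp at H
    rw [Real.sin_sub]
    linarith
  · have hc : Real.cos (θ 0) = 0 := by
      have : (2 * (Real.sin (θ 1) / Real.sin (θ 2))) ≠ 0 := by positivity
      exact (mul_eq_zero.1 H).resolve_left this
    obtain ⟨m, hm⟩ := Real.cos_eq_zero_iff.1 hc
    exact good_of h 2 0 0 (2 * m + 1) (by norm_num) (by norm_num) (by norm_num)
      (by push_cast; linarith) (by norm_num)
  · apply good_double h 2 (Or.inr rfl)
    field_simp at H
    linarith
  · apply good_double h 1 (Or.inl rfl)
    field_simp at H
    linarith

end Pent

namespace Pent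

def code (p : Equiv.Perm (Fin 3)) : Code := (p 0, p 1, p 2)

lemma code_mem : ∀ p : Equiv.Perm (Fin 3), code p ∈ all6 := by decide

def cis (x : ℝ) : ℂ := (Real.cos x : ℂ) - (Real.sin x : ℂ) * Complex.I

/-- The edge ratio relation. -/
def Step (θ : Fin 3 → ℝ) (z z' : ℂ) (c : Code) (ε : ℤ) : Prop :=
  z' * Real.sin (θ c.2.2) = - z * Real.sin (θ c.1) * cis (ε * θ c.2.1)

lemma cis_conj (x : ℝ) : (starRingEnd ℂ) (cis x) = cis (-x) := by
  simp only [cis, map_sub, map_mul, Complex.conj_ofReal, Complex.conj_I, Real.cos_neg,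
    Real.sin_neg]; push_cast; ring

lemma Step.conj {θ z z' c ε} (h : Step θ z z' c ε) :
    Step θ ((starRingEnd ℂ) z) ((starRingEnd ℂ) z') c (-ε) := by
  unfold Step at *
  have := congrArg (starRingEnd ℂ) h
  simp only [map_mul, map_neg, Complex.conj_ofReal, cis_conj] at this
  rw [this]; push_cast; rw [neg_mul]; simp

lemma ratio_direct {θ : Fin 3 → ℝ} (h : Tri θ) (c : Code) (hc : c ∈ all6) :
    numC (tau θ) (tauc θ) (c, true) * Real.sin (θ c.2.2) =
      - denC (tau θ) (tauc θ) (c, true) * Real.sin (θ c.1) *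
        cis ((if evenC c then (1 : ℤ) else -1 : ℤ) * θ c.2.1) := by
  have h2 : ((Real.sin (θ 2) : ℝ) : ℂ) ≠ 0 := Complex.ofReal_ne_zero.2 (h.sin_pos 2).ne'
  have hs2 := congrArg (fun x : ℝ => (x : ℂ)) h.sin2
  have hc2 := congrArg (fun x : ℝ => (x : ℂ)) h.cos2
  have q0 := congrArg (fun x : ℝ => (x : ℂ)) (Real.sin_sq_add_cos_sq (θ 0))
  have q1 := congrArg (fun x : ℝ => (x : ℂ)) (Real.sin_sq_add_cos_sq (θ 1))
  push_cast [-Complex.ofReal_sin, -Complex.ofReal_cos] at hs2 hc2 q0 q1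
  have ht : tau θ * (Real.sin (θ 2) : ℂ) = Real.sin (θ 1) *
      (Real.cos (θ 0) + Real.sin (θ 0) * Complex.I) := by
    unfold tau; push_cast [-Complex.ofReal_sin, -Complex.ofReal_cos]; field_simp
  have hI := Complex.I_sq
  simp only [all6, List.mem_cons, List.not_mem_nil, or_false] at hc
  generalize tau θ = t at *
  generalize tauc θ = T at *
  have ev : ∀ x : ℝ, cis ((1 : ℤ) * x) = cis x := by intro x; simp
  have od : ∀ x : ℝ, cis ((-1 : ℤ) * x) = (Real.cos x : ℂ) + (Real.sin x : ℂ) * Complex.I := by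
    intro x; simp [cis]
  have key : ∀ (s0 s1 s2 c0 c1 c2 i : ℂ), s2 ≠ 0 → s2 = s0 * c1 + c0 * s1 →
      c2 = s0 * s1 - c0 * c1 → s0 ^ 2 + c0 ^ 2 = 1 → s1 ^ 2 + c1 ^ 2 = 1 → i ^ 2 = -1 →
      t * s2 = s1 * (c0 + s0 * i) →
      (t - 1) * s2 = -(1 - 0) * s0 * (c1 - s1 * i) ∧
      (0 - t) * s0 = -(t - 1) * s1 * (c2 - s2 * i) ∧
      (1 - 0) * s1 = -(0 - t) * s2 * (c0 - s0 * i) ∧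
      (1 - t) * s1 = -(t - 0) * s0 * (c2 + s2 * i) ∧
      (0 - 1) * s0 = -(1 - t) * s2 * (c1 + s1 * i) ∧
      (t - 0) * s2 = -(0 - 1) * s1 * (c0 + s0 * i) := by
    intro s0 s1 s2 c0 c1 c2 i h2 hs2 hc2 q0 q1 hI ht
    have e1 : (t - 1) * s2 = -(1 - 0) * s0 * (c1 - s1 * i) := by linear_combination ht - hs2
    refine ⟨e1, ?_, ?_, ?_, ?_, ?_⟩
    · apply mul_left_cancel₀ h2
      grind
    · linear_combination (-(c0 - s0 * i)) * ht - s1 * q0 + s1 * s0 ^ 2 * hI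
    · apply mul_left_cancel₀ h2
      grind
    · linear_combination (-(c1 + s1 * i)) * e1 + s0 * q1 - s0 * s1 ^ 2 * hI
    · linear_combination ht
  obtain ⟨k1, k2, k3, k4, k5, k6⟩ := key _ _ _ _ _ _ _ h2 hs2 hc2 q0 q1 hI ht
  rcases hc with rfl | rfl | rfl | rfl | rfl | rfl
  · rw [show (if evenC (0, 1, 2) then (1 : ℤ) else -1) = 1 from rfl, ev]; exact k1
  · rw [show (if evenC (1, 2, 0) then (1 : ℤ) else -1) = 1 from rfl, ev]; exact k2
  · rw [show (if evenC (2, 0, 1) then (1 : ℤ) else -1) = 1 from rfl, ev]; exact k3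
  · rw [show (if evenC (0, 2, 1) then (1 : ℤ) else -1) = -1 from rfl, od]; exact k4
  · rw [show (if evenC (2, 1, 0) then (1 : ℤ) else -1) = -1 from rfl, od]; exact k5
  · rw [show (if evenC (1, 0, 2) then (1 : ℤ) else -1) = -1 from rfl, od]; exact k6

lemma numC_conj (θ) (c d) : (starRingEnd ℂ) (numC (tau θ) (tauc θ) (c, d)) =
    numC (tau θ) (tauc θ) (c, !d) := by
  have : ∀ j, (starRingEnd ℂ) (ptC (tau θ) (tauc θ) d j) = ptC (tau θ) (tauc θ) (!d) j := by
    intro j; fin_cases j <;> cases d <;> simp [ptC, conj_tau, conj_tauc]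
  simp [numC, this]

lemma denC_conj (θ) (c d) : (starRingEnd ℂ) (denC (tau θ) (tauc θ) (c, d)) =
    denC (tau θ) (tauc θ) (c, !d) := by
  have : ∀ j, (starRingEnd ℂ) (ptC (tau θ) (tauc θ) d j) = ptC (tau θ) (tauc θ) (!d) j := by
    intro j; fin_cases j <;> cases d <;> simp [ptC, conj_tau, conj_tauc]
  simp [denC, this]

lemma step_direct {θ : Fin 3 → ℝ} (h : Tri θ) {z z' : ℂ} {c : Code} (hc : c ∈ all6)
    (hs : Step θ z z' c (if evenC c then 1 else -1)) :
    z' * denC (tau θ) (tauc θ) (c, true) = z * numC (tau θ) (tauc θ) (c, true) := by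
  have h2 : ((Real.sin (θ c.2.2) : ℝ) : ℂ) ≠ 0 := Complex.ofReal_ne_zero.2 (h.sin_pos _).ne'
  have hr := ratio_direct h c hc
  unfold Step at hs
  apply mul_right_cancel₀ h2
  linear_combination (denC (tau θ) (tauc θ) (c, true)) * hs - z * hr

lemma step_any {θ : Fin 3 → ℝ} (h : Tri θ) {z z' : ℂ} {c : Code} (hc : c ∈ all6)
    (d : Bool) (hs : Step θ z z' c (if evenC c = d then 1 else -1)) :
    z' * denC (tau θ) (tauc θ) (c, d) = z * numC (tau θ) (tauc θ) (c, d) := by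
  cases d
  · have h1 := hs.conj
    have h2 := step_direct h hc (z := (starRingEnd ℂ) z) (z' := (starRingEnd ℂ) z') (by
      convert h1 using 1; cases evenC c <;> simp)
    have h3 := congrArg (starRingEnd ℂ) h2
    simpa [numC_conj, denC_conj] using h3
  · exact step_direct h hc hs

lemma anyClose_good {θ : Fin 3 → ℝ} (h : Tri θ) (a b c d : Code × Bool)
    (hh : inTable (strip (closeB a b c d)) = true) (z0 z1 z2 z3 z4 : ℂ) (h0 : z0 ≠ 0)
    (hs : z0 + z1 + z2 + z3 + z4 = 0)
    (ha : z1 * denC (tau θ) (tauc θ) a = z0 * numC (tau θ) (tauc θ) a)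
    (hb : z2 * denC (tau θ) (tauc θ) b = z1 * numC (tau θ) (tauc θ) b)
    (hc : z3 * denC (tau θ) (tauc θ) c = z2 * numC (tau θ) (tauc θ) c)
    (hd : z4 * denC (tau θ) (tauc θ) d = z3 * numC (tau θ) (tauc θ) d) : Good θ := by
  obtain ⟨p0, p1, p2, p3, p4⟩ := tau_props h
  have h1 := strip_ok p0 p1 p2 p3 _ (close_ok _ _ a b c d z0 z1 z2 z3 z4 h0 hs ha hb hc hd)
  simp only [inTable, List.any_eq_true] at hh
  obtain ⟨e, he, hz⟩ := hh
  have h2 := evB_zero (tau θ) (tauc θ) _ hz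
  rw [evB_sub, h1, zero_sub, neg_eq_zero] at h2
  have h3 : evB (tauc θ) (tau θ) e = 0 := by
    have := evB_conj (tau θ) (tauc θ) e
    rw [conj_tau, conj_tauc, h2] at this
    simpa using this.symm
  exact good_alg h rfl rfl (table_ok _ _ p0 p1 p2 p3 p4 e he h2 h3)

/-- The normalised situation. -/
lemma stage0 {θ : Fin 3 → ℝ} (h : Tri θ) (z0 z1 z2 z3 z4 : ℂ) (h0 : z0 ≠ 0) (h1 : z1 ≠ 0)
    (h2 : z2 ≠ 0) (h3 : z3 ≠ 0) (h4 : z4 ≠ 0) (hs : z0 + z1 + z2 + z3 + z4 = 0)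
    (a b c d : Code) (ha : a ∈ all6) (hb : b ∈ all6) (hc : c ∈ all6) (hd : d ∈ all6)
    (hm : mOK a b c d = true)
    (sa : Step θ z0 z1 a 1) (sb : Step θ z1 z2 b 1) (sc : Step θ z2 z3 c 1)
    (sd : Step θ z3 z4 d 1) (se : Step θ z4 z0 e5 (-1)) : Good θ := by
  have hk := check_all
  simp only [List.all_eq_true] at hk
  have hk := hk a ha b hb c hc d hd
  have ta := step_any h ha (evenC a) (by simpa using sa)
  have tb := step_any h hb (evenC b) (by simpa using sb)
  have tc := step_any h hc (evenC c) (by simpa using sc)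
  have td := step_any h hd (evenC d) (by simpa using sd)
  have te := step_any h (c := e5) (by decide) true (by simpa [evenC, e5] using se)
  simp only [finalCheck, hm, Bool.not_true, Bool.false_or, Bool.or_eq_true, anyClose] at hk
  rcases hk with hk | (((hk | hk) | hk) | hk) | hk
  · -- moduli
    have hn : ∀ x, ‖cis x‖ = 1 := by
      intro x
      have : cis x = Complex.exp ((-x : ℝ) * Complex.I) := by
        rw [Complex.exp_mul_I]; simp [cis]; ring
      rw [this, Complex.norm_exp_ofReal_mul_I]
    have lg : ∀ (z z' : ℂ) (c : Code) (ε : ℤ), z ≠ 0 → z' ≠ 0 → Step θ z z' c ε →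
        Real.log ‖z'‖ + Real.log (Real.sin (θ c.2.2)) =
          Real.log ‖z‖ + Real.log (Real.sin (θ c.1)) := by
      intro z z' c ε hz hz' hst
      have e := congrArg norm hst
      simp only [norm_mul, norm_neg, hn, mul_one, Complex.norm_real, Real.norm_eq_abs,
        abs_of_pos (h.sin_pos _)] at e
      rw [← Real.log_mul (by simpa) (h.sin_pos _).ne', e,
        Real.log_mul (by simpa) (h.sin_pos _).ne']
    have la := lg _ _ _ _ h0 h1 sa
    have lb := lg _ _ _ _ h1 h2 sb
    have lc := lg _ _ _ _ h2 h3 sc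
    have ld := lg _ _ _ _ h3 h4 sd
    have le := lg _ _ _ _ h4 h0 se
    set L : Fin 3 → ℝ := fun j => Real.log (Real.sin (θ j)) with hL
    have dec : ∀ j, Real.log (Real.sin (θ j)) = (if j = 0 then 1 else 0 : ℤ) * L 0 +
        (if j = 1 then 1 else 0 : ℤ) * L 1 + (if j = 2 then 1 else 0 : ℤ) * L 2 := by
      intro j; fin_cases j <;> simp [hL]
    rw [dec, dec a.1] at la
    rw [dec, dec b.1] at lb
    rw [dec, dec c.1] at lc
    rw [dec, dec d.1] at ld
    rw [dec, dec e5.1] at le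
    have tot : (expo 0 a b c d e5 : ℝ) * L 0 + (expo 1 a b c d e5 : ℝ) * L 1 +
        (expo 2 a b c d e5 : ℝ) * L 2 = 0 := by
      simp only [expo, cnt]
      push_cast
      push_cast at la lb lc ld le
      linarith
    have sum0 : expo 0 a b c d e5 + expo 1 a b c d e5 + expo 2 a b c d e5 = 0 := by
      have one : ∀ j : Fin 3, (if j = 0 then 1 else 0 : ℤ) + (if j = 1 then 1 else 0) +
        (if j = 2 then 1 else 0) = 1 := by decide
      have := one a.1; have := one b.1; have := one c.1; have := one d.1; have := one e5.1
      have := one a.2.2; have := one b.2.2; have := one c.2.2; have := one d.2.2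
      have := one e5.2.2
      simp only [expo, cnt]
      linarith
    have inj : ∀ j k, j ≠ k → L j = L k → Good θ := by
      intro j k hjk e
      exact good_iso' h j k hjk (Real.log_injOn_pos (h.sin_pos j) (h.sin_pos k) e)
    generalize expo 0 a b c d e5 = x0 at *
    generalize expo 1 a b c d e5 = x1 at *
    generalize expo 2 a b c d e5 = x2 at *
    simp only [isoExp, Bool.or_eq_true, Bool.and_eq_true, decide_eq_true_eq] at hk
    rcases hk with (⟨u, v⟩ | ⟨u, v⟩) | ⟨u, v⟩
    · apply inj 1 2 (by decide)
      have w : x2 = -x1 := by omega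
      subst u w
      have v' : (x1 : ℝ) ≠ 0 := by exact_mod_cast v
      apply mul_left_cancel₀ v'; push_cast at tot; linarith
    · apply inj 2 0 (by decide)
      have w : x0 = -x2 := by omega
      subst u w
      have v' : (x2 : ℝ) ≠ 0 := by exact_mod_cast v
      apply mul_left_cancel₀ v'; push_cast at tot; linarith
    · apply inj 0 1 (by decide)
      have w : x1 = -x0 := by omega
      subst u w
      have v' : (x0 : ℝ) ≠ 0 := by exact_mod_cast v
      apply mul_left_cancel₀ v'; push_cast at tot; linarith
  · exact anyClose_good h _ _ _ _ hk z0 z1 z2 z3 z4 h0 hs ta tb tc td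
  · exact anyClose_good h _ _ _ _ hk z1 z2 z3 z4 z0 h1 (by linear_combination hs) tb tc td te
  · exact anyClose_good h _ _ _ _ hk z2 z3 z4 z0 z1 h2 (by linear_combination hs) tc td te ta
  · exact anyClose_good h _ _ _ _ hk z3 z4 z0 z1 z2 h3 (by linear_combination hs) td te ta tb
  · exact anyClose_good h _ _ _ _ hk z4 z0 z1 z2 z3 h4 (by linear_combination hs) te ta tb tc

end Pent

namespace Pent

lemma cis_exp (x : ℝ) : cis x = Complex.exp ((-x : ℝ) * Complex.I) := by
  rw [Complex.exp_mul_I]; simp [cis]; ring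

lemma stage1a {θ : Fin 3 → ℝ} (h : Tri θ) (z : Fin 5 → ℂ) (hz : ∀ i, z i ≠ 0)
    (hs : ∑ i, z i = 0) (s : Fin 5 → Equiv.Perm (Fin 3)) (ε : Fin 5 → ℤ)
    (he : ε 4 = -1) (he' : ∀ i, i ≠ 4 → ε i = 1)
    (hst : ∀ i, Step θ (z i) (z (i + 1)) (code (s i)) (ε i))
    (hc : ∀ j, (∑ i, if s i 1 = j then ε i else 0) = 1) : Good θ := by
  obtain ⟨p, hp⟩ : ∃ p : Equiv.Perm (Fin 3), p = s 4 * Equiv.swap 0 1 := ⟨_, rfl⟩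
  have hp0 : p 0 = s 4 1 := by simp [hp]
  have hst' : ∀ i, Step (fun j => θ (p j)) (z i) (z (i + 1)) (code (p⁻¹ * s i)) (ε i) := by
    intro i
    have := hst i
    simpa [Step, code] using this
  have h4 : code (p⁻¹ * s 4) = e5 := by
    have : p⁻¹ * s 4 = Equiv.swap 0 1 := by rw [hp]; simp
    rw [this]; decide
  have i0 := he' 0 (by decide)
  have i1 := he' 1 (by decide)
  have i2 := he' 2 (by decide)
  have i3 := he' 3 (by decide)
  have s0 := hst' 0
  have s1 := hst' 1
  have s2 := hst' 2
  have s3 := hst' 3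
  have s4 := hst' 4
  rw [h4, he] at s4
  rw [i0] at s0
  rw [i1] at s1
  rw [i2] at s2
  rw [i3] at s3
  rw [Fin.sum_univ_five] at hs
  refine Good.perm p (stage0 (h.perm p) (z 0) (z 1) (z 2) (z 3) (z 4) (hz _) (hz _) (hz _) (hz _)
    (hz _) hs _ _ _ _ (code_mem _) (code_mem _) (code_mem _) (code_mem _) ?_ s0 s1 s2 s3 s4)
  have hk : ∀ j, (∑ i, if (p⁻¹ * s i) 1 = j then ε i else 0) = 1 := by
    intro j
    rw [← hc (p j)]
    apply Finset.sum_congr rfl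
    intro i _
    have : (p⁻¹ * s i) 1 = j ↔ s i 1 = p j := by
      rw [Equiv.Perm.mul_apply, Equiv.Perm.inv_eq_iff_eq]
    simp only [this]
  have h41 : (p⁻¹ * s 4) 1 = 0 := by
    have := congrArg (fun c : Code => c.2.1) h4
    exact this
  simp only [Fin.sum_univ_five, h41, he, i0, i1, i2, i3] at hk
  have m : ∀ x0 x1 x2 x3 : Fin 3, (∀ j, (if x0 = j then (1 : ℤ) else 0) + (if x1 = j then 1 else 0) +
      (if x2 = j then 1 else 0) + (if x3 = j then 1 else 0) + (if 0 = j then -1 else 0) = 1) →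
      cnt 0 x0 x1 x2 x3 0 = 3 ∧ cnt 1 x0 x1 x2 x3 0 = 1 ∧ cnt 2 x0 x1 x2 x3 0 = 1 := by decide
  obtain ⟨m0, m1, m2⟩ := m _ _ _ _ hk
  simp only [mOK, code, m0, m1, m2, decide_true, Bool.and_true]

lemma stage1 {θ : Fin 3 → ℝ} (h : Tri θ) (z : Fin 5 → ℂ) (hz : ∀ i, z i ≠ 0)
    (hs : ∑ i, z i = 0) (s : Fin 5 → Equiv.Perm (Fin 3)) (ε : Fin 5 → ℤ)
    (he : ∀ i, ε i = 1 ∨ ε i = -1)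
    (hst : ∀ i, Step θ (z i) (z (i + 1)) (code (s i)) (ε i))
    (hc : ∀ j, (∑ i, if s i 1 = j then ε i else 0) = 1)
    (h3 : ∑ i, ε i = 3) : Good θ := by
  have comb : ∀ b : Fin 5 → Bool, (∑ i, if b i = true then (1 : ℤ) else -1) = 3 →
      ∃ r, b r = false ∧ ∀ i, i ≠ r → b i = true := by decide
  obtain ⟨r, hr, hr'⟩ := comb (fun i => decide (ε i = 1)) (by
    rw [← h3]
    apply Finset.sum_congr rfl
    intro i _
    rcases he i with e | e <;> simp [e])
  simp only [decide_eq_false_iff_not, decide_eq_true_eq] at hr hr'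
  have hr : ε r = -1 := (he r).resolve_left hr
  have e4 : 4 + (r + 1) = r := (by decide : ∀ r : Fin 5, 4 + (r + 1) = r) r
  refine stage1a h (fun i => z (i + (r + 1))) (fun i => hz _) ?_ (fun i => s (i + (r + 1)))
    (fun i => ε (i + (r + 1))) ?_ ?_ ?_ ?_
  · rw [← hs]; exact Equiv.sum_comp (Equiv.addRight (r + 1)) z
  · rw [e4, hr]
  · intro i hi
    apply hr'
    intro h
    apply hi
    have := h.trans e4.symm
    exact add_right_cancel this
  · intro i
    have := hst (i + (r + 1))
    rwa [add_right_comm i (r + 1) 1] at this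
  · intro j
    rw [← hc j]
    exact Equiv.sum_comp (Equiv.addRight (r + 1)) (fun i => if s i 1 = j then ε i else 0)

lemma stage2 {θ : Fin 3 → ℝ} (h : Tri θ) (z : Fin 5 → ℂ) (hz : ∀ i, z i ≠ 0)
    (hs : ∑ i, z i = 0) (s : Fin 5 → Equiv.Perm (Fin 3)) (ε : Fin 5 → ℤ)
    (he : ∀ i, ε i = 1 ∨ ε i = -1)
    (hst : ∀ i, Step θ (z i) (z (i + 1)) (code (s i)) (ε i)) : Good θ := by
  have hp : ∏ i, z (i + 1) = ∏ i, z i := Equiv.prod_comp (Equiv.addRight (1 : Fin 5)) z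
  have hzp : ∏ i, z i ≠ 0 := Finset.prod_ne_zero_iff.2 fun i _ => hz i
  have P : ∏ i, (z (i + 1) * (Real.sin (θ (s i 2)) : ℂ)) =
      ∏ i, (z i * (-1 * (Real.sin (θ (s i 0)) : ℂ) * cis (ε i * θ (s i 1)))) := by
    apply Finset.prod_congr rfl
    intro i _
    have e : z (i + 1) * (Real.sin (θ (s i 2)) : ℂ) =
      - z i * Real.sin (θ (s i 0)) * cis (ε i * θ (s i 1)) := hst i
    rw [e]; ring
  rw [Finset.prod_mul_distrib, Finset.prod_mul_distrib, hp] at P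
  have P := mul_left_cancel₀ hzp P
  rw [Finset.prod_mul_distrib, Finset.prod_mul_distrib] at P
  have hcis : ∏ i, cis (ε i * θ (s i 1)) = cis (∑ i, ε i * θ (s i 1)) := by
    simp only [cis_exp]
    rw [← Complex.exp_sum, ← Finset.sum_mul]
    push_cast; simp
  rw [hcis] at P
  obtain ⟨S, hS⟩ : ∃ S, S = ∑ i, (ε i : ℝ) * θ (s i 1) := ⟨_, rfl⟩
  rw [← hS] at P
  have pc : 0 < ∏ i, Real.sin (θ (s i 2)) := Finset.prod_pos fun i _ => h.sin_pos _
  have pa : 0 < ∏ i, Real.sin (θ (s i 0)) := Finset.prod_pos fun i _ => h.sin_pos _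
  rw [← Complex.ofReal_prod, ← Complex.ofReal_prod] at P
  generalize ∏ i, Real.sin (θ (s i 2)) = C at P pc
  generalize ∏ i, Real.sin (θ (s i 0)) = A at P pa
  simp only [Finset.prod_const, Finset.card_univ, Fintype.card_fin] at P
  have hA : (A : ℂ) ≠ 0 := Complex.ofReal_ne_zero.2 pa.ne'
  have re := congrArg Complex.re P
  have im := congrArg Complex.im P
  norm_num [cis, -Complex.ofReal_sin, -Complex.ofReal_cos] at re im
  have hcos : Real.cos S = -1 := by
    have hsin : Real.sin S = 0 := im.resolve_left pa.ne'
    rcases Real.sin_eq_zero_iff_cos_eq.1 hsin with h1 | h1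
    · rw [h1] at re; linarith
    · exact h1
  obtain ⟨k, hk⟩ := Real.cos_eq_neg_one_iff.1 hcos
  obtain ⟨n, hn⟩ : ∃ n : Fin 3 → ℤ, ∀ j, n j = ∑ i, if s i 1 = j then ε i else 0 :=
    ⟨_, fun _ => rfl⟩
  have hSn : S = ∑ j, (n j : ℝ) * θ j := by
    rw [hS]
    simp only [hn]
    push_cast
    simp only [Finset.sum_mul]
    rw [Finset.sum_comm]
    apply Finset.sum_congr rfl
    intro i _
    simp [ite_mul]
  have hb : ∀ j, |n j| ≤ 5 := by
    intro j
    rw [hn]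
    refine (Finset.abs_sum_le_sum_abs _ _).trans ?_
    have : ∀ i ∈ Finset.univ, |if s i 1 = j then ε i else 0| ≤ (1 : ℤ) := by
      intro i _
      split_ifs
      · rcases he i with e | e <;> simp [e]
      · simp
    refine (Finset.sum_le_sum this).trans ?_
    simp
  by_cases hcst : n 0 = n 1 ∧ n 1 = n 2
  swap
  · have e : (∑ j, (n j : ℝ) * θ j) + (-(2 * k + 1) : ℤ) * Real.pi = 0 := by
      rw [← hSn, ← hk]; push_cast; ring
    exact ⟨n, _, hb, bound_m h n _ hb e, e, hcst⟩
  obtain ⟨h01, h12⟩ := hcst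
  have hall : ∀ j, n j = n 0 := by
    intro j; fin_cases j
    · rfl
    · exact h01.symm
    · exact (h01.trans h12).symm
  have hK : n 0 = 2 * k + 1 := by
    have e : (n 0 : ℝ) * Real.pi = (2 * k + 1 : ℤ) * Real.pi := by
      rw [← h.sum]
      rw [Fin.sum_univ_three, hall 1, hall 2] at hSn
      push_cast
      have := h.sum
      rw [← this] at hk
      linarith
    exact_mod_cast mul_right_cancel₀ Real.pi_pos.ne' e
  have hsum : 3 * n 0 = ∑ i, ε i := by
    have : ∑ j, n j = ∑ i, ε i := by
      simp only [hn]
      rw [Finset.sum_comm]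
      apply Finset.sum_congr rfl
      intro i _
      simp
    rw [← this, Fin.sum_univ_three, hall 1, hall 2]; ring
  have hle : n 0 = 1 ∨ n 0 = -1 := by
    rw [Fin.sum_univ_five] at hsum
    have := he 0; have := he 1; have := he 2; have := he 3; have := he 4
    omega
  rcases hle with h1 | h1
  · refine stage1 h z hz hs s ε he hst ?_ ?_
    · intro j; rw [← hn, hall, h1]
    · rw [← hsum, h1]; norm_num
  · refine stage1 h (fun i => (starRingEnd ℂ) (z i)) ?_ ?_ s (fun i => - ε i) ?_ ?_ ?_ ?_
    · intro i; simpa using hz i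
    · rw [← map_sum, hs, map_zero]
    · intro i; rcases he i with e | e <;> simp [e]
    · intro i; exact (hst i).conj
    · intro j
      have : ∀ i, (if s i 1 = j then - ε i else 0) = -(if s i 1 = j then ε i else 0) := by
        intro i; split_ifs <;> simp
      simp only [this, Finset.sum_neg_distrib]
      rw [← hn, hall, h1]; norm_num
    · rw [Finset.sum_neg_distrib, ← hsum, h1]; norm_num

def toC : Plane ≃ₗᵢ[ℝ] ℂ := Complex.orthonormalBasisOneI.repr.symm

lemma geo_complex (x y : ℂ) (hx : x ≠ 0) (hy : y ≠ 0) (A C : ℝ)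
    (h : ‖y‖ * Real.sin C = ‖x‖ * Real.sin A) :
    ∃ ε : ℤ, (ε = 1 ∨ ε = -1) ∧
      y * Real.sin C = x * Real.sin A * cis (ε * InnerProductGeometry.angle x y) := by
  rw [InnerProductGeometry.angle_comm, Complex.angle_eq_abs_arg hy hx]
  have nx : (‖x‖ : ℂ) ≠ 0 := by simpa using hx
  have hyx : y * ‖x‖ = x * ‖y‖ * cis (-(y / x).arg) := by
    have := Complex.norm_mul_exp_arg_mul_I (y / x)
    rw [cis_exp, neg_neg]
    rw [norm_div] at this
    push_cast at this
    field_simp at this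
    linear_combination -this
  have main : y * Real.sin C = x * Real.sin A * cis (-(y / x).arg) := by
    apply mul_right_cancel₀ nx
    have hh : (‖y‖ : ℂ) * (Real.sin C : ℂ) = ‖x‖ * (Real.sin A : ℂ) := by exact_mod_cast h
    linear_combination (Real.sin C : ℂ) * hyx + x * cis (-(y / x).arg) * hh
  rcases abs_choice (y / x).arg with e | e
  · refine ⟨-1, Or.inr rfl, ?_⟩
    rw [main, e]; norm_num
  · refine ⟨1, Or.inl rfl, ?_⟩
    rw [main, e]; norm_num

lemma geo (a b c : Plane) (hab : a ≠ b) (hbc : b ≠ c) :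
    ∃ ε : ℤ, (ε = 1 ∨ ε = -1) ∧
      (toC c - toC b) * Real.sin (∠ a c b) =
        - (toC b - toC a) * Real.sin (∠ b a c) * cis (ε * ∠ c b a) := by
  have hx : toC a - toC b ≠ 0 := by
    rw [sub_ne_zero]; exact fun h => hab (toC.injective h)
  have hy : toC c - toC b ≠ 0 := by
    rw [sub_ne_zero]; exact fun h => hbc (toC.injective h).symm
  have hn : ‖toC c - toC b‖ * Real.sin (∠ a c b) = ‖toC a - toC b‖ * Real.sin (∠ b a c) := by
    have l := EuclideanGeometry.law_sin a c b
    rw [← map_sub, ← map_sub, LinearIsometryEquiv.norm_map, LinearIsometryEquiv.norm_map,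
      ← dist_eq_norm, ← dist_eq_norm]
    rw [dist_comm a b]
    linarith
  obtain ⟨ε, h1, h2⟩ := geo_complex _ _ hx hy _ _ hn
  refine ⟨ε, h1, ?_⟩
  have ha : InnerProductGeometry.angle (toC a - toC b) (toC c - toC b) = ∠ c b a := by
    rw [EuclideanGeometry.angle_comm]
    rw [← map_sub, ← map_sub]
    exact LinearIsometry.angle_map toC.toLinearIsometry _ _
  rw [h2, ha]; ring

lemma tri_of {T : Fin 3 → Plane} (hT : IsTriangle T) : Tri (triAngle T) := by
  unfold IsTriangle at hT
  have hr : Set.range T = {T 0, T 1, T 2} := by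
    ext x; simp [Fin.exists_fin_succ, eq_comm]
  have ai : AffineIndependent ℝ T := affineIndependent_iff_not_collinear.2 hT
  have inj := ai.injective
  constructor
  · intro j
    unfold triAngle
    apply EuclideanGeometry.angle_pos_of_not_collinear
    intro hcol
    apply hT
    have e : Set.range T = {T (j + 1), T j, T (j + 2)} := by
      rw [hr]
      fin_cases j <;> ext x <;> simp <;> tauto
    rw [e]
    exact hcol
  · have := EuclideanGeometry.angle_add_angle_add_angle_eq_pi (p₁ := T 1) (p₂ := T 0) (T 2)
      (fun h => by simpa using inj h)
    have e0 : triAngle T 0 = ∠ (T 1) (T 0) (T 2) := rfl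
    have e1 : triAngle T 1 = ∠ (T 2) (T 1) (T 0) := rfl
    have e2 : triAngle T 2 = ∠ (T 0) (T 2) (T 1) := rfl
    rw [e0, e1, e2]; linarith

end Pent


open Pent

/-- If `q₁, …, q₅` are five distinct points such that each triangle
`qᵢq_{i+1}q_{i+2}` (indices mod 5) is similar to the non-degenerate triangle `T`,
then the angles of `T` satisfy a non-trivial linear equation. -/
theorem stmt_13 (T : Fin 3 → Plane) (hT : IsTriangle T)
    (q : Fin 5 → Plane) (hq : Function.Injective q)
    (hsim : ∀ i : Fin 5, TripleSimilar T (q i) (q (i + 1)) (q (i + 2))) :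
    SatisfiesNontrivLinear (triAngle T 0) (triAngle T 1) (triAngle T 2) := by
  choose hn s hs using hsim
  have g : ∀ i, ∃ ε : ℤ, (ε = 1 ∨ ε = -1) ∧ Step (triAngle T) (toC (q (i + 1)) - toC (q i))
      (toC (q (i + 1 + 1)) - toC (q (i + 1))) (code (s i)) ε := by
    intro i
    have n1 : i ≠ i + 1 := by revert i; decide
    have n2 : i + 1 ≠ i + 1 + 1 := by revert i; decide
    obtain ⟨ε, h1, h2⟩ := geo (q i) (q (i + 1)) (q (i + 1 + 1)) (fun h => n1 (hq h))
      (fun h => n2 (hq h))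
    refine ⟨ε, h1, ?_⟩
    have e0 := hs i 0
    have e1 := hs i 1
    have e2 := hs i 2
    have e3 : i + 2 = i + 1 + 1 := (by decide : ∀ i : Fin 5, i + 2 = i + 1 + 1) i
    rw [e3] at e0 e1 e2
    simp only [Step, code]
    rw [← e0, ← e1, ← e2]
    exact h2
  choose ε h1 h2 using g
  obtain ⟨n, m, hn, hm, e, hne⟩ := stage2 (tri_of hT) (fun i => toC (q (i + 1)) - toC (q i)) (by
    intro i h
    have n1 : i + 1 ≠ i := (by decide : ∀ i : Fin 5, i + 1 ≠ i) i
    exact n1 (hq (toC.injective (sub_eq_zero.1 h)))) (by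
    rw [Finset.sum_sub_distrib, sub_eq_zero]
    exact Equiv.sum_comp (Equiv.addRight (1 : Fin 5)) (fun i => toC (q i))) s ε h1 h2
  refine ⟨n 0, n 1, n 2, m, hn _, hn _, hn _, hm, ?_, fun h => hne ⟨h.1, h.2.1⟩⟩
  rw [Fin.sum_univ_three] at e
  exact e

end
end

section
/- Let q₁, q₂, q₃, q₄, q₅ be points in ℝ², not all equal. Then it is not the case that each of the four triples (q₁, q₂, q₃), (q₁, q₂, q₄), (q₁, q₃, q₅), (q₂, q₄, q₅) has all three of its pairwise distances equal. -/
theorem aux_gram (a b c d e f D : ℝ) (h1 : a*a+b*b = D) (h2 : c*c+d*d = D) (h3 : e*e+f*f = D)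
    (h4 : a*c+b*d = D/2) (h5 : a*e+b*f = D/2) (h6 : c*e+d*f = D/2) : D = 0 := by
  have key : (a*a+b*b)*(c*c+d*d)*(e*e+f*f) + 2*(a*c+b*d)*(a*e+b*f)*(c*e+d*f)
      - (a*a+b*b)*(c*e+d*f)^2 - (c*c+d*d)*(a*e+b*f)^2 - (e*e+f*f)*(a*c+b*d)^2 = 0 := by ring
  rw [h1, h2, h3, h4, h5, h6] at key
  have : D^3 = 0 := by linarith
  exact pow_eq_zero_iff (by norm_num) |>.1 this

theorem aux_dist (p q : EuclideanSpace ℝ (Fin 2)) :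
    (dist p q)^2 = (p 0 - q 0)^2 + (p 1 - q 1)^2 := by
  rw [EuclideanSpace.dist_eq, Real.sq_sqrt (by positivity)]
  simp [Fin.sum_univ_two, Real.dist_eq, sq_abs]

/-- If `q₁, …, q₅` are points of the plane, not all equal, then the four triples
`(q₁,q₂,q₃), (q₁,q₂,q₄), (q₁,q₃,q₅), (q₂,q₄,q₅)` (the hypergraph `C₅⁻`) cannot
all have their three pairwise distances equal. -/
theorem stmt_14 (q₁ q₂ q₃ q₄ q₅ : EuclideanSpace ℝ (Fin 2))
    (hne : ¬(q₁ = q₂ ∧ q₁ = q₃ ∧ q₁ = q₄ ∧ q₁ = q₅)) :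
    ¬((dist q₁ q₂ = dist q₂ q₃ ∧ dist q₂ q₃ = dist q₃ q₁) ∧
      (dist q₁ q₂ = dist q₂ q₄ ∧ dist q₂ q₄ = dist q₄ q₁) ∧
      (dist q₁ q₃ = dist q₃ q₅ ∧ dist q₃ q₅ = dist q₅ q₁) ∧
      (dist q₂ q₄ = dist q₄ q₅ ∧ dist q₄ q₅ = dist q₅ q₂)) := by
  rintro ⟨⟨h1, h2⟩, ⟨h3, h4⟩, ⟨h5, h6⟩, ⟨h7, h8⟩⟩
  have c13 := dist_comm q₁ q₃
  obtain ⟨r, hr⟩ : ∃ r, r = dist q₁ q₂ := ⟨_, rfl⟩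
  have e23 : dist q₂ q₃ = r := by linarith
  have e31 : dist q₃ q₁ = r := by linarith
  have e41 : dist q₄ q₁ = r := by linarith
  have e35 : dist q₃ q₅ = r := by linarith
  have e51 : dist q₅ q₁ = r := by linarith
  have e52 : dist q₅ q₂ = r := by linarith
  have s12 := aux_dist q₁ q₂
  have s23 := aux_dist q₂ q₃
  have s31 := aux_dist q₃ q₁
  have s35 := aux_dist q₃ q₅
  have s51 := aux_dist q₅ q₁
  have s52 := aux_dist q₅ q₂
  rw [← hr] at s12
  rw [e23] at s23
  rw [e31] at s31
  rw [e35] at s35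
  rw [e51] at s51
  rw [e52] at s52
  have hD : r^2 = 0 := aux_gram (q₂ 0 - q₁ 0) (q₂ 1 - q₁ 1) (q₃ 0 - q₁ 0) (q₃ 1 - q₁ 1)
    (q₅ 0 - q₁ 0) (q₅ 1 - q₁ 1) (r^2) (by linarith) (by linarith) (by linarith)
    (by linarith) (by linarith) (by linarith)
  have hr0 : r = 0 := pow_eq_zero_iff (by norm_num) |>.1 hD
  rw [hr0] at hr e31 e41 e51
  exact hne ⟨dist_eq_zero.1 hr.symm, (dist_eq_zero.1 e31).symm, (dist_eq_zero.1 e41).symm,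
    (dist_eq_zero.1 e51).symm⟩
end

section
/- Let T be a non-degenerate triangle, ε > 0, and P a finite subset of ℝ². Let H(P) denote the family of 3-element subsets of P that form a triangle ε-similar to T; for x ∈ P let deg(x) be the number of members of H(P) containing x, and for x, y ∈ P let deg(x, y) be the number of members of H(P) containing both x and y. Suppose x, y ∈ P are distinct, deg(x, y) = 0, and deg(x) ≥ deg(y). Then there exists η > 0 such that for every point x′ ∉ P with 0 < dist(x′, x) < η, the set P′ = (P ∪ {x′}) \ {y} satisfies |H(P′)| ≥ |H(P)|; moreover, if deg(x) > deg(y), then |H(P′)| > |H(P)|. -/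
open scoped Classical

open EuclideanGeometry

noncomputable section

/-- The number of 3-element subsets of `P` forming a triangle ε-similar to `T`
and containing `x`. -/
noncomputable def degP (ε : ℝ) (T : Fin 3 → Plane) (P : Finset Plane) (x : Plane) : ℕ :=
  Set.ncard {S : Finset Plane | S ⊆ P ∧ S.card = 3 ∧ FormsSimilar ε T S ∧ x ∈ S}

/-- The number of 3-element subsets of `P` forming a triangle ε-similar to `T`
and containing both `x` and `y`. -/
noncomputable def codegP (ε : ℝ) (T : Fin 3 → Plane) (P : Finset Plane)
    (x y : Plane) : ℕ :=
  Set.ncard {S : Finset Plane | S ⊆ P ∧ S.card = 3 ∧ FormsSimilar ε T S ∧ x ∈ S ∧ y ∈ S}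

lemma formsSimilar_eventually (ε : ℝ) (T : Fin 3 → Plane) (S : Finset Plane)
    (x : Plane) (hxS : x ∈ S) (hS : FormsSimilar ε T S) :
    ∀ᶠ x' in nhds x, FormsSimilar ε T (insert x' (S.erase x)) := by
  obtain ⟨p, hp, htri, σ, hσ⟩ := hS
  have haff : AffineIndependent ℝ p := affineIndependent_iff_not_collinear.2 htri
  have hinj : Function.Injective p := haff.injective
  have hx' : x ∈ Set.range p := by rw [← hp]; exact hxS
  obtain ⟨i, rfl⟩ := hx'
  have hcont : Continuous (fun z : Plane => Function.update p i z) :=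
    continuous_const.update i continuous_id
  have hup : Function.update p i (p i) = p := Function.update_eq_self i p
  have h1 : ∀ᶠ x' in nhds (p i), AffineIndependent ℝ (Function.update p i x') := by
    have hopen : IsOpen {q : Fin 3 → Plane | AffineIndependent ℝ q} :=
      isOpen_setOfPred_affineIndependent
    refine hcont.continuousAt.eventually_mem (hopen.mem_nhds ?_)
    show AffineIndependent ℝ (Function.update p i (p i))
    rw [hup]; exact haff
  have h2 : ∀ j, ∀ᶠ x' in nhds (p i),
      |triAngle (Function.update p i x') j - triAngle T (σ j)| < ε := by
    intro j
    have ha : ContinuousAt (fun q : Fin 3 → Plane => triAngle q j) p := by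
      have hj1 : p (j + 1) ≠ p j := fun h => by
        have := hinj h; revert this; fin_cases j <;> decide
      have hj2 : p (j + 2) ≠ p j := fun h => by
        have := hinj h; revert this; fin_cases j <;> decide
      have := EuclideanGeometry.continuousAt_angle
        (x := (p (j + 1), p j, p (j + 2))) hj1 hj2
      exact ContinuousAt.comp (f := fun q : Fin 3 → Plane => (q (j + 1), q j, q (j + 2)))
        (x := p) this (by fun_prop)
    have hb : ContinuousAt (fun z : Plane => triAngle (Function.update p i z) j) (p i) := by
      refine ContinuousAt.comp (f := fun z : Plane => Function.update p i z)
        (g := fun q : Fin 3 → Plane => triAngle q j) ?_ hcont.continuousAt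
      rw [hup]; exact ha
    have hc : ContinuousAt (fun z : Plane =>
        |triAngle (Function.update p i z) j - triAngle T (σ j)|) (p i) :=
      (hb.sub continuousAt_const).abs
    refine hc.eventually_lt continuousAt_const ?_
    simp only [hup]
    exact hσ j
  filter_upwards [h1, Filter.eventually_all.2 h2] with z hz1 hz2
  refine ⟨Function.update p i z, ?_, affineIndependent_iff_not_collinear.1 hz1, σ, hz2⟩
  ext w
  have hmem : ∀ w, w ∈ S ↔ ∃ j, p j = w := fun w => by
    rw [← Finset.mem_coe, hp]; rfl
  simp only [Finset.coe_insert, Finset.coe_erase, Set.mem_insert_iff, Set.mem_diff,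
    Finset.mem_coe, Set.mem_singleton_iff, Set.mem_range, hmem]
  constructor
  · rintro (rfl | ⟨⟨j, rfl⟩, hne⟩)
    · exact ⟨i, by simp⟩
    · refine ⟨j, Function.update_of_ne (fun h => hne (by rw [h])) _ _⟩
  · rintro ⟨j, rfl⟩
    by_cases hji : j = i
    · left; subst hji; simp
    · right
      rw [Function.update_of_ne hji]
      exact ⟨⟨j, rfl⟩, fun h => hji (hinj h)⟩

/-- Replacement lemma: if `x, y ∈ P` are distinct, `deg(x, y) = 0` and
`deg(x) ≥ deg(y)`, then for any point `x\'` close enough to `x` (and distinct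
from it), replacing `y` by `x\'` does not decrease the number of triangles
ε-similar to `T`; it strictly increases it if `deg(x) > deg(y)`. -/
theorem stmt_15 (T : Fin 3 → Plane) (hT : IsTriangle T) (ε : ℝ) (hε : 0 < ε)
    (P : Finset Plane) (x y : Plane) (hx : x ∈ P) (hy : y ∈ P) (hxy : x ≠ y)
    (hco : codegP ε T P x y = 0) (hdeg : degP ε T P y ≤ degP ε T P x) :
    ∃ η : ℝ, 0 < η ∧ ∀ x' : Plane, x' ∉ P → 0 < dist x' x → dist x' x < η →
      simCount ε T P ≤ simCount ε T ((insert x' P).erase y) ∧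
      (degP ε T P y < degP ε T P x →
        simCount ε T P < simCount ε T ((insert x' P).erase y)) := by
  have fin : ∀ (Q : Finset Plane) (A : Set (Finset Plane)), (∀ S ∈ A, S ⊆ Q) → A.Finite := by
    intro Q A h
    exact (Q.powerset.finite_toSet).subset fun S hS => by
      simpa using h S hS
  have hev : ∀ᶠ x' in nhds x, ∀ S ∈ P.powerset, x ∈ S → FormsSimilar ε T S →
      FormsSimilar ε T (insert x' (S.erase x)) := by
    rw [Filter.eventually_all_finset]
    intro S _
    by_cases h : x ∈ S ∧ FormsSimilar ε T S
    · filter_upwards [formsSimilar_eventually ε T S x h.1 h.2] with z hz _ _ using hz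
    · exact Filter.Eventually.of_forall fun z h1 h2 => (h ⟨h1, h2⟩).elim
  obtain ⟨η, hη, hball⟩ := Metric.eventually_nhds_iff.1 hev
  refine ⟨η, hη, fun x' hx'P _ hdist => ?_⟩
  have hform := hball hdist
  have hx'x : x' ≠ x := fun h => hx'P (h ▸ hx)
  have hx'y : x' ≠ y := fun h => hx'P (h ▸ hy)
  -- no similar triangle contains both points
  have hno : ∀ S : Finset Plane, S ⊆ P → S.card = 3 → FormsSimilar ε T S → x ∈ S → y ∉ S := by
    intro S h1 h2 h3 h4 h5
    unfold codegP at hco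
    rw [Set.ncard_eq_zero (fin P _ fun S hS => hS.1)] at hco
    have : S ∈ (∅ : Set (Finset Plane)) := hco ▸ (show S ∈ {S : Finset Plane | S ⊆ P ∧
      S.card = 3 ∧ FormsSimilar ε T S ∧ x ∈ S ∧ y ∈ S} from ⟨h1, h2, h3, h4, h5⟩)
    exact this
  set A : Set (Finset Plane) :=
    {S | S ⊆ P ∧ S.card = 3 ∧ FormsSimilar ε T S ∧ y ∉ S} with hA
  set X : Set (Finset Plane) :=
    {S | S ⊆ P ∧ S.card = 3 ∧ FormsSimilar ε T S ∧ x ∈ S} with hX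
  set f : Finset Plane → Finset Plane := fun S => insert x' (S.erase x) with hf
  have hAf : A.Finite := fin P _ fun S hS => hS.1
  have hXf : X.Finite := fin P _ fun S hS => hS.1
  have e1 : simCount ε T P = A.ncard + degP ε T P y := by
    unfold simCount degP
    rw [← Set.ncard_union_eq _ hAf (fin P _ fun S hS => hS.1)]
    · congr 1
      ext S
      simp only [hA, Set.mem_union, Set.mem_setOf_eq]
      tauto
    · rw [Set.disjoint_left]
      rintro S hS hS'
      exact hS.2.2.2 hS'.2.2.2
  have hinj : Set.InjOn f X := by
    intro S hS S' hS' h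
    have n1 : x' ∉ S.erase x := fun h => hx'P (hS.1 (Finset.mem_of_mem_erase h))
    have n2 : x' ∉ S'.erase x := fun h => hx'P (hS'.1 (Finset.mem_of_mem_erase h))
    have h3 : S.erase x = S'.erase x := by
      rw [← Finset.erase_insert n1, ← Finset.erase_insert n2]
      exact congrArg (fun Q => Finset.erase Q x') h
    rw [← Finset.insert_erase hS.2.2.2, ← Finset.insert_erase hS'.2.2.2, h3]
  have e2 : A.ncard + degP ε T P x ≤ simCount ε T ((insert x' P).erase y) := by
    have e3 : degP ε T P x = (f '' X).ncard := (Set.ncard_image_of_injOn hinj).symm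
    rw [e3, ← Set.ncard_union_eq _ hAf (hXf.image f)]
    · unfold simCount
      refine Set.ncard_le_ncard ?_ (fin ((insert x' P).erase y) _ fun S hS => hS.1)
      rintro S (hS | ⟨S, hS, rfl⟩)
      · refine ⟨fun w hw => ?_, hS.2.1, hS.2.2.1⟩
        exact Finset.mem_erase.2 ⟨fun h => hS.2.2.2 (h ▸ hw),
          Finset.mem_insert_of_mem (hS.1 hw)⟩
      · have hyS := hno S hS.1 hS.2.1 hS.2.2.1 hS.2.2.2
        refine ⟨fun w hw => ?_, ?_,
          hform S (Finset.mem_powerset.2 hS.1) hS.2.2.2 hS.2.2.1⟩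
        · rcases Finset.mem_insert.1 hw with rfl | hw
          · exact Finset.mem_erase.2 ⟨hx'y, Finset.mem_insert_self _ _⟩
          · have hw := Finset.mem_of_mem_erase hw
            exact Finset.mem_erase.2 ⟨fun h => hyS (h ▸ hw),
              Finset.mem_insert_of_mem (hS.1 hw)⟩
        · have n1 : x' ∉ S.erase x := fun h => hx'P (hS.1 (Finset.mem_of_mem_erase h))
          rw [hf]
          simp only
          rw [Finset.card_insert_of_notMem n1, Finset.card_erase_of_mem hS.2.2.2, hS.2.1]
    · rw [Set.disjoint_left]
      rintro _ hS ⟨S, _, rfl⟩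
      exact hx'P (hS.1 (Finset.mem_insert_self _ _))
  exact ⟨by omega, fun h => by omega⟩

end
end

section
/- Let T be a non-degenerate triangle, ε > 0, n a natural number, and let P ⊆ ℝ² with |P| = n be optimal, i.e., the number of 3-element subsets of P forming a triangle ε-similar to T equals h(n, T, ε). Let H(P), deg(x) and deg(x, y) be as follows: H(P) is the family of 3-element subsets of P forming a triangle ε-similar to T, deg(x) the number of members of H(P) containing x, and deg(x, y) the number containing both x and y. Then: (i) for all distinct x, y ∈ P with deg(x, y) = 0 one has deg(x) = deg(y); and (ii) if {x, y} and {u, v} are two 2-element subsets of P with deg(x, y) = deg(u, v) = 0, then {x, y} and {u, v} are either disjoint or equal. -/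
open scoped Classical

open EuclideanGeometry

noncomputable section

def HH (F : Finset Plane → Prop) (P : Finset Plane) : Finset (Finset Plane) :=
  P.powerset.filter (fun S => S.card = 3 ∧ F S)

lemma simCount_eq (ε : ℝ) (T : Fin 3 → Plane) (P : Finset Plane) :
    simCount ε T P = (HH (FormsSimilar ε T) P).card := by
  rw [simCount, ← Set.ncard_coe_finset]
  congr 1
  ext S
  simp [HH]

lemma degP_eq (ε : ℝ) (T : Fin 3 → Plane) (P : Finset Plane) (x : Plane) :
    degP ε T P x = ((HH (FormsSimilar ε T) P).filter (fun S => x ∈ S)).card := by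
  rw [degP, ← Set.ncard_coe_finset]
  congr 1
  ext S
  simp [HH, and_assoc]

lemma codegP_zero (ε : ℝ) (T : Fin 3 → Plane) (P : Finset Plane) (x y : Plane)
    (h : codegP ε T P x y = 0) : ∀ S ∈ HH (FormsSimilar ε T) P, x ∈ S → y ∉ S := by
  have e : codegP ε T P x y =
      ((HH (FormsSimilar ε T) P).filter (fun S => x ∈ S ∧ y ∈ S)).card := by
    rw [codegP, ← Set.ncard_coe_finset]
    congr 1
    ext S
    simp [HH, and_assoc]
  rw [e, Finset.card_eq_zero, Finset.filter_eq_empty_iff] at h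
  intro S hS hx hy
  exact h hS ⟨hx, hy⟩

lemma simCount_le_hGeo (ε : ℝ) (T : Fin 3 → Plane) (n : ℕ) (P : Finset Plane)
    (h : P.card = n) : simCount ε T P ≤ hGeo n T ε := by
  apply le_csSup
  · refine ⟨2 ^ n, ?_⟩
    rintro m ⟨Q, hQ, rfl⟩
    rw [simCount_eq, ← hQ, ← Finset.card_powerset]
    exact Finset.card_le_card (Finset.filter_subset _ _)
  · exact ⟨P, h, rfl⟩

/-- replace x by x' -/
def repl (x x' : Plane) (S : Finset Plane) : Finset Plane := insert x' (S.erase x)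

lemma repl_inj (F : Finset Plane → Prop) (P : Finset Plane) (x x' : Plane) (hx' : x' ∉ P) :
    (((HH F P).filter (fun S => x ∈ S)).image (repl x x')).card =
      ((HH F P).filter (fun S => x ∈ S)).card := by
  apply Finset.card_image_of_injOn
  intro S hS S' hS' h
  simp only [HH, Finset.coe_filter, Finset.mem_filter, Finset.mem_powerset, Set.mem_setOf_eq]
    at hS hS'
  have h1 : x' ∉ S := fun h => hx' (hS.1.1 h)
  have h2 : x' ∉ S' := fun h => hx' (hS'.1.1 h)
  have h3 : ∀ z, z ∈ repl x x' S ↔ z ∈ repl x x' S' := by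
    intro z
    have h' : repl x x' S = repl x x' S' := h
    rw [h']
  ext z
  have h4 := h3 z
  simp only [repl, Finset.mem_insert, Finset.mem_erase] at h4
  by_cases hz : z = x
  · subst hz; simp [hS.2, hS'.2]
  · by_cases hz' : z = x'
    · subst hz'; simp [h1, h2]
    · simpa [hz, hz'] using h4

lemma repl_mem (F : Finset Plane → Prop) (P Q : Finset Plane) (x x' : Plane) (hx' : x' ∉ P)
    (hF : ∀ S ∈ HH F P, x ∈ S → F (repl x x' S)) (hQ' : x' ∈ Q)
    (hQ : ∀ S ∈ HH F P, x ∈ S → S ⊆ Q) :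
    ∀ S ∈ ((HH F P).filter (fun S => x ∈ S)).image (repl x x'), S ∈ HH F Q ∧ x' ∈ S ∧
      ∀ z ∈ S, z = x' ∨ (z ∈ P ∧ z ≠ x) := by
  intro S hS
  simp only [Finset.mem_image, Finset.mem_filter] at hS
  obtain ⟨S, ⟨hS, hx⟩, rfl⟩ := hS
  have h1 := hF S hS hx
  have h2 := hQ S hS hx
  simp only [HH, Finset.mem_filter, Finset.mem_powerset] at hS ⊢
  have h3 : x' ∉ S := fun h => hx' (hS.1 h)
  refine ⟨⟨?_, ?_, h1⟩, by simp [repl], ?_⟩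
  · intro z hz
    simp only [repl, Finset.mem_insert, Finset.mem_erase] at hz
    rcases hz with rfl | hz
    · exact hQ'
    · exact h2 hz.2
  · have : x' ∉ S.erase x := fun h => h3 (Finset.mem_of_mem_erase h)
    rw [repl, Finset.card_insert_of_notMem this, Finset.card_erase_of_mem hx, hS.2.1]
  · intro z hz
    simp only [repl, Finset.mem_insert, Finset.mem_erase] at hz
    rcases hz with rfl | hz
    · exact Or.inl rfl
    · exact Or.inr ⟨hS.1 hz.2, hz.1⟩

lemma combi1 (F : Finset Plane → Prop) (P : Finset Plane) (x y x' : Plane)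
    (hcod : ∀ S ∈ HH F P, x ∈ S → y ∉ S) (hx' : x' ∉ P)
    (hF : ∀ S ∈ HH F P, x ∈ S → F (repl x x' S)) :
    (HH F P).card + ((HH F P).filter (fun S => x ∈ S)).card ≤
      (HH F (insert x' (P.erase y))).card + ((HH F P).filter (fun S => y ∈ S)).card := by
  set Q := insert x' (P.erase y) with hQ
  have hsub : ∀ S ∈ HH F P, y ∉ S → S ⊆ Q := by
    intro S hS hy z hz
    simp only [HH, Finset.mem_filter, Finset.mem_powerset] at hS
    simp only [hQ, Finset.mem_insert, Finset.mem_erase]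
    exact Or.inr ⟨fun h => hy (h ▸ hz), hS.1 hz⟩
  have hm := repl_mem F P Q x x' hx' hF (by simp [hQ]) (fun S hS hx => hsub S hS (hcod S hS hx))
  rw [← repl_inj F P x x' hx']
  have h1 := Finset.card_filter_add_card_filter_not (s := HH F P) (fun S => y ∈ S)
  have hd : Disjoint ((HH F P).filter (fun S => ¬ y ∈ S))
      (((HH F P).filter (fun S => x ∈ S)).image (repl x x')) := by
    rw [Finset.disjoint_left]
    intro S hS hS'
    have := (hm S hS').2.1
    simp only [HH, Finset.mem_filter, Finset.mem_powerset] at hS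
    exact hx' (hS.1.1 this)
  have h2 : ((HH F P).filter (fun S => ¬ y ∈ S)) ∪
      (((HH F P).filter (fun S => x ∈ S)).image (repl x x')) ⊆ HH F Q := by
    apply Finset.union_subset
    · intro S hS
      rw [Finset.mem_filter] at hS
      have := hsub S hS.1 hS.2
      simp only [HH, Finset.mem_filter, Finset.mem_powerset] at hS ⊢
      exact ⟨this, hS.1.2⟩
    · exact fun S hS => (hm S hS).1
  have h3 := Finset.card_le_card h2
  rw [Finset.card_union_of_disjoint hd] at h3
  omega

lemma combi2 (F : Finset Plane → Prop) (P : Finset Plane) (x y v x' x'' : Plane)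
    (hx : x ∈ P) (hxy : x ≠ y) (hxv : x ≠ v)
    (hcod : ∀ S ∈ HH F P, x ∈ S → y ∉ S) (hcod' : ∀ S ∈ HH F P, x ∈ S → v ∉ S)
    (hx' : x' ∉ P) (hx'' : x'' ∉ P) (hne : x' ≠ x'')
    (hF : ∀ S ∈ HH F P, x ∈ S → F (repl x x' S))
    (hF' : ∀ S ∈ HH F P, x ∈ S → F (repl x x'' S))
    (hT : F {x, x', x''}) :
    (HH F P).card + 2 * ((HH F P).filter (fun S => x ∈ S)).card + 1 ≤
      (HH F (insert x'' (insert x' ((P.erase y).erase v)))).card +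
      ((HH F P).filter (fun S => y ∈ S)).card + ((HH F P).filter (fun S => v ∈ S)).card := by
  set Q := insert x'' (insert x' ((P.erase y).erase v)) with hQ
  have hsub : ∀ S ∈ HH F P, y ∉ S → v ∉ S → S ⊆ Q := by
    intro S hS hy hv z hz
    simp only [HH, Finset.mem_filter, Finset.mem_powerset] at hS
    simp only [hQ, Finset.mem_insert, Finset.mem_erase]
    exact Or.inr (Or.inr ⟨fun h => hv (h ▸ hz), fun h => hy (h ▸ hz), hS.1 hz⟩)
  have hm := repl_mem F P Q x x' hx' hF (by simp [hQ])
    (fun S hS hx => hsub S hS (hcod S hS hx) (hcod' S hS hx))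
  have hm' := repl_mem F P Q x x'' hx'' hF' (by simp [hQ])
    (fun S hS hx => hsub S hS (hcod S hS hx) (hcod' S hS hx))
  have e1 := repl_inj F P x x' hx'
  have e2 := repl_inj F P x x'' hx''
  set A := (HH F P).filter (fun S => ¬ (y ∈ S ∨ v ∈ S)) with hA
  set B := ((HH F P).filter (fun S => x ∈ S)).image (repl x x')
  set C := ((HH F P).filter (fun S => x ∈ S)).image (repl x x'')
  have h1 : ((HH F P).filter (fun S => y ∈ S ∨ v ∈ S)).card + A.card = (HH F P).card := by
    rw [hA]
    convert Finset.card_filter_add_card_filter_not (s := HH F P) (fun S => y ∈ S ∨ v ∈ S)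
  rw [Finset.filter_or] at h1
  have h1' := Finset.card_union_le ((HH F P).filter (fun S => y ∈ S))
    ((HH F P).filter (fun S => v ∈ S))
  have hAP : ∀ S ∈ A, S ⊆ P := by
    intro S hS
    simp only [hA, HH, Finset.mem_filter, Finset.mem_powerset] at hS
    exact hS.1.1
  have d1 : Disjoint A B := by
    rw [Finset.disjoint_left]
    intro S hS hS'
    exact hx' (hAP S hS (hm S hS').2.1)
  have d2 : Disjoint (A ∪ B) C := by
    rw [Finset.disjoint_left]
    intro S hS hS'
    rcases Finset.mem_union.1 hS with hS | hS
    · exact hx'' (hAP S hS (hm' S hS').2.1)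
    · rcases (hm S hS).2.2 x'' (hm' S hS').2.1 with h | h
      · exact hne h.symm
      · exact hx'' h.1
  have d3 : ({x, x', x''} : Finset Plane) ∉ A ∪ B ∪ C := by
    simp only [Finset.mem_union, not_or]
    refine ⟨⟨fun h => hx' (hAP _ h (by simp)), fun h => ?_⟩, fun h => ?_⟩
    · rcases (hm _ h).2.2 x'' (by simp) with h | h
      · exact hne h.symm
      · exact hx'' h.1
    · rcases (hm' _ h).2.2 x' (by simp) with h | h
      · exact hne h
      · exact hx' h.1
  have h2 : insert {x, x', x''} (A ∪ B ∪ C) ⊆ HH F Q := by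
    intro S hS
    simp only [Finset.mem_insert, Finset.mem_union] at hS
    rcases hS with rfl | (hS | hS) | hS
    · simp only [HH, Finset.mem_filter, Finset.mem_powerset]
      have k1 : x ≠ x' := fun h => hx' (h ▸ hx)
      have k2 : x ≠ x'' := fun h => hx'' (h ▸ hx)
      refine ⟨?_, ?_, hT⟩
      · intro z hz
        simp only [Finset.mem_insert, Finset.mem_singleton] at hz
        simp only [hQ, Finset.mem_insert, Finset.mem_erase]
        rcases hz with rfl | rfl | rfl
        · exact Or.inr (Or.inr ⟨hxv, hxy, hx⟩)
        · exact Or.inr (Or.inl rfl)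
        · exact Or.inl rfl
      · exact Finset.card_eq_three.2 ⟨x, x', x'', k1, k2, hne, rfl⟩
    · rw [hA, Finset.mem_filter, not_or] at hS
      have := hsub S hS.1 hS.2.1 hS.2.2
      simp only [HH, Finset.mem_filter, Finset.mem_powerset] at hS ⊢
      exact ⟨this, hS.1.2⟩
    · exact (hm S hS).1
    · exact (hm' S hS).1
  have h3 := Finset.card_le_card h2
  rw [Finset.card_insert_of_notMem d3, Finset.card_union_of_disjoint d2,
    Finset.card_union_of_disjoint d1] at h3
  omega

lemma IsTriangle.ne {p : Fin 3 → Plane} (h : IsTriangle p) : Function.Injective p :=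
  (affineIndependent_iff_not_collinear.2 h).injective

lemma good_nhds (ε : ℝ) (T p : Fin 3 → Plane) (hp : IsTriangle p) (hs : EpsSimilar ε p T) :
    ∀ᶠ q in nhds p, IsTriangle q ∧ EpsSimilar ε q T := by
  obtain ⟨σ, hσ⟩ := hs
  have hi := hp.ne
  have h1 : ∀ᶠ q in nhds p, IsTriangle q := by
    have := (isOpen_setOf_affineIndependent (𝕜 := ℝ) (E := Plane) (ι := Fin 3)).mem_nhds
      (affineIndependent_iff_not_collinear.2 hp)
    filter_upwards [this] with q hq
    exact affineIndependent_iff_not_collinear.1 hq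
  have h2 : ∀ᶠ q in nhds p, ∀ i, |triAngle q i - triAngle T (σ i)| < ε := by
    rw [Filter.eventually_all]
    intro i
    have hc : ContinuousAt (fun q : Fin 3 → Plane => triAngle q i) p := by
      have ha : p (i + 1) ≠ p i := fun h => by
        have := hi h; revert this; fin_cases i <;> decide
      have hb : p (i + 2) ≠ p i := fun h => by
        have := hi h; revert this; fin_cases i <;> decide
      have hang := EuclideanGeometry.continuousAt_angle
        (x := (p (i + 1), p i, p (i + 2))) ha hb
      exact ContinuousAt.comp (f := fun q : Fin 3 → Plane => (q (i + 1), q i, q (i + 2)))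
        hang (by fun_prop)
    have hc2 : ContinuousAt (fun q : Fin 3 → Plane => |triAngle q i - triAngle T (σ i)|) p :=
      (hc.sub continuousAt_const).abs
    exact hc2.eventually_lt_const (hσ i)
  filter_upwards [h1, h2] with q a b
  exact ⟨a, σ, b⟩

lemma repl_forms (ε : ℝ) (T : Fin 3 → Plane) (S : Finset Plane) (hS : FormsSimilar ε T S)
    (x : Plane) (hx : x ∈ S) : ∀ᶠ x' in nhds x, FormsSimilar ε T (repl x x' S) := by
  obtain ⟨p, hp, ht, hs⟩ := hS
  have : x ∈ Set.range p := by rw [← hp]; exact hx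
  obtain ⟨i, rfl⟩ := this
  have hi := ht.ne
  have hc : Filter.Tendsto (fun x' => Function.update p i x') (nhds (p i)) (nhds p) := by
    have : Continuous (fun x' => Function.update p i x') := by fun_prop
    have h := this.tendsto (p i)
    rwa [Function.update_eq_self] at h
  filter_upwards [hc.eventually (good_nhds ε T p ht hs)] with x' h
  refine ⟨_, ?_, h.1, h.2⟩
  ext z
  have hz : ∀ z, z ∈ S ↔ ∃ j, p j = z := fun z => by
    rw [← Finset.mem_coe, hp, Set.mem_range]
  simp only [repl, Finset.coe_insert, Finset.coe_erase, Set.mem_insert_iff, Set.mem_diff,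
    Finset.mem_coe, hz, Set.mem_singleton_iff, Set.mem_range]
  constructor
  · rintro (rfl | ⟨⟨j, rfl⟩, hj⟩)
    · exact ⟨i, by simp⟩
    · exact ⟨j, Function.update_of_ne (fun h => hj (congrArg p h)) _ _⟩
  · rintro ⟨j, rfl⟩
    by_cases hj : j = i
    · subst hj; simp
    · rw [Function.update_of_ne hj]
      exact Or.inr ⟨⟨j, rfl⟩, fun h => hj (hi h)⟩

lemma repl_good (ε : ℝ) (T : Fin 3 → Plane) (P : Finset Plane) (x w : Plane) (hw : w ≠ 0) :
    ∀ᶠ t : ℝ in nhdsWithin 0 (Set.Ioi 0), x + t • w ∉ P ∧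
      ∀ S ∈ HH (FormsSimilar ε T) P, x ∈ S → FormsSimilar ε T (repl x (x + t • w) S) := by
  have hc : Filter.Tendsto (fun t : ℝ => x + t • w) (nhds 0) (nhds x) := by
    have : Continuous (fun t : ℝ => x + t • w) := by fun_prop
    simpa using this.tendsto 0
  have hc' := hc.mono_left (nhdsWithin_le_nhds (s := Set.Ioi (0:ℝ)))
  have h1 : ∀ᶠ z in nhds x, z ∉ P.erase x := by
    have : IsClosed ((P.erase x : Finset Plane) : Set Plane) := Finset.isClosed _
    exact this.isOpen_compl.mem_nhds (by simp)
  have h2 : ∀ᶠ z in nhds x, ∀ S ∈ HH (FormsSimilar ε T) P, x ∈ S →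
      FormsSimilar ε T (repl x z S) := by
    rw [Filter.eventually_all_finset]
    intro S hS
    by_cases hx : x ∈ S
    · filter_upwards [repl_forms ε T S (by simp [HH] at hS; exact hS.2.2) x hx] with z hz _
      exact hz
    · exact Filter.Eventually.of_forall (fun z h => absurd h hx)
  filter_upwards [hc'.eventually h1, hc'.eventually h2, self_mem_nhdsWithin] with t a b ht
  refine ⟨fun h => a (Finset.mem_erase.2 ⟨?_, h⟩), b⟩
  have : t ≠ 0 := ne_of_gt ht
  simp [this, hw]

lemma small_copy (ε : ℝ) (hε : 0 < ε) (T : Fin 3 → Plane) (hT : IsTriangle T) (x : Plane)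
    (t : ℝ) (ht : 0 < t) :
    FormsSimilar ε T {x, x + t • (T 1 - T 0), x + t • (T 2 - T 0)} := by
  have hq : ∀ q : Fin 3 → Plane, q = (fun i => x + t • (T i - T 0)) →
      IsTriangle q ∧ EpsSimilar ε q T := by
    rintro q rfl
    constructor
    · rw [IsTriangle, ← affineIndependent_iff_not_collinear]
      have h := affineIndependent_iff_not_collinear.2 hT
      rw [affineIndependent_iff_linearIndependent_vsub ℝ _ (0 : Fin 3)] at h ⊢
      have := h.units_smul (fun _ => Units.mk0 t ht.ne')
      convert this using 1
      ext i
      simp [Units.smul_def]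
    · refine ⟨1, fun i => ?_⟩
      have : triAngle (fun i => x + t • (T i - T 0)) i = triAngle T i := by
        simp only [triAngle, EuclideanGeometry.angle, vsub_eq_sub]
        have e : ∀ j, x + t • (T j - T 0) - (x + t • (T i - T 0)) = t • (T j - T i) := by
          intro j; module
        rw [e, e, InnerProductGeometry.angle_smul_left_of_pos _ _ ht,
          InnerProductGeometry.angle_smul_right_of_pos _ _ ht]
      simp [this, hε]
  refine ⟨_, ?_, hq _ rfl⟩
  ext z
  simp [Fin.exists_fin_succ, eq_comm]

lemma part1 (T : Fin 3 → Plane) (hT : IsTriangle T) (ε : ℝ)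
    (n : ℕ) (P : Finset Plane) (hcard : P.card = n)
    (hopt : simCount ε T P = hGeo n T ε) (x y : Plane) (hy : y ∈ P)
    (hc : codegP ε T P x y = 0) : degP ε T P x ≤ degP ε T P y := by
  have hw : T 1 - T 0 ≠ 0 := sub_ne_zero.2 (fun h => absurd (hT.ne h) (by decide))
  obtain ⟨t, h1, h2⟩ := (repl_good ε T P x _ hw).exists
  have h := combi1 _ P x y _ (codegP_zero ε T P x y hc) h1 h2
  have hQ : (insert (x + t • (T 1 - T 0)) (P.erase y)).card = n := by
    rw [Finset.card_insert_of_notMem (fun h => h1 (Finset.mem_of_mem_erase h)),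
      Finset.card_erase_of_mem hy]
    have := Finset.card_pos.2 ⟨y, hy⟩
    omega
  have h3 := simCount_le_hGeo ε T n _ hQ
  rw [← hopt, simCount_eq, simCount_eq] at h3
  rw [degP_eq, degP_eq]
  omega

lemma part1' (T : Fin 3 → Plane) (hT : IsTriangle T) (ε : ℝ)
    (n : ℕ) (P : Finset Plane) (hcard : P.card = n)
    (hopt : simCount ε T P = hGeo n T ε) (x y : Plane) (hx : x ∈ P) (hy : y ∈ P)
    (hc : codegP ε T P x y = 0) : degP ε T P x = degP ε T P y := by
  apply le_antisymm (part1 T hT ε n P hcard hopt x y hy hc)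
  apply part1 T hT ε n P hcard hopt y x hx
  rw [← hc, codegP, codegP]
  congr 1
  ext S
  simp only [Set.mem_setOf_eq]
  tauto

lemma codeg_comm (T : Fin 3 → Plane) (ε : ℝ) (P : Finset Plane) (x y : Plane) :
    codegP ε T P x y = codegP ε T P y x := by
  rw [codegP, codegP]
  congr 1
  ext S
  simp only [Set.mem_setOf_eq]
  tauto

lemma part2 (T : Fin 3 → Plane) (hT : IsTriangle T) (ε : ℝ) (hε : 0 < ε)
    (n : ℕ) (P : Finset Plane) (hcard : P.card = n)
    (hopt : simCount ε T P = hGeo n T ε) (x y v : Plane) (hx : x ∈ P) (hy : y ∈ P) (hv : v ∈ P)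
    (hxy : x ≠ y) (hxv : x ≠ v)
    (hc : codegP ε T P x y = 0) (hc' : codegP ε T P x v = 0) : y = v := by
  by_contra hyv
  have hw : T 1 - T 0 ≠ 0 := sub_ne_zero.2 (fun h => absurd (hT.ne h) (by decide))
  have hw' : T 2 - T 0 ≠ 0 := sub_ne_zero.2 (fun h => absurd (hT.ne h) (by decide))
  obtain ⟨t, ⟨h1, h2⟩, ⟨h1', h2'⟩, ht⟩ :=
    ((repl_good ε T P x _ hw).and ((repl_good ε T P x _ hw').and self_mem_nhdsWithin)).exists
  have ht : 0 < t := ht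
  have hne : x + t • (T 1 - T 0) ≠ x + t • (T 2 - T 0) := by
    intro h
    have h := smul_right_injective Plane ht.ne' (add_left_cancel h)
    exact absurd (hT.ne (sub_left_injective h)) (by decide)
  have h := combi2 _ P x y v _ _ hx hxy hxv (codegP_zero ε T P x y hc)
    (codegP_zero ε T P x v hc') h1 h1' hne h2 h2' (small_copy ε hε T hT x t ht)
  have hQ : (insert (x + t • (T 2 - T 0)) (insert (x + t • (T 1 - T 0))
      ((P.erase y).erase v))).card = n := by
    rw [Finset.card_insert_of_notMem, Finset.card_insert_of_notMem,
      Finset.card_erase_of_mem, Finset.card_erase_of_mem hy]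
    · have : 1 < P.card := Finset.one_lt_card.2 ⟨y, hy, v, hv, hyv⟩
      omega
    · exact Finset.mem_erase.2 ⟨Ne.symm hyv, hv⟩
    · exact fun h => h1 (Finset.mem_of_mem_erase (Finset.mem_of_mem_erase h))
    · intro h
      rcases Finset.mem_insert.1 h with h | h
      · exact hne h.symm
      · exact h1' (Finset.mem_of_mem_erase (Finset.mem_of_mem_erase h))
  have h3 := simCount_le_hGeo ε T n _ hQ
  rw [← hopt, simCount_eq, simCount_eq] at h3
  have e1 := part1' T hT ε n P hcard hopt x y hx hy hc
  have e2 := part1' T hT ε n P hcard hopt x v hx hv hc'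
  rw [degP_eq, degP_eq] at e1 e2
  omega

/-- In an optimal `n`-point configuration `P`: (i) any two distinct points with
codegree `0` have equal degrees; (ii) any two pairs of points with codegree `0`
are disjoint or coincide. -/
theorem stmt_16 (T : Fin 3 → Plane) (hT : IsTriangle T) (ε : ℝ) (hε : 0 < ε)
    (n : ℕ) (P : Finset Plane) (hcard : P.card = n)
    (hopt : simCount ε T P = hGeo n T ε) :
    (∀ x ∈ P, ∀ y ∈ P, x ≠ y → codegP ε T P x y = 0 →
      degP ε T P x = degP ε T P y) ∧
    (∀ x ∈ P, ∀ y ∈ P, ∀ u ∈ P, ∀ v ∈ P, x ≠ y → u ≠ v →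
      codegP ε T P x y = 0 → codegP ε T P u v = 0 →
      ({x, y} : Finset Plane) = {u, v} ∨
        Disjoint ({x, y} : Finset Plane) ({u, v} : Finset Plane)) := by
  refine ⟨fun x hx y hy _ h => part1' T hT ε n P hcard hopt x y hx hy h, ?_⟩
  intro x hx y hy u hu v hv hxy huv hc hc'
  have hcs := (codeg_comm T ε P y x).trans hc
  have hcs' := (codeg_comm T ε P v u).trans hc'
  have key := part2 T hT ε hε n P hcard hopt
  by_cases h1 : x = u
  · subst h1
    rw [key x y v hx hy hv hxy huv hc hc']
    exact Or.inl rfl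
  by_cases h2 : x = v
  · subst h2
    rw [key x y u hx hy hu hxy huv.symm hc hcs']
    exact Or.inl (Finset.pair_comm _ _)
  by_cases h3 : y = u
  · subst h3
    rw [key y x v hy hx hv hxy.symm huv hcs hc']
    exact Or.inl (Finset.pair_comm _ _)
  by_cases h4 : y = v
  · subst h4
    rw [key y x u hy hx hu hxy.symm huv.symm hcs hcs']
    exact Or.inl rfl
  right
  simp [Finset.disjoint_left, h1, h2, h3, h4]

end
end
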